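/- arXiv:2501.19193 — 11 statements merged into one kernel-verified Lean document; each statement's English description precedes it below -/
import Mathlib

section
/- Let n ∈ ℝ_{>0}, p ∈ ℝ², k ≥ 2 a real number, and let Λ ⊇ ℤ² be a superlattice of ℤ². For i ∈ ℤ define r_i := (k^i, n/k^i), R_i := [k^i, k^{i+1}] × [n/k^{i+1}, n/k^i], and U_i := r_i + [0,1]². Then for every vertex q of conv(H_n ∩ (p+Λ)) other than the vertex of smallest x-coordinate and the vertex of smallest y-coordinate, there exists i ∈ ℤ with ⌊log_k(det Λ)⌋ ≤ i ≤ ⌊log_k(n/det Λ + 1)⌋ such that q ∈ R_i or q ∈ U_i. -/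
/-!
Let `q = (x, y)` be the vertex and `d = det Λ`. Since `ℤ² ⊆ Λ`, the points `q ± (1, 0)` and
`q ± (0, 1)` lie in `p + Λ`, and those with the plus sign lie in `H_n`; an extreme point is not a
midpoint, so the other two are outside `H_n`, i.e. `(x - 1) y < n` and `x (y - 1) < n`.

Take `i = ⌊log_k x⌋`, so `kⁱ ≤ x < kⁱ⁺¹`. If `y ≤ n / kⁱ`, then `q ∈ R_i` because `x y ≥ n`.
Otherwise the two inequalities force `x ≤ kⁱ + 1` and `y ≤ n / kⁱ + 1`, so `q ∈ U_i`.

For the range of `i`: coordinates of vectors of `Λ` are integer multiples of `d`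
(`latticeOf_coord`), so a vertex strictly to the left of `q` (resp. below `q`) gives `x ≥ d`
(resp. `y ≥ d`), and then `(x - 1) y < n` gives `x ≤ n / d + 1`.
-/

noncomputable section

/-- The closed region on and above the positive branch of the hyperbola `x*y = n`. -/
def Hset (n : ℝ) : Set (ℝ × ℝ) := {q | 0 ≤ q.1 ∧ 0 ≤ q.2 ∧ n ≤ q.1 * q.2}

/-- The integer lattice `ℤ² ⊂ ℝ²`. -/
def intLattice : Set (ℝ × ℝ) := {q | ∃ a b : ℤ, q = ((a : ℝ), (b : ℝ))}

/-- The lattice generated by two vectors `v, w`. -/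
def latticeOf (v w : ℝ × ℝ) : Set (ℝ × ℝ) :=
  {q | ∃ a b : ℤ, q = (a : ℝ) • v + (b : ℝ) • w}

/-- The covolume (absolute determinant) of the lattice with basis `v, w`. -/
def detOf (v w : ℝ × ℝ) : ℝ := |v.1 * w.2 - v.2 * w.1|

/-- The translate `p + S` of a set `S ⊆ ℝ²`. -/
def translateSet (p : ℝ × ℝ) (S : Set (ℝ × ℝ)) : Set (ℝ × ℝ) := (fun q => p + q) '' S

/-- The coordinates of a lattice vector are integer multiples of the determinant: the first one
is its cross product with `(0, 1) ∈ Λ`, the second one its cross product with `(1, 0) ∈ Λ`. -/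
lemma latticeOf_coord {v w : ℝ × ℝ} (hsup : intLattice ⊆ latticeOf v w)
    {u : ℝ × ℝ} (hu : u ∈ latticeOf v w) :
    (∃ m : ℤ, u.1 = m * (v.1 * w.2 - v.2 * w.1)) ∧
      (∃ m : ℤ, u.2 = m * (v.1 * w.2 - v.2 * w.1)) := by
  obtain ⟨c, e, rfl⟩ := hu
  obtain ⟨a, b, h01⟩ := hsup (show ((0 : ℝ), (1 : ℝ)) ∈ intLattice from ⟨0, 1, by simp⟩)
  obtain ⟨a', b', h10⟩ := hsup (show ((1 : ℝ), (0 : ℝ)) ∈ intLattice from ⟨1, 0, by simp⟩)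
  simp only [Prod.ext_iff, Prod.fst_add, Prod.snd_add, Prod.smul_fst, Prod.smul_snd,
    smul_eq_mul] at h01 h10
  obtain ⟨h1, h2⟩ := h01
  obtain ⟨h3, h4⟩ := h10
  refine ⟨⟨c * b - e * a, ?_⟩, ⟨e * a' - c * b', ?_⟩⟩
  · simp only [Prod.fst_add, Prod.smul_fst, smul_eq_mul]
    push_cast
    linear_combination (c * v.1 + e * w.1) * h2 - (c * v.2 + e * w.2) * h1
  · simp only [Prod.snd_add, Prod.smul_snd, smul_eq_mul]
    push_cast
    linear_combination (c * v.2 + e * w.2) * h3 - (c * v.1 + e * w.1) * h4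

lemma le_of_pos_int_multiple {t D : ℝ} (ht : 0 < t) (h : ∃ m : ℤ, t = m * D) : |D| ≤ t := by
  obtain ⟨m, rfl⟩ := h
  have hm : m ≠ 0 := by
    rintro rfl
    simp at ht
  have h1 : (1 : ℝ) ≤ |(m : ℝ)| := by exact_mod_cast Int.one_le_abs hm
  rw [← abs_of_pos ht, abs_mul]
  exact le_mul_of_one_le_left (abs_nonneg D) h1

lemma latticeOf_sub {v w a b : ℝ × ℝ} (ha : a ∈ latticeOf v w) (hb : b ∈ latticeOf v w) :
    a - b ∈ latticeOf v w := by
  obtain ⟨c, e, rfl⟩ := ha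
  obtain ⟨c', e', rfl⟩ := hb
  exact ⟨c - c', e - e', by push_cast; module⟩

lemma latticeOf_add {v w a b : ℝ × ℝ} (ha : a ∈ latticeOf v w) (hb : b ∈ latticeOf v w) :
    a + b ∈ latticeOf v w := by
  obtain ⟨c, e, rfl⟩ := ha
  obtain ⟨c', e', rfl⟩ := hb
  exact ⟨c + c', e + e', by push_cast; module⟩

/-- An extreme point of a convex hull is not the midpoint of two distinct points of the set. -/
lemma eq_zero_of_extreme {S : Set (ℝ × ℝ)} {q e : ℝ × ℝ}
    (hq : q ∈ Set.extremePoints ℝ (convexHull ℝ S)) (h1 : q + e ∈ S) (h2 : q - e ∈ S) :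
    e = 0 := by
  have h := hq.2 (subset_convexHull ℝ S h1) (subset_convexHull ℝ S h2)
    ⟨1 / 2, 1 / 2, by norm_num, by norm_num, by norm_num, by module⟩
  simpa using h

/-- Every vertex `q` of `conv(H_n ∩ (p + Λ))` other than the vertex of smallest
`x`-coordinate and the vertex of smallest `y`-coordinate lies in some rectangle
`R_i = [kⁱ, kⁱ⁺¹] × [n/kⁱ⁺¹, n/kⁱ]` or unit square `U_i = (kⁱ, n/kⁱ) + [0,1]²` with
`⌊log_k (det Λ)⌋ ≤ i ≤ ⌊log_k (n/det Λ + 1)⌋`. -/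
theorem statement7 (n : ℝ) (hn : 0 < n) (p v w : ℝ × ℝ)
    (hvw : v.1 * w.2 - v.2 * w.1 ≠ 0)
    (hsup : intLattice ⊆ latticeOf v w)
    (k : ℝ) (hk : 2 ≤ k)
    (q : ℝ × ℝ)
    (hq : q ∈ Set.extremePoints ℝ
        (convexHull ℝ (Hset n ∩ translateSet p (latticeOf v w))))
    (hnotminx : ∃ q' ∈ Set.extremePoints ℝ
        (convexHull ℝ (Hset n ∩ translateSet p (latticeOf v w))), q'.1 < q.1)
    (hnotminy : ∃ q' ∈ Set.extremePoints ℝ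
        (convexHull ℝ (Hset n ∩ translateSet p (latticeOf v w))), q'.2 < q.2) :
    ∃ i : ℤ, ⌊Real.logb k (detOf v w)⌋ ≤ i ∧ i ≤ ⌊Real.logb k (n / detOf v w + 1)⌋ ∧
      (q ∈ Set.Icc (k ^ i) (k ^ (i + 1)) ×ˢ Set.Icc (n / k ^ (i + 1)) (n / k ^ i) ∨
       q ∈ Set.Icc (k ^ i) (k ^ i + 1) ×ˢ Set.Icc (n / k ^ i) (n / k ^ i + 1)) := by
  set S := Hset n ∩ translateSet p (latticeOf v w) with hS
  obtain ⟨⟨hx0, hy0, hxy⟩, u, hu, huq⟩ : q ∈ S := extremePoints_convexHull_subset hq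
  have hx : 0 < q.1 := hx0.lt_of_ne' (fun h => by rw [h] at hxy; linarith)
  have hy : 0 < q.2 := hy0.lt_of_ne' (fun h => by rw [h] at hxy; linarith)
  have hd : 0 < detOf v w := abs_pos.mpr hvw
  -- translates of `q` by integer vectors stay in `p + Λ`
  have htr : ∀ e ∈ intLattice, q + e ∈ translateSet p (latticeOf v w) ∧
      q - e ∈ translateSet p (latticeOf v w) := fun e he =>
    ⟨⟨u + e, latticeOf_add hu (hsup he), by rw [← huq]; simp only []; abel⟩,
      ⟨u - e, latticeOf_sub hu (hsup he), by rw [← huq]; simp only []; abel⟩⟩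
  have hA : (q.1 - 1) * q.2 < n := by
    by_contra! hcon
    have h1 : 0 < q.1 - 1 := pos_of_mul_pos_left (hn.trans_le hcon) hy.le
    obtain ⟨t1, t2⟩ := htr (1, 0) ⟨1, 0, by simp⟩
    have := eq_zero_of_extreme (e := (1, 0)) hq
      ⟨⟨by simp; linarith, by simpa using hy.le, by simp; nlinarith⟩, t1⟩
      ⟨⟨by simp; linarith, by simpa using hy.le, by simpa using hcon⟩, t2⟩
    simp at this
  have hB : q.1 * (q.2 - 1) < n := by
    by_contra! hcon
    have h1 : 0 < q.2 - 1 := pos_of_mul_pos_right (hn.trans_le hcon) hx.le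
    obtain ⟨t1, t2⟩ := htr (0, 1) ⟨0, 1, by simp⟩
    have := eq_zero_of_extreme (e := (0, 1)) hq
      ⟨⟨by simpa using hx.le, by simp; linarith, by simp; nlinarith⟩, t1⟩
      ⟨⟨by simpa using hx.le, by simp; linarith, by simpa using hcon⟩, t2⟩
    simp at this
  have hdx : detOf v w ≤ q.1 := by
    obtain ⟨q', hq', hlt⟩ := hnotminx
    obtain ⟨⟨h0, -, -⟩, u', hu', huq'⟩ : q' ∈ S := extremePoints_convexHull_subset hq'
    have he : (u - u').1 = q.1 - q'.1 := by rw [← huq, ← huq']; simp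
    have := le_of_pos_int_multiple (by rw [he]; linarith)
      (latticeOf_coord hsup (latticeOf_sub hu hu')).1
    rw [he] at this
    unfold detOf
    linarith
  have hdy : detOf v w ≤ q.2 := by
    obtain ⟨q', hq', hlt⟩ := hnotminy
    obtain ⟨⟨-, h0, -⟩, u', hu', huq'⟩ : q' ∈ S := extremePoints_convexHull_subset hq'
    have he : (u - u').2 = q.2 - q'.2 := by rw [← huq, ← huq']; simp
    have := le_of_pos_int_multiple (by rw [he]; linarith)
      (latticeOf_coord hsup (latticeOf_sub hu hu')).2
    rw [he] at this
    unfold detOf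
    linarith
  have hxu : q.1 ≤ n / detOf v w + 1 := by
    have h1 : q.1 - 1 < n / q.2 := (lt_div_iff₀ hy).mpr hA
    have h2 : n / q.2 ≤ n / detOf v w := by gcongr
    linarith
  have hk1 : 1 < k := by linarith
  have hk0 : 0 < k := by linarith
  set i := ⌊Real.logb k q.1⌋ with hi
  have hlo : k ^ i ≤ q.1 := by
    rw [← Real.rpow_intCast, ← Real.le_logb_iff_rpow_le hk1 hx]
    exact Int.floor_le _
  have hhi : q.1 < k ^ (i + 1) := by
    rw [← Real.rpow_intCast, ← Real.logb_lt_iff_lt_rpow hk1 hx]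
    push_cast
    exact Int.lt_floor_add_one _
  have hki : 0 < k ^ i := zpow_pos hk0 i
  refine ⟨i, Int.floor_le_floor (Real.logb_le_logb_of_le hk1 hd hdx),
    Int.floor_le_floor (Real.logb_le_logb_of_le hk1 hx hxu), ?_⟩
  rcases le_or_gt q.2 (n / k ^ i) with h | h
  · left
    refine ⟨⟨hlo, hhi.le⟩, ⟨?_, h⟩⟩
    rw [div_le_iff₀ (hki.trans_le (hlo.trans hhi.le))]
    nlinarith
  · right
    have h' : n < q.2 * k ^ i := (div_lt_iff₀ hki).mp h
    refine ⟨⟨hlo, ?_⟩, ⟨h.le, ?_⟩⟩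
    · by_contra! hcon
      nlinarith
    · have h1 : q.2 - 1 < n / q.1 := (lt_div_iff₀ hx).mpr (by linarith)
      have h2 : n / q.1 ≤ n / k ^ i := by gcongr
      linarith

end
end

section
/- Let a, b, c ∈ ℤ with Δ := √(b² − 4ac) a positive integer, let x₀, y₀ ∈ ℝ and n ∈ ℝ, n ≠ 0, and let h be the hyperbola {(x,y) : a(x−x₀)² + b(x−x₀)(y−y₀) + c(y−y₀)² = n}. Let H be the closure of one of the two convex connected components of ℝ² \ h. For each asymptote of h, consider the lines parallel to that asymptote which contain points of ℤ² and which intersect H; then each of the ⌊(|n|/Δ)^{1/3}⌋ such lines closest to the asymptote contains a vertex of conv(H ∩ ℤ²). -/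
/-!
In a basis `e, w` of `ℤ²` with `e` parallel to the asymptote, and with coordinates
`q - (x₀, y₀) = S e + T w`, the hyperbola reads `T (Δ S + β T) = |n|`, where the signs of `e`, `w`
and of the equation are chosen so that `T ≥ 0` at the base point `x`
(`exists_latticeFrame`).  The component `{T (Δ S + β T) < |n|}` is not convex, hence `K` is the
branch `{T > 0, T (Δ S + β T) > |n|}` (`component_eq_branch`).

The lattice lines meeting `H` are those with `T > 0`, and successive ones differ by `1` in `T`; their
distance to the asymptote is proportional to `T`.  So one of the `⌊(|n|/Δ)^(1/3)⌋` closest lines has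
`T ^ 3 ≤ M := |n|/Δ` (`height_le_of_ncard_lt`).  The points of `H` are those with `T > 0` and
`S ≥ f T`, `f T = M / T - (β / Δ) T`, and the leftmost lattice point `p` on the line has `S < f T + 1`.
A functional `S + (β / Δ + μ) T` with `μ = M / (T (T + 1)) + 1` is strictly minimized at `p`
over `H ∩ ℤ²` (`strict_min_key`): if `T > 1` the second difference of `f` at `T`
exceeds `2`, which absorbs the rounding, and if `T ≤ 1` no lattice line lies closer.  A strict minimizer of a linear functional is an extreme point of the convex hull
(`mem_extremePoints_of_strict_min`).
-/

noncomputable section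

/-- The hyperbola `a(x-x₀)² + b(x-x₀)(y-y₀) + c(y-y₀)² = n`. -/
def hypSet (a b c : ℤ) (x₀ y₀ n : ℝ) : Set (ℝ × ℝ) :=
  {q | (a : ℝ) * (q.1 - x₀) ^ 2 + (b : ℝ) * (q.1 - x₀) * (q.2 - y₀)
      + (c : ℝ) * (q.2 - y₀) ^ 2 = n}

/-- The line through `z` with direction `u`. -/
def lineThrough (z u : ℝ × ℝ) : Set (ℝ × ℝ) := {q | ∃ t : ℝ, q = z + t • u}

/-- A basis `e, w` of the lattice `ℤ²` together with its coordinate functionals `s, t`. -/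
structure LatticeFrame where
  s : ℝ × ℝ →ₗ[ℝ] ℝ
  t : ℝ × ℝ →ₗ[ℝ] ℝ
  e : ℝ × ℝ
  w : ℝ × ℝ
  s_e : s e = 1
  t_e : t e = 0
  s_w : s w = 0
  t_w : t w = 1
  decomp : ∀ v, v = s v • e + t v • w
  mem_lattice : ∀ v, v ∈ intLattice ↔ ∃ i j : ℤ, s v = i ∧ t v = j

/-- The open convex region bounded by the branch `t > 0` of the hyperbola `t (Δ s + β t) = N`
centered at `o`, in the coordinates of the frame `F`. -/
def branch (F : LatticeFrame) (o : ℝ × ℝ) (Δ β N : ℝ) : Set (ℝ × ℝ) :=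
  {q | 0 < F.t (q - o) ∧ N < F.t (q - o) * (Δ * F.s (q - o) + β * F.t (q - o))}

/-! ### Strict minimizers and the key inequality -/

theorem mem_extremePoints_of_strict_min {A : Set (ℝ × ℝ)} (φ : ℝ × ℝ →ₗ[ℝ] ℝ) {p : ℝ × ℝ}
    (hp : p ∈ A) (h : ∀ q ∈ A, q ≠ p → φ p < φ q) :
    p ∈ Set.extremePoints ℝ (convexHull ℝ A) := by
  have hsub : convexHull ℝ A ⊆ {q | q ≠ p → φ p < φ q} := by
    apply convexHull_min
    · exact h
    · intro q₁ h₁ q₂ h₂ α γ hα hγ hαγ hne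
      simp only [Set.mem_ofPred_eq] at h₁ h₂
      have e₁ : φ p ≤ φ q₁ := by
        by_cases h0 : q₁ = p
        · rw [h0]
        · exact (h₁ h0).le
      have e₂ : φ p ≤ φ q₂ := by
        by_cases h0 : q₂ = p
        · rw [h0]
        · exact (h₂ h0).le
      rw [map_add, map_smul, map_smul, smul_eq_mul, smul_eq_mul]
      have hγ' : γ = 1 - α := by linarith
      subst hγ'
      by_cases c₁ : q₁ = p
      · by_cases c₂ : q₂ = p
        · exfalso; apply hne; rw [c₁, c₂, ← add_smul]; simp
        · have : 0 < 1 - α := by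
            rcases hγ.lt_or_eq with h' | h'
            · exact h'
            · exfalso; apply hne
              have : α = 1 := by linarith
              rw [this, c₁]; simp
          nlinarith [h₂ c₂]
      · rcases hα.lt_or_eq with h' | h'
        · nlinarith [h₁ c₁]
        · rw [← h'] at hne ⊢
          have := h₂ (by simpa using hne)
          linarith
  rw [mem_extremePoints]
  refine ⟨subset_convexHull ℝ A hp, ?_⟩
  intro q₁ h₁ q₂ h₂ hseg
  obtain ⟨α, γ, hα, hγ, hαγ, heq⟩ := hseg
  have hφ := congrArg φ heq
  rw [map_add, map_smul, map_smul, smul_eq_mul, smul_eq_mul] at hφ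
  have hγ' : γ = 1 - α := by linarith
  have H₁ := hsub h₁
  have H₂ := hsub h₂
  simp only [Set.mem_ofPred_eq] at H₁ H₂
  have e₁ : φ p ≤ φ q₁ := by
    by_cases h0 : q₁ = p
    · rw [h0]
    · exact (H₁ h0).le
  have e₂ : φ p ≤ φ q₂ := by
    by_cases h0 : q₂ = p
    · rw [h0]
    · exact (H₂ h0).le
  subst hγ'
  constructor
  · by_contra h0
    nlinarith [H₁ h0]
  · by_contra h0
    nlinarith [H₂ h0]

/-- With `f T = M / T` and `μ = M / (T (T + 1)) + 1`, the line of slope `-μ` through a point less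
than `1` above the graph of `f` at `T` stays strictly below the graph at every positive `T + i`,
`i ≠ 0` an integer, as soon as `T ^ 3 ≤ M`. -/
theorem strict_min_key {M T σ : ℝ} (hT : 0 < T) (hM : T ^ 3 ≤ M) (hσ : σ < M / T + 1)
    (i : ℤ) (hi : i ≠ 0) (hTi : 0 < T + i) :
    σ - (M / (T * (T + 1)) + 1) * i < M / (T + i) := by
  have hMpos : 0 < M := lt_of_lt_of_le (by positivity) hM
  rcases lt_or_gt_of_ne hi with h | h
  · obtain ⟨j, hj⟩ : ∃ j : ℝ, j = -(i : ℝ) := ⟨_, rfl⟩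
    have hi' : (i : ℝ) = -j := by linarith
    have hj1 : 1 ≤ j := by
      have : i ≤ -1 := by omega
      have : (i : ℝ) ≤ -1 := by exact_mod_cast this
      linarith
    rw [hi'] at hTi ⊢
    have hTj : 0 < T - j := by linarith
    have hpoly : T * (T - j) * (T + 1) ≤ M * j := by
      have h1 : (T - j) * (T + 1) ≤ T ^ 2 * j := by nlinarith [sq_nonneg T]
      calc T * (T - j) * (T + 1) = T * ((T - j) * (T + 1)) := by ring
        _ ≤ T * (T ^ 2 * j) := mul_le_mul_of_nonneg_left h1 hT.le
        _ = T ^ 3 * j := by ring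
        _ ≤ M * j := mul_le_mul_of_nonneg_right hM (by linarith)
    have hgap : M / (T + -j) - M / T - M / (T * (T + 1)) * j
        = (j + 1) * (M * j / (T * (T - j) * (T + 1))) := by
      rw [← sub_eq_add_neg]
      field_simp
      ring
    have hone : 1 ≤ M * j / (T * (T - j) * (T + 1)) := by
      rw [le_div_iff₀ (by positivity), one_mul]; exact hpoly
    nlinarith
  · have hi1 : (1 : ℝ) ≤ i := by exact_mod_cast h
    have hgap : M / T - M / (T + i) = M / (T * (T + i)) * i := by
      field_simp
      ring
    have hle : M / (T * (T + i)) ≤ M / (T * (T + 1)) := by gcongr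
    have := mul_le_mul_of_nonneg_right hle (show (0 : ℝ) ≤ i by linarith)
    linarith

/-! ### The geometry of a branch -/

theorem convex_branch (F : LatticeFrame) (o : ℝ × ℝ) {Δ β N : ℝ} (hN : 0 < N) :
    Convex ℝ (branch F o Δ β N) := by
  intro q₁ h₁ q₂ h₂ α γ hα hγ hαγ
  obtain ⟨a₁, b₁⟩ := h₁
  obtain ⟨a₂, b₂⟩ := h₂
  have hv : α • q₁ + γ • q₂ - o = α • (q₁ - o) + γ • (q₂ - o) := by
    have : o = (α + γ) • o := by rw [hαγ, one_smul]
    nth_rewrite 1 [this]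
    rw [add_smul, smul_sub, smul_sub]; abel
  simp only [branch, Set.mem_ofPred_eq, hv, map_add, map_smul, smul_eq_mul]
  set T₁ := F.t (q₁ - o)
  set T₂ := F.t (q₂ - o)
  set S₁ := F.s (q₁ - o)
  set S₂ := F.s (q₂ - o)
  obtain ⟨L₁, hL₁⟩ : ∃ L, L = Δ * S₁ + β * T₁ := ⟨_, rfl⟩
  obtain ⟨L₂, hL₂⟩ : ∃ L, L = Δ * S₂ + β * T₂ := ⟨_, rfl⟩
  rw [← hL₁] at b₁
  rw [← hL₂] at b₂
  have hL : Δ * (α * S₁ + γ * S₂) + β * (α * T₁ + γ * T₂) = α * L₁ + γ * L₂ := by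
    rw [hL₁, hL₂]; ring
  rw [hL]
  have p₁ : 0 < L₁ := pos_of_mul_pos_right (hN.trans b₁) a₁.le
  have p₂ : 0 < L₂ := pos_of_mul_pos_right (hN.trans b₂) a₂.le
  have hγ' : γ = 1 - α := by linarith
  have hT : 0 < α * T₁ + γ * T₂ := by
    rcases hα.lt_or_eq with h | h
    · have := mul_pos h a₁
      have := mul_nonneg hγ a₂.le
      linarith
    · have : γ = 1 := by linarith
      rw [← h, this]; linarith
  refine ⟨hT, ?_⟩
  -- The cross term `T₁ L₂ + T₂ L₁` exceeds `2 N` by the inequality of the two means.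
  have hcross : 2 * N < T₁ * L₂ + T₂ * L₁ := by
    have hx : 0 < T₁ * L₂ := mul_pos a₁ p₂
    have hy : 0 < T₂ * L₁ := mul_pos a₂ p₁
    have hxy : N * N < (T₁ * L₂) * (T₂ * L₁) := by
      have := mul_lt_mul'' b₁ b₂ hN.le hN.le
      linarith [show (T₁ * L₂) * (T₂ * L₁) = T₁ * L₁ * (T₂ * L₂) by ring]
    nlinarith [sq_nonneg (T₁ * L₂ - T₂ * L₁)]
  have hexp : (α * T₁ + γ * T₂) * (α * L₁ + γ * L₂)
      = α ^ 2 * (T₁ * L₁) + γ ^ 2 * (T₂ * L₂) + α * γ * (T₁ * L₂ + T₂ * L₁) := by ring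
  rw [hexp]
  have hN1 : N = α ^ 2 * N + γ ^ 2 * N + α * γ * (2 * N) := by rw [hγ']; ring
  have k₃ : α * γ * (2 * N) ≤ α * γ * (T₁ * L₂ + T₂ * L₁) :=
    mul_le_mul_of_nonneg_left hcross.le (mul_nonneg hα hγ)
  have k₂ : γ ^ 2 * N ≤ γ ^ 2 * (T₂ * L₂) := mul_le_mul_of_nonneg_left b₂.le (sq_nonneg _)
  have k₁ : α ^ 2 * N ≤ α ^ 2 * (T₁ * L₁) := mul_le_mul_of_nonneg_left b₁.le (sq_nonneg _)
  rcases hα.lt_or_eq with h | h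
  · have : α ^ 2 * N < α ^ 2 * (T₁ * L₁) := mul_lt_mul_of_pos_left b₁ (by positivity)
    linarith
  · have : γ = 1 := by linarith
    rw [← h, this]; linarith

theorem continuous_height (F : LatticeFrame) (o : ℝ × ℝ) : Continuous fun q => F.t (q - o) :=
  (LinearMap.continuous_of_finiteDimensional F.t).comp (continuous_id.sub continuous_const)

theorem continuous_form (F : LatticeFrame) (o : ℝ × ℝ) (Δ β : ℝ) :
    Continuous fun q => F.t (q - o) * (Δ * F.s (q - o) + β * F.t (q - o)) := by
  have h₁ := continuous_height F o
  have h₂ : Continuous fun q => F.s (q - o) :=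
    (LinearMap.continuous_of_finiteDimensional F.s).comp (continuous_id.sub continuous_const)
  fun_prop

theorem mem_closure_branch (F : LatticeFrame) (o : ℝ × ℝ) {Δ β N : ℝ} (hΔ : 0 < Δ) (hN : 0 < N)
    (q : ℝ × ℝ) :
    q ∈ closure (branch F o Δ β N) ↔
      0 < F.t (q - o) ∧ N ≤ F.t (q - o) * (Δ * F.s (q - o) + β * F.t (q - o)) := by
  constructor
  · intro hq
    have hcl : IsClosed ({q | 0 ≤ F.t (q - o)} ∩
        {q | N ≤ F.t (q - o) * (Δ * F.s (q - o) + β * F.t (q - o))}) :=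
      (isClosed_le continuous_const (continuous_height F o)).inter
        (isClosed_le continuous_const (continuous_form F o Δ β))
    have := closure_minimal (fun q (hq : q ∈ branch F o Δ β N) =>
      (⟨hq.1.le, hq.2.le⟩ : _ ∧ _)) hcl hq
    obtain ⟨h₁, h₂⟩ := this
    refine ⟨lt_of_le_of_ne h₁ fun h => ?_, h₂⟩
    change N ≤ F.t (q - o) * _ at h₂
    rw [← h, zero_mul] at h₂
    linarith
  · rintro ⟨h₁, h₂⟩
    have hlim : Filter.Tendsto (fun l : ℝ => q + l • F.e) (nhdsWithin 0 (Set.Ioi 0)) (nhds q) := by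
      have : Continuous fun l : ℝ => q + l • F.e := by fun_prop
      have h := this.tendsto 0
      simp only [zero_smul, add_zero] at h
      exact h.mono_left nhdsWithin_le_nhds
    refine mem_closure_of_tendsto hlim ?_
    filter_upwards [self_mem_nhdsWithin] with l hl
    have hl' : (0 : ℝ) < l := hl
    have hv : q + l • F.e - o = (q - o) + l • F.e := by abel
    simp only [branch, Set.mem_ofPred_eq, hv, map_add, map_smul, F.t_e, F.s_e, smul_eq_mul,
      mul_zero, add_zero, mul_one]
    refine ⟨h₁, lt_of_le_of_lt h₂ ?_⟩
    apply mul_lt_mul_of_pos_left _ h₁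
    nlinarith [mul_pos hΔ hl']

/-- The component of `x` in the complement of the hyperbola, when convex, is the branch region on
the side of `x`: the only other component at `T x ≥ 0` is `{T (Δ S + β T) < N}`, which contains
two points whose midpoint lies on the hyperbola. -/
theorem component_eq_branch (F : LatticeFrame) (o : ℝ × ℝ) {Δ β N : ℝ} (hΔ : 0 < Δ) (hN : 0 < N)
    {h : Set (ℝ × ℝ)}
    (hh : ∀ q, q ∈ h ↔ F.t (q - o) * (Δ * F.s (q - o) + β * F.t (q - o)) = N)
    {x : ℝ × ℝ} (hx : x ∉ h) (hTx : 0 ≤ F.t (x - o))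
    (hconv : Convex ℝ (connectedComponentIn hᶜ x)) :
    connectedComponentIn hᶜ x = branch F o Δ β N := by
  set G : ℝ × ℝ → ℝ := fun q => F.t (q - o) * (Δ * F.s (q - o) + β * F.t (q - o)) with hG
  have hGc : Continuous G := continuous_form F o Δ β
  have hTc := continuous_height F o
  have hGx : G x ≠ N := fun h' => hx ((hh x).2 h')
  rcases lt_or_gt_of_ne hGx with hlt | hgt
  · exfalso
    have hstar : StarConvex ℝ o {q | G q < N} := by
      rw [starConvex_iff_forall_pos (by simpa [hG] using hN)]
      intro q hq α γ hα hγ hαγ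
      have hv : α • o + γ • q - o = γ • (q - o) := by
        have : o = (α + γ) • o := by rw [hαγ, one_smul]
        nth_rewrite 2 [this]
        rw [add_smul, smul_sub]; abel
      have hval : G (α • o + γ • q) = γ ^ 2 * G q := by
        simp only [hG, hv, map_smul, smul_eq_mul]; ring
      simp only [Set.mem_ofPred_eq] at hq ⊢
      rw [hval]
      have : γ ^ 2 ≤ 1 := by nlinarith
      by_cases h0 : G q ≤ 0
      · nlinarith [sq_nonneg γ]
      · push Not at h0
        nlinarith
    have hsub : {q | G q < N} ⊆ connectedComponentIn hᶜ x := by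
      apply IsPreconnected.subset_connectedComponentIn
      · exact (hstar.isPathConnected (by simpa [hG] using hN)).isConnected.isPreconnected
      · exact hlt
      · intro q hq hqh
        exact absurd ((hh q).1 hqh) (ne_of_lt hq)
    -- In the coordinates `(T, L)` with `L = Δ S + β T`, these are the points `(2, 0)` and `(0, 2N)`.
    have m₁ : o + ((-(2 * β / Δ)) • F.e + (2 : ℝ) • F.w) ∈ {q | G q < N} := by
      simp only [hG, Set.mem_ofPred_eq, add_sub_cancel_left, map_add, map_smul, F.t_e, F.s_e,
        F.t_w, F.s_w, smul_eq_mul]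
      have h0 : Δ * (-(2 * β / Δ) * 1 + 2 * 0) + β * (-(2 * β / Δ) * 0 + 2 * 1) = 0 := by
        field_simp
        ring
      rw [h0, mul_zero]
      exact hN
    have m₂ : o + (2 * N / Δ) • F.e ∈ {q | G q < N} := by
      simp only [hG, Set.mem_ofPred_eq, add_sub_cancel_left, map_smul, F.t_e, F.s_e, smul_eq_mul]
      simpa using hN
    have hmid := hconv (hsub m₁) (hsub m₂) (show (0 : ℝ) ≤ 1 / 2 by norm_num)
      (show (0 : ℝ) ≤ 1 / 2 by norm_num) (by norm_num)
    refine connectedComponentIn_subset _ _ hmid ((hh _).2 ?_)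
    have hv : (1 / 2 : ℝ) • (o + ((-(2 * β / Δ)) • F.e + (2 : ℝ) • F.w))
        + (1 / 2 : ℝ) • (o + (2 * N / Δ) • F.e) - o
        = (-(β / Δ) + N / Δ) • F.e + (1 : ℝ) • F.w := by
      module
    rw [hv]
    simp only [map_add, map_smul, F.t_e, F.s_e, F.t_w, F.s_w, smul_eq_mul]
    field_simp
    ring
  · have hxT : 0 < F.t (x - o) := by
      refine lt_of_le_of_ne hTx fun h0 => ?_
      have : G x = 0 := by simp only [hG, ← h0, zero_mul]
      linarith
    have hxh : x ∈ hᶜ := hx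
    apply Set.Subset.antisymm
    · have hopen₁ : IsOpen (branch F o Δ β N) :=
        (isOpen_lt continuous_const hTc).inter (isOpen_lt continuous_const hGc)
      have hopen₂ : IsOpen ({q | G q < N} ∪ {q | F.t (q - o) < 0}) :=
        (isOpen_lt hGc continuous_const).union (isOpen_lt hTc continuous_const)
      refine IsPreconnected.subset_left_of_subset_union hopen₁ hopen₂ ?_ ?_ ?_
        isPreconnected_connectedComponentIn
      · rw [Set.disjoint_left]
        rintro q ⟨h₁, h₂⟩ (h₃ | h₃)
        · exact absurd h₂ (not_lt.2 (le_of_lt h₃))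
        · exact absurd h₁ (not_lt.2 (le_of_lt h₃))
      · intro q hq
        have hq' : G q ≠ N := fun h' => connectedComponentIn_subset _ _ hq ((hh q).2 h')
        rcases lt_or_gt_of_ne hq' with h₁ | h₁
        · exact Or.inr (Or.inl h₁)
        · rcases lt_trichotomy (F.t (q - o)) 0 with h₂ | h₂ | h₂
          · exact Or.inr (Or.inr h₂)
          · have : G q = 0 := by simp only [hG, h₂, zero_mul]
            linarith
          · exact Or.inl ⟨h₂, h₁⟩
      · exact ⟨x, mem_connectedComponentIn hxh, hxT, hgt⟩
    · apply (convex_branch F o hN).isPreconnected.subset_connectedComponentIn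
      · exact ⟨hxT, hgt⟩
      · intro q hq hqh
        exact absurd ((hh q).1 hqh) (ne_of_gt hq.2)

/-! ### Lines parallel to the asymptote -/

theorem mem_lineThrough_iff (F : LatticeFrame) {u : ℝ × ℝ} {κ : ℝ} (hκ : κ ≠ 0)
    (hu : u = κ • F.e) (z q : ℝ × ℝ) : q ∈ lineThrough z u ↔ F.t (q - z) = 0 := by
  constructor
  · rintro ⟨l, rfl⟩
    rw [hu, add_sub_cancel_left, map_smul, map_smul, F.t_e]; simp
  · intro h
    refine ⟨F.s (q - z) / κ, ?_⟩
    have := F.decomp (q - z)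
    rw [h, zero_smul, add_zero] at this
    rw [hu, smul_smul, div_mul_cancel₀ _ hκ, ← this]; abel

/-- In the sup metric, the distance to the line is `|t| / ‖t‖₁`. -/
theorem exists_infDist_eq (F : LatticeFrame) {u : ℝ × ℝ} {κ : ℝ} (hκ : κ ≠ 0)
    (hu : u = κ • F.e) (o : ℝ × ℝ) :
    ∃ C : ℝ, 0 < C ∧ ∀ z, Metric.infDist z (lineThrough o u) = C * |F.t (z - o)| := by
  obtain ⟨A, hA⟩ : ∃ A, A = F.t (1, 0) := ⟨_, rfl⟩
  obtain ⟨B, hB⟩ : ∃ B, B = F.t (0, 1) := ⟨_, rfl⟩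
  have ht : ∀ v : ℝ × ℝ, F.t v = A * v.1 + B * v.2 := by
    intro v
    have hv : v = v.1 • ((1, 0) : ℝ × ℝ) + v.2 • ((0, 1) : ℝ × ℝ) := by
      ext <;> simp
    conv_lhs => rw [hv]
    rw [map_add, map_smul, map_smul, ← hA, ← hB, smul_eq_mul, smul_eq_mul]; ring
  have hP : 0 < |A| + |B| := by
    rcases (add_nonneg (abs_nonneg A) (abs_nonneg B)).lt_or_eq with h | h
    · exact h
    · exfalso
      have hA0 : A = 0 := abs_eq_zero.1 (by linarith [abs_nonneg A, abs_nonneg B])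
      have hB0 : B = 0 := abs_eq_zero.1 (by linarith [abs_nonneg A, abs_nonneg B])
      have := F.t_w
      rw [ht, hA0, hB0] at this
      simp at this
  refine ⟨(|A| + |B|)⁻¹, inv_pos.2 hP, fun z => le_antisymm ?_ ?_⟩
  · set v₀ : ℝ × ℝ := (SignType.sign A, SignType.sign B) with hv₀
    have hsgn : ∀ y : ℝ, |((SignType.sign y : SignType) : ℝ)| ≤ 1 := by
      intro y
      rcases lt_trichotomy y 0 with h | h | h <;> simp [h, sign_neg, sign_pos]
    have hn₀ : ‖v₀‖ ≤ 1 := by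
      rw [Prod.norm_def]; exact max_le (hsgn A) (hsgn B)
    have ht₀ : F.t v₀ = |A| + |B| := by
      rw [ht, hv₀]; simp [self_mul_sign]
    have hmem : z - (F.t (z - o) / (|A| + |B|)) • v₀ ∈ lineThrough o u := by
      rw [mem_lineThrough_iff F hκ hu]
      have : z - (F.t (z - o) / (|A| + |B|)) • v₀ - o
          = (z - o) - (F.t (z - o) / (|A| + |B|)) • v₀ := by abel
      rw [this, map_sub, map_smul, ht₀, smul_eq_mul, div_mul_cancel₀ _ hP.ne', sub_self]
    refine (Metric.infDist_le_dist_of_mem hmem).trans ?_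
    rw [dist_eq_norm, sub_sub_cancel, norm_smul, Real.norm_eq_abs, abs_div, abs_of_pos hP,
      div_eq_inv_mul]
    exact mul_le_of_le_one_right (by positivity) hn₀
  · rw [Metric.le_infDist ⟨o, (mem_lineThrough_iff F hκ hu o o).2 (by simp)⟩]
    intro y hy
    rw [mem_lineThrough_iff F hκ hu] at hy
    have hzy : F.t (z - o) = F.t (z - y) := by
      have : z - o = (z - y) + (y - o) := by abel
      rw [this, map_add, hy, add_zero]
    rw [hzy, dist_eq_norm, inv_mul_le_iff₀ hP, ht]
    have h₁ : |(z - y).1| ≤ ‖z - y‖ := norm_fst_le (z - y)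
    have h₂ : |(z - y).2| ≤ ‖z - y‖ := norm_snd_le (z - y)
    calc |A * (z - y).1 + B * (z - y).2| ≤ |A| * |(z - y).1| + |B| * |(z - y).2| := by
          rw [← abs_mul, ← abs_mul]; exact abs_add_le _ _
      _ ≤ |A| * ‖z - y‖ + |B| * ‖z - y‖ := by gcongr
      _ = (|A| + |B|) * ‖z - y‖ := by ring

theorem line_inter_nonempty_iff (F : LatticeFrame) {u : ℝ × ℝ} {κ : ℝ} (hκ : κ ≠ 0)
    (hu : u = κ • F.e) (o : ℝ × ℝ) {Δ β N : ℝ} (hΔ : 0 < Δ) (hN : 0 < N) (z : ℝ × ℝ) :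
    (lineThrough z u ∩ closure (branch F o Δ β N)).Nonempty ↔ 0 < F.t (z - o) := by
  constructor
  · rintro ⟨q, hq, hqH⟩
    rw [mem_lineThrough_iff F hκ hu] at hq
    have h := ((mem_closure_branch F o hΔ hN q).1 hqH).1
    have : q - o = (q - z) + (z - o) := by abel
    rwa [this, map_add, hq, zero_add] at h
  · intro h
    set T := F.t (z - o) with hT
    refine ⟨z + ((N / T - β * T) / Δ - F.s (z - o)) • F.e, ?_, ?_⟩
    · rw [mem_lineThrough_iff F hκ hu, add_sub_cancel_left, map_smul, F.t_e]; simp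
    · rw [mem_closure_branch F o hΔ hN]
      have : ∀ l : ℝ, z + l • F.e - o = (z - o) + l • F.e := fun l => by abel
      simp only [this, map_add, map_smul, F.t_e, F.s_e, smul_eq_mul, mul_zero, add_zero, ← hT,
        mul_one]
      refine ⟨h, le_of_eq ?_⟩
      field_simp
      ring

/-- If `T > m`, the `m` lines at heights `T - 1, …, T - m` are all closer
to the asymptote; so fewer than `m` closer lines force `T ≤ m`. -/
theorem height_le_of_ncard_lt (F : LatticeFrame) {u : ℝ × ℝ} {κ : ℝ} (hκ : κ ≠ 0)
    (hu : u = κ • F.e) (o : ℝ × ℝ) {Δ β N : ℝ} (hΔ : 0 < Δ) (hN : 0 < N) {z : ℝ × ℝ}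
    (hz : z ∈ intLattice) (hT : 0 < F.t (z - o)) (m : ℤ)
    (hm : (({d : ℝ | ∃ z' ∈ intLattice,
          (lineThrough z' u ∩ closure (branch F o Δ β N)).Nonempty ∧
          Metric.infDist z' (lineThrough o u) = d ∧
          d < Metric.infDist z (lineThrough o u)}).ncard : ℤ) < m) :
    F.t (z - o) ≤ m := by
  obtain ⟨C, hC, hdist⟩ := exists_infDist_eq F hκ hu o
  set T := F.t (z - o) with hTdef
  set Ds := {d : ℝ | ∃ z' ∈ intLattice,
          (lineThrough z' u ∩ closure (branch F o Δ β N)).Nonempty ∧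
          Metric.infDist z' (lineThrough o u) = d ∧
          d < Metric.infDist z (lineThrough o u)} with hDs
  by_contra hlt
  push Not at hlt
  have hm0 : 0 < m := lt_of_le_of_lt (by positivity) hm
  obtain ⟨i₀, j₀, hi₀, hj₀⟩ := (F.mem_lattice z).1 hz
  have hfin : Ds.Finite := by
    apply ((Set.finite_Icc (0 : ℤ) ⌈T⌉).image fun i : ℤ => C * (T - i)).subset
    rintro d ⟨z', hz', hne, hd, hlt'⟩
    rw [line_inter_nonempty_iff F hκ hu o hΔ hN] at hne
    obtain ⟨i₁, j₁, hi₁, hj₁⟩ := (F.mem_lattice z').1 hz'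
    have hT' : F.t (z' - o) = T - ((j₀ - j₁ : ℤ) : ℝ) := by
      rw [hTdef, map_sub, map_sub, hj₀, hj₁]; push_cast; ring
    rw [hdist, ← hTdef, abs_of_pos hT, ← hd, hdist, abs_of_pos hne] at hlt'
    have hlt2 := lt_of_mul_lt_mul_left hlt' hC.le
    rw [hT'] at hlt2 hne
    refine ⟨j₀ - j₁, ⟨?_, ?_⟩, ?_⟩
    · have : (0 : ℝ) < ((j₀ - j₁ : ℤ) : ℝ) := by linarith
      exact (Int.cast_pos.1 this).le
    · have : ((j₀ - j₁ : ℤ) : ℝ) ≤ (⌈T⌉ : ℝ) := by linarith [Int.le_ceil T]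
      exact_mod_cast this
    · rw [← hd, hdist, hT', abs_of_pos hne]
  have hsub : (fun i : ℤ => C * (T - i)) '' (Finset.Icc (1 : ℤ) m : Set ℤ) ⊆ Ds := by
    rintro d ⟨i, hi, rfl⟩
    rw [Finset.coe_Icc, Set.mem_Icc] at hi
    have hi1 : (1 : ℝ) ≤ i := by exact_mod_cast hi.1
    have him : (i : ℝ) ≤ m := by exact_mod_cast hi.2
    have ht' : F.t (z - (i : ℝ) • F.w - o) = T - i := by
      have : z - (i : ℝ) • F.w - o = (z - o) - (i : ℝ) • F.w := by abel
      rw [this, map_sub, map_smul, F.t_w, smul_eq_mul, mul_one]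
    have hpos : 0 < T - i := by linarith
    refine ⟨z - (i : ℝ) • F.w, ?_, ?_, ?_, ?_⟩
    · rw [F.mem_lattice]
      refine ⟨i₀, j₀ - i, ?_, ?_⟩
      · rw [map_sub, map_smul, F.s_w, hi₀]; simp
      · rw [map_sub, map_smul, F.t_w, hj₀]; simp
    · rw [line_inter_nonempty_iff F hκ hu o hΔ hN, ht']; exact hpos
    · rw [hdist, ht', abs_of_pos hpos]
    · rw [hdist, ← hTdef, abs_of_pos hT]
      apply mul_lt_mul_of_pos_left _ hC
      linarith
  have hcard := Set.ncard_le_ncard hsub hfin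
  rw [Set.ncard_image_of_injective _ (fun i j hij => by
    have := mul_left_cancel₀ hC.ne' hij
    have h' : (i : ℝ) = j := by linarith
    exact_mod_cast h'), Set.ncard_coe_finset, Int.card_Icc] at hcard
  omega

/-! ### The vertex on a line close to the asymptote -/

theorem exists_vertex (F : LatticeFrame) {u : ℝ × ℝ} {κ : ℝ} (hκ : κ ≠ 0)
    (hu : u = κ • F.e) (o : ℝ × ℝ) {Δ β N : ℝ} (hΔ : 0 < Δ) (hN : 0 < N) {z : ℝ × ℝ}
    (hz : z ∈ intLattice) (hT : 0 < F.t (z - o)) (hcube : F.t (z - o) ^ 3 ≤ N / Δ) :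
    ∃ q ∈ Set.extremePoints ℝ (convexHull ℝ (closure (branch F o Δ β N) ∩ intLattice)),
      q ∈ lineThrough z u := by
  obtain ⟨i₀, j₀, hi₀, hj₀⟩ := (F.mem_lattice z).1 hz
  set T := F.t (z - o) with hTdef
  -- A point with coordinates `S', T'` lies in the closed branch iff `T' > 0` and `N/Δ/T' ≤ S' + (β/Δ) T'`.
  have hmem : ∀ q, q ∈ closure (branch F o Δ β N) ↔
      0 < F.t (q - o) ∧ N / Δ / F.t (q - o) ≤ F.s (q - o) + β / Δ * F.t (q - o) := by
    intro q
    rw [mem_closure_branch F o hΔ hN]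
    refine and_congr_right fun h => ?_
    rw [div_le_iff₀ h, div_le_iff₀ hΔ]
    have : (F.s (q - o) + β / Δ * F.t (q - o)) * F.t (q - o) * Δ
      = F.t (q - o) * (Δ * F.s (q - o) + β * F.t (q - o)) := by field_simp
    rw [this]
  obtain ⟨k, hk⟩ : ∃ k : ℤ, k = ⌈N / Δ / T - β / Δ * T - F.s (z - o)⌉ := ⟨_, rfl⟩
  set p := z + (k : ℝ) • F.e with hp
  have hpo : p - o = (z - o) + (k : ℝ) • F.e := by rw [hp]; abel
  have htp : F.t (p - o) = T := by rw [hpo, map_add, map_smul, F.t_e]; simp [hTdef]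
  have hsp : F.s (p - o) = F.s (z - o) + k := by rw [hpo, map_add, map_smul, F.s_e]; simp
  have hk1 : N / Δ / T ≤ F.s (p - o) + β / Δ * T := by
    have := Int.le_ceil (N / Δ / T - β / Δ * T - F.s (z - o))
    rw [← hk] at this; rw [hsp]; linarith
  have hk2 : F.s (p - o) + β / Δ * T < N / Δ / T + 1 := by
    have := Int.ceil_lt_add_one (N / Δ / T - β / Δ * T - F.s (z - o))
    rw [← hk] at this; rw [hsp]; linarith
  have hpl : p ∈ intLattice := by
    rw [F.mem_lattice]
    refine ⟨i₀ + k, j₀, ?_, ?_⟩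
    · rw [hp, map_add, map_smul, F.s_e, hi₀]; simp
    · rw [hp, map_add, map_smul, F.t_e, hj₀]; simp
  have hpH : p ∈ closure (branch F o Δ β N) := by
    rw [hmem, htp]; exact ⟨hT, hk1⟩
  refine ⟨p, ?_, ?_⟩
  · set μ := N / Δ / (T * (T + 1)) + 1 with hμ
    refine mem_extremePoints_of_strict_min (F.s + (β / Δ + μ) • F.t) (Set.mem_inter hpH hpl) ?_
    rintro q ⟨hqH, hql⟩ hqp
    obtain ⟨hq1, hq2⟩ := (hmem q).1 hqH
    obtain ⟨i₁, j₁, hi₁, hj₁⟩ := (F.mem_lattice q).1 hql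
    have htq : F.t (q - o) = T + ((j₁ - j₀ : ℤ) : ℝ) := by
      rw [hTdef, map_sub, map_sub, hj₀, hj₁]; push_cast; ring
    have hshift : ∀ v, (F.s + (β / Δ + μ) • F.t) v = F.s (v - o) + (β / Δ + μ) * F.t (v - o)
        + (F.s o + (β / Δ + μ) * F.t o) := by
      intro v
      simp only [LinearMap.add_apply, LinearMap.smul_apply, smul_eq_mul, map_sub]; ring
    rw [hshift, hshift, htp]
    by_cases hj : j₁ - j₀ = 0
    · -- On the line of `p`, the integrality of `s` and the choice of `k` make `p` leftmost.
      rw [hj, Int.cast_zero, add_zero] at htq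
      rw [htq] at hq2 ⊢
      have hsq : F.s (q - o) = F.s (p - o) + ((i₁ - i₀ - k : ℤ) : ℝ) := by
        rw [hsp, map_sub, map_sub, hi₀, hi₁]; push_cast; ring
      have hge : (0 : ℝ) < ((i₁ - i₀ - k : ℤ) : ℝ) + 1 := by linarith
      have hge' : 0 ≤ i₁ - i₀ - k := by
        have : 0 < i₁ - i₀ - k + 1 := by exact_mod_cast hge
        omega
      have hne : i₁ - i₀ - k ≠ 0 := by
        intro h0
        apply hqp
        rw [h0, Int.cast_zero, add_zero] at hsq
        have e₁ := F.decomp (q - o)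
        rw [hsq, htq, ← htp, ← F.decomp (p - o)] at e₁
        exact sub_left_inj.1 e₁
      have hpos : (0 : ℝ) < ((i₁ - i₀ - k : ℤ) : ℝ) := by
        exact_mod_cast lt_of_le_of_ne hge' hne.symm
      linarith
    · have hkey := strict_min_key hT hcube hk2 (j₁ - j₀) hj (by rw [← htq]; exact hq1)
      rw [← htq, ← hμ] at hkey
      have : ((j₁ - j₀ : ℤ) : ℝ) = F.t (q - o) - T := by rw [htq]; ring
      rw [this] at hkey
      nlinarith
  · rw [mem_lineThrough_iff F hκ hu, hp, add_sub_cancel_left, map_smul, F.t_e]; simp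

/-! ### Adapted lattice bases -/

/-- The frame attached to an integer matrix of determinant `D = ±1`. -/
def frameOf (p r w₁ w₂ D : ℤ) (hD : D * D = 1) (hdet : p * w₂ - r * w₁ = D) : LatticeFrame where
  s := (D : ℝ) • ((w₂ : ℝ) • LinearMap.fst ℝ ℝ ℝ - (w₁ : ℝ) • LinearMap.snd ℝ ℝ ℝ)
  t := (D : ℝ) • ((p : ℝ) • LinearMap.snd ℝ ℝ ℝ - (r : ℝ) • LinearMap.fst ℝ ℝ ℝ)
  e := (p, r)
  w := (w₁, w₂)
  s_e := by
    have : D * (w₂ * p - w₁ * r) = 1 := by rw [← hD]; nth_rewrite 3 [← hdet]; ring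
    simp; exact_mod_cast this
  t_e := by simp; right; ring
  s_w := by simp; right; ring
  t_w := by
    have : D * (p * w₂ - r * w₁) = 1 := by rw [hdet, hD]
    simp; exact_mod_cast this
  decomp v := by
    have h : (D : ℝ) * (p * w₂ - r * w₁) = 1 := by
      have : D * (p * w₂ - r * w₁) = 1 := by rw [hdet, hD]
      exact_mod_cast this
    ext
    · simp
      linear_combination (-v.1) * h
    · simp
      linear_combination (-v.2) * h
  mem_lattice v := by
    have h : (D : ℝ) * (p * w₂ - r * w₁) = 1 := by
      have : D * (p * w₂ - r * w₁) = 1 := by rw [hdet, hD]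
      exact_mod_cast this
    constructor
    · rintro ⟨i, j, rfl⟩
      refine ⟨D * (w₂ * i - w₁ * j), D * (p * j - r * i), ?_, ?_⟩ <;> simp
    · rintro ⟨i, j, hi, hj⟩
      simp at hi hj
      refine ⟨i * p + j * w₁, i * r + j * w₂, ?_⟩
      ext
      · push_cast
        rw [← hi, ← hj]
        linear_combination (-v.1) * h
      · push_cast
        rw [← hi, ← hj]
        linear_combination (-v.2) * h

/-- An isotropic vector of an integral form of square discriminant is proportional to a primitive
integer vector. -/
theorem exists_primitive (a b c Δ : ℤ) (hΔ : 0 < Δ) (hd : Δ ^ 2 = b ^ 2 - 4 * a * c)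
    (u : ℝ × ℝ) (hu0 : u ≠ 0)
    (hasym : (a : ℝ) * u.1 ^ 2 + (b : ℝ) * u.1 * u.2 + (c : ℝ) * u.2 ^ 2 = 0) :
    ∃ p r : ℤ, IsCoprime p r ∧ ∃ κ : ℝ, κ ≠ 0 ∧ u = κ • ((p : ℝ), (r : ℝ)) := by
  have hdR : (Δ : ℝ) ^ 2 = (b : ℝ) ^ 2 - 4 * a * c := by exact_mod_cast hd
  have hint : ∃ P R : ℤ, ∃ κ : ℝ, u = κ • ((P : ℝ), (R : ℝ)) := by
    by_cases ha : a = 0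
    · subst ha
      have hb : (b : ℝ) ≠ 0 := by
        intro h0
        have : (0 : ℝ) < Δ := by exact_mod_cast hΔ
        rw [h0] at hdR
        simp at hdR
        linarith
      have hfac : u.2 * ((b : ℝ) * u.1 + c * u.2) = 0 := by
        push_cast at hasym; linear_combination hasym
      rcases mul_eq_zero.1 hfac with h | h
      · refine ⟨1, 0, u.1, ?_⟩
        ext <;> simp [h]
      · refine ⟨-c, b, u.2 / b, ?_⟩
        ext
        · simp
          field_simp
          linear_combination h
        · simp
          field_simp
    · have haR : (a : ℝ) ≠ 0 := by exact_mod_cast ha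
      have hsq : (2 * a * u.1 + b * u.2) ^ 2 = ((Δ : ℝ) * u.2) ^ 2 := by
        linear_combination 4 * a * hasym - u.2 ^ 2 * hdR
      rcases sq_eq_sq_iff_eq_or_eq_neg.1 hsq with h | h
      · refine ⟨Δ - b, 2 * a, u.2 / (2 * a), ?_⟩
        ext
        · simp
          field_simp
          linear_combination h
        · simp
          field_simp
      · refine ⟨-Δ - b, 2 * a, u.2 / (2 * a), ?_⟩
        ext
        · simp
          field_simp
          linear_combination h
        · simp
          field_simp
  obtain ⟨P, R, κ, hκ⟩ := hint
  have hgcd : 0 < Int.gcd P R := by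
    rw [Int.gcd_pos_iff]
    by_contra h0
    push Not at h0
    apply hu0
    rw [hκ, h0.1, h0.2]
    ext <;> simp
  obtain ⟨p, r, hpr, hP, hR⟩ := Int.exists_gcd_one hgcd
  have hu : u = (κ * (Int.gcd P R : ℝ)) • ((p : ℝ), (r : ℝ)) := by
    have hP' : (P : ℝ) = p * (Int.gcd P R : ℝ) := by exact_mod_cast hP
    have hR' : (R : ℝ) = r * (Int.gcd P R : ℝ) := by exact_mod_cast hR
    rw [hκ]
    ext
    · simp only [Prod.smul_mk, smul_eq_mul]; rw [hP']; ring
    · simp only [Prod.smul_mk, smul_eq_mul]; rw [hR']; ring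
  refine ⟨p, r, Int.isCoprime_iff_gcd_eq_one.2 hpr, _, ?_, hu⟩
  intro h0
  apply hu0
  rw [hu, h0, zero_smul]

/-- A lattice basis with first vector along `u`, in which `ε Q` (for a sign `ε`) takes the form
`Δ s t + β t²`, oriented so that the given vector `v₀` has `t ≥ 0`. -/
theorem exists_latticeFrame (a b c Δ : ℤ) (hΔ : 0 < Δ) (hd : Δ ^ 2 = b ^ 2 - 4 * a * c)
    (u : ℝ × ℝ) (hu0 : u ≠ 0)
    (hasym : (a : ℝ) * u.1 ^ 2 + (b : ℝ) * u.1 * u.2 + (c : ℝ) * u.2 ^ 2 = 0)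
    (ε : ℤ) (hε : ε * ε = 1) (v₀ : ℝ × ℝ) :
    ∃ F : LatticeFrame, (∃ κ : ℝ, κ ≠ 0 ∧ u = κ • F.e) ∧ 0 ≤ F.t v₀ ∧
      ∃ β : ℝ, ∀ v : ℝ × ℝ,
        ε * ((a : ℝ) * v.1 ^ 2 + (b : ℝ) * v.1 * v.2 + (c : ℝ) * v.2 ^ 2)
          = F.t v * (Δ * F.s v + β * F.t v) := by
  obtain ⟨p, r, hpr, κ, hκ, hu⟩ := exists_primitive a b c Δ hΔ hd u hu0 hasym
  obtain ⟨w₂, y, hwy⟩ := hpr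
  obtain ⟨w₁, rfl⟩ : ∃ w₁, y = -w₁ := ⟨-y, by ring⟩
  have hdet : p * w₂ - r * w₁ = 1 := by linarith
  have hQe : a * p ^ 2 + b * p * r + c * r ^ 2 = 0 := by
    have h : κ ^ 2 * ((a : ℝ) * p ^ 2 + b * p * r + c * r ^ 2) = 0 := by
      rw [hu] at hasym
      simp only [Prod.smul_mk, smul_eq_mul] at hasym
      linear_combination hasym
    have := (mul_eq_zero.1 h).resolve_left (pow_ne_zero 2 hκ)
    exact_mod_cast this
  obtain ⟨α, hα⟩ : ∃ α, α = 2 * a * p * w₁ + b * (p * w₂ + r * w₁) + 2 * c * r * w₂ := ⟨_, rfl⟩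
  obtain ⟨τ, hτ, hτ0⟩ : ∃ τ : ℤ, τ * τ = 1 ∧ 0 ≤ (τ : ℝ) * (p * v₀.2 - r * v₀.1) := by
    rcases le_total 0 ((p : ℝ) * v₀.2 - r * v₀.1) with h | h
    · exact ⟨1, by norm_num, by simpa using h⟩
    · exact ⟨-1, by norm_num, by push_cast; linarith⟩
  -- The discriminant is invariant under a unimodular change of basis.
  have hα2 : (τ * ε * α) ^ 2 = Δ ^ 2 := by
    have : α ^ 2 = Δ ^ 2 := by
      rw [hα, hd]
      linear_combination 4 * (a * w₁ ^ 2 + b * w₁ * w₂ + c * w₂ ^ 2) * hQe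
        + (b ^ 2 - 4 * a * c) * (p * w₂ - r * w₁ + 1) * hdet
    linear_combination this + α ^ 2 * τ ^ 2 * hε + α ^ 2 * hτ
  obtain ⟨ρ, hρ, hρα⟩ : ∃ ρ : ℤ, ρ * ρ = 1 ∧ ε * α = Δ * ρ * τ := by
    rcases sq_eq_sq_iff_eq_or_eq_neg.1 hα2 with h | h
    · exact ⟨1, by norm_num, by linear_combination τ * h - ε * α * hτ⟩
    · exact ⟨-1, by norm_num, by linear_combination τ * h - ε * α * hτ⟩
  have hD : (ρ * τ) * (ρ * τ) = 1 := by linear_combination τ * τ * hρ + hτ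
  have hdet' : (ρ * p) * (τ * w₂) - (ρ * r) * (τ * w₁) = ρ * τ := by
    linear_combination ρ * τ * hdet
  have hρR : (ρ : ℝ) * ρ = 1 := by exact_mod_cast hρ
  have hτR : (τ : ℝ) * τ = 1 := by exact_mod_cast hτ
  have hραR : (ε : ℝ) * α = Δ * ρ * τ := by exact_mod_cast hρα
  have hαR : (α : ℝ) = 2 * a * p * w₁ + b * (p * w₂ + r * w₁) + 2 * c * r * w₂ := by
    exact_mod_cast hα
  have hdetR : (p : ℝ) * w₂ - r * w₁ = 1 := by exact_mod_cast hdet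
  have hQeR : (a : ℝ) * p ^ 2 + b * p * r + c * r ^ 2 = 0 := by exact_mod_cast hQe
  have ht : ∀ v, (frameOf _ _ _ _ _ hD hdet').t v = τ * (p * v.2 - r * v.1) := by
    intro v
    simp [frameOf]
    linear_combination (τ * (p * v.2 - r * v.1)) * hρR
  have hs : ∀ v, (frameOf _ _ _ _ _ hD hdet').s v = ρ * (w₂ * v.1 - w₁ * v.2) := by
    intro v
    simp [frameOf]
    linear_combination (ρ * (w₂ * v.1 - w₁ * v.2)) * hτR
  refine ⟨frameOf _ _ _ _ _ hD hdet', ⟨κ * ρ, ?_, ?_⟩, ?_,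
    ε * (a * w₁ ^ 2 + b * w₁ * w₂ + c * w₂ ^ 2), ?_⟩
  · exact mul_ne_zero hκ (left_ne_zero_of_mul (hρR.trans_ne one_ne_zero))
  · rw [hu]
    ext
    · simp [frameOf]
      linear_combination (-(κ * p)) * hρR
    · simp [frameOf]
      linear_combination (-(κ * r)) * hρR
  · rw [ht]; exact hτ0
  · intro v
    rw [ht, hs]
    obtain ⟨S, hS⟩ : ∃ S, S = (w₂ : ℝ) * v.1 - w₁ * v.2 := ⟨_, rfl⟩
    obtain ⟨T, hT⟩ : ∃ T, T = (p : ℝ) * v.2 - r * v.1 := ⟨_, rfl⟩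
    have hv1 : v.1 = S * p + T * w₁ := by rw [hS, hT]; linear_combination (-v.1) * hdetR
    have hv2 : v.2 = S * r + T * w₂ := by rw [hS, hT]; linear_combination (-v.2) * hdetR
    rw [← hS, ← hT, hv1, hv2]
    rw [hαR] at hραR
    linear_combination ε * S ^ 2 * hQeR + S * T * hραR
      - T ^ 2 * ε * (a * w₁ ^ 2 + b * w₁ * w₂ + c * w₂ ^ 2) * hτR

/-- Each of the `⌊(|n|/Δ)^(1/3)⌋` lattice lines parallel to an asymptote of the
hyperbola, intersecting `H` and closest to that asymptote, contains a vertex of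
`conv(H ∩ ℤ²)`.  Here `u ≠ 0` is an asymptote direction (an isotropic direction of
the quadratic form) and the asymptote is the line through the center `(x₀, y₀)` with
direction `u`; a lattice line parallel to it is `z + ℝu` with `z ∈ ℤ²`, and lines are
compared by their distance to the asymptote. -/
theorem statement8 (a b c Δ : ℤ) (hΔ : 0 < Δ)
    (hdisc : (Δ : ℝ) = Real.sqrt ((b : ℝ) ^ 2 - 4 * (a : ℝ) * (c : ℝ)))
    (x₀ y₀ n : ℝ) (hn : n ≠ 0)
    (x : ℝ × ℝ) (hx : x ∉ hypSet a b c x₀ y₀ n)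
    (K : Set (ℝ × ℝ)) (hK : K = connectedComponentIn (hypSet a b c x₀ y₀ n)ᶜ x)
    (hKconv : Convex ℝ K)
    (H : Set (ℝ × ℝ)) (hH : H = closure K)
    (u : ℝ × ℝ) (hu0 : u ≠ 0)
    (hasym : (a : ℝ) * u.1 ^ 2 + (b : ℝ) * u.1 * u.2 + (c : ℝ) * u.2 ^ 2 = 0)
    (z : ℝ × ℝ) (hz : z ∈ intLattice)
    (hzH : (lineThrough z u ∩ H).Nonempty)
    (hclose : (({d : ℝ | ∃ z' ∈ intLattice, (lineThrough z' u ∩ H).Nonempty ∧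
          Metric.infDist z' (lineThrough (x₀, y₀) u) = d ∧
          d < Metric.infDist z (lineThrough (x₀, y₀) u)}).ncard : ℤ) <
        ⌊(|n| / (Δ : ℝ)) ^ ((1 : ℝ) / 3)⌋) :
    ∃ q ∈ Set.extremePoints ℝ (convexHull ℝ (H ∩ intLattice)), q ∈ lineThrough z u := by
  have hΔR : (0 : ℝ) < Δ := by exact_mod_cast hΔ
  have hd : Δ ^ 2 = b ^ 2 - 4 * a * c := by
    have h0 : 0 < (b : ℝ) ^ 2 - 4 * a * c := by
      rw [← Real.sqrt_pos, ← hdisc]; exact hΔR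
    have : (Δ : ℝ) ^ 2 = (b : ℝ) ^ 2 - 4 * a * c := by rw [hdisc, Real.sq_sqrt h0.le]
    exact_mod_cast this
  obtain ⟨ε, hε, hεn⟩ : ∃ ε : ℤ, ε * ε = 1 ∧ |n| = ε * n := by
    rcases lt_or_gt_of_ne hn with h | h
    · exact ⟨-1, by norm_num, by rw [abs_of_neg h]; simp⟩
    · exact ⟨1, by norm_num, by rw [abs_of_pos h]; simp⟩
  have hN : 0 < |n| := abs_pos.2 hn
  obtain ⟨F, ⟨κ, hκ, hu⟩, hTx, β, hform⟩ :=
    exists_latticeFrame a b c Δ hΔ hd u hu0 hasym ε hε (x - (x₀, y₀))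
  have hh : ∀ q, q ∈ hypSet a b c x₀ y₀ n ↔
      F.t (q - (x₀, y₀)) * (Δ * F.s (q - (x₀, y₀)) + β * F.t (q - (x₀, y₀))) = |n| := by
    intro q
    have hε0 : (ε : ℝ) ≠ 0 := by
      intro h0
      have : ε = 0 := by exact_mod_cast h0
      simp [this] at hε
    rw [← hform, hεn, mul_right_inj' hε0]
    exact Iff.rfl
  have hKb : K = branch F (x₀, y₀) Δ β |n| := by
    rw [hK] at hKconv ⊢
    exact component_eq_branch F _ hΔR hN hh hx hTx hKconv
  rw [hH, hKb] at hzH hclose ⊢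
  have hT := (line_inter_nonempty_iff F hκ hu _ hΔR hN z).1 hzH
  refine exists_vertex F hκ hu _ hΔR hN hz hT ?_
  have hle := height_le_of_ncard_lt F hκ hu _ hΔR hN hz hT _ hclose
  have hle' := hle.trans (Int.floor_le _)
  have hM0 : 0 ≤ |n| / (Δ : ℝ) := by positivity
  calc F.t (z - (x₀, y₀)) ^ 3 ≤ ((|n| / (Δ : ℝ)) ^ ((1 : ℝ) / 3)) ^ 3 :=
        pow_le_pow_left₀ hT.le hle' 3
    _ = |n| / (Δ : ℝ) := by
        rw [← Real.rpow_natCast, ← Real.rpow_mul hM0]; norm_num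

end
end

section
/- Let n ∈ ℝ_{>0}, p ∈ ℝ², and let Λ ⊇ ℤ² be a superlattice of ℤ². Among the vertical lines of p+Λ (lines {x = c} containing points of p+Λ) that intersect the hyperbola xy = n in the open positive quadrant, each of the ⌊(n/det Λ)^{1/3}⌋ leftmost ones contains a vertex of conv(H_n ∩ (p+Λ)); likewise, each of the ⌊(n/det Λ)^{1/3}⌋ bottommost horizontal lines of p+Λ intersecting the hyperbola contains a vertex. Consequently, conv(H_n ∩ (p+Λ)) has at least 2·(n/det Λ)^{1/3} − 2 vertices. -/
/-!
Let `α` be the spacing of the vertical lines of `p + Λ` and `β` the spacing of the lattice points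
on each of them, so that `α * β = det Λ`; put `N = (n / det Λ)^(1/3)`. The lowest point `q` of
`H_n ∩ (p + Λ)` on the line `x = c` has height less than `n / c + β`. If `c > α`, the linear form
`(c² - α²) y + n x` takes the value `2 n c` at the points of the hyperbola over `c - α` and `c + α`,
so it is at least `2 n c` on `H_n` outside the strip `|x - c| < α`, hence on all other lattice lines.
At `q` it is smaller than `2 n c` as soon as `β c (c² - α²) ≤ n α²`, which holds for `c ≤ N α`. If
`c ≤ α`, the line `x = c` is the leftmost one and a steep linear form is minimised at `q`. In both
cases `q` is the unique minimiser of a linear form, hence a vertex (`VLat.exists_minimizer`,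
`mem_extremePoints_of_minimizer`). The `⌊N⌋` leftmost lines all satisfy `c ≤ N α`
(`VLat.le_of_ncard_lt`). Horizontal lines are handled by swapping the coordinates.

For the count, the vertices with `x ≤ N α` and those with `y ≤ N α'` (`α'` the horizontal line
spacing, which is at most `β`) number at least `⌊N⌋` each, and they are disjoint when `N > 1`, since
`x y ≤ N² α β < N³ det Λ = n` for a common point. The vertex set is finite because a vertex `q`
cannot have both `q - (1,0)` and `q + (1,0)`, or both `q - (0,1)` and `q + (0,1)`, in the set.
-/

noncomputable section

/-! ### Lattice lines -/

/-- `L` is a translated planar lattice seen through its vertical lines: these are the lines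
`x = x0 + k α`, and the points of `L` on each of them form a coset of `β ℤ`. -/
structure VLat (L : Set (ℝ × ℝ)) (α β x0 : ℝ) : Prop where
  hα : 0 < α
  hβ : 0 < β
  proj : ∀ q ∈ L, ∃ k : ℤ, q.1 = x0 + k * α
  surj : ∀ k : ℤ, ∃ q ∈ L, q.1 = x0 + k * α
  shift : ∀ q ∈ L, ∀ k : ℤ, (q.1, q.2 + k * β) ∈ L
  fiber : ∀ q ∈ L, ∀ r ∈ L, q.1 = r.1 → ∃ k : ℤ, r.2 = q.2 + k * β

/-- The spacing of the vertical lines is `g / |m|` and that of the points on them is `1 / g`, where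
`(0,1) = a₂ v + b₂ w`, `g = gcd a₂ b₂`, and `m = 1 / det (v, w)` is an integer. -/
theorem exists_vlat (p v w : ℝ × ℝ) (hvw : v.1 * w.2 - v.2 * w.1 ≠ 0)
    (hsup : intLattice ⊆ latticeOf v w) :
    ∃ α β : ℝ, VLat (translateSet p (latticeOf v w)) α β p.1 ∧ α * β = detOf v w := by
  obtain ⟨a1, b1, h1⟩ := hsup (show ((1 : ℝ), (0 : ℝ)) ∈ intLattice from ⟨1, 0, by simp⟩)
  obtain ⟨a2, b2, h2⟩ := hsup (show ((0 : ℝ), (1 : ℝ)) ∈ intLattice from ⟨0, 1, by simp⟩)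
  obtain ⟨v1, v2⟩ := v
  obtain ⟨w1, w2⟩ := w
  obtain ⟨p1, p2⟩ := p
  simp only [Prod.smul_mk, smul_eq_mul, Prod.mk_add_mk, Prod.mk.injEq] at h1 h2 hvw
  obtain ⟨h11, h12⟩ := h1
  obtain ⟨h21, h22⟩ := h2
  set D := v1 * w2 - v2 * w1 with hD
  have hv1 : v1 = b2 * D := by
    rw [hD]; linear_combination v1 * h22 - v2 * h21
  have hw1 : w1 = -a2 * D := by
    rw [hD]; linear_combination w1 * h22 - w2 * h21
  have hg : 0 < Int.gcd a2 b2 := by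
    rw [Int.gcd_pos_iff]
    by_contra hcon
    push Not at hcon
    rw [hcon.1, hcon.2] at h22
    norm_num at h22
  obtain ⟨g, s, t, hg0, hst, hs, ht⟩ := Int.exists_gcd_one' hg
  have hgR : (0 : ℝ) < g := by exact_mod_cast hg0
  have hsR : (a2 : ℝ) = s * g := by exact_mod_cast hs
  have htR : (b2 : ℝ) = t * g := by exact_mod_cast ht
  have hDabs : 0 < |D| := abs_pos.mpr hvw
  obtain ⟨x, y, hxy⟩ := Int.isCoprime_iff_gcd_eq_one.mpr hst
  have hxyR : (x : ℝ) * s + y * t = 1 := by exact_mod_cast hxy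
  -- `e` is the sign of the determinant
  obtain ⟨e, he, heD⟩ : ∃ e : ℤ, e * e = 1 ∧ D = e * |D| := by
    rcases le_total 0 D with h | h
    · exact ⟨1, by norm_num, by rw [abs_of_nonneg h]; simp⟩
    · exact ⟨-1, by norm_num, by rw [abs_of_nonpos h]; simp⟩
  have heR : (e : ℝ) * e = 1 := by exact_mod_cast he
  have hs21 : (s : ℝ) * v1 + t * w1 = 0 := by
    rw [hv1, hw1, hsR, htR]; ring
  have hs22 : (s : ℝ) * v2 + t * w2 = 1 / g := by
    rw [eq_div_iff hgR.ne']; rw [hsR, htR] at h22; linarith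
  refine ⟨g * |D|, 1 / g, ⟨by positivity, by positivity, ?_, ?_, ?_, ?_⟩, ?_⟩
  · rintro _ ⟨_, ⟨a, b, rfl⟩, rfl⟩
    refine ⟨(a * t - b * s) * e, ?_⟩
    simp only [Prod.smul_mk, smul_eq_mul, Prod.mk_add_mk]
    rw [hv1, hw1, hsR, htR]
    push_cast
    linear_combination (a * (t * g) - b * (s * g)) * heD
  · intro k
    refine ⟨_, ⟨_, ⟨k * e * y, -(k * e * x), rfl⟩, rfl⟩, ?_⟩
    simp only [Prod.smul_mk, smul_eq_mul, Prod.mk_add_mk]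
    rw [hv1, hw1, hsR, htR]
    push_cast
    linear_combination (k * e * g * D) * hxyR + k * e * g * heD + k * g * |D| * heR
  · rintro _ ⟨_, ⟨a, b, rfl⟩, rfl⟩ k
    refine ⟨_, ⟨a + k * s, b + k * t, rfl⟩, ?_⟩
    simp only [Prod.smul_mk, smul_eq_mul, Prod.mk_add_mk, Prod.mk.injEq]
    push_cast
    constructor
    · linear_combination k * hs21
    · linear_combination k * hs22
  · rintro _ ⟨_, ⟨a, b, rfl⟩, rfl⟩ _ ⟨_, ⟨a', b', rfl⟩, rfl⟩ h
    simp only [Prod.smul_mk, smul_eq_mul, Prod.mk_add_mk] at h ⊢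
    have hrel : (a' - a) * t = (b' - b) * s := by
      have : ((a' - a) * t - (b' - b) * s : ℝ) * (g * D) = 0 := by
        rw [hv1, hw1, hsR, htR] at h
        linear_combination -h
      have h0 := (mul_eq_zero.mp this).resolve_right (mul_ne_zero hgR.ne' hvw)
      have h1 : ((a' - a) * t - (b' - b) * s : ℤ) = 0 := by exact_mod_cast h0
      linarith
    have hrelR : ((a' : ℝ) - a) * t = (b' - b) * s := by exact_mod_cast hrel
    refine ⟨(a' - a) * x + (b' - b) * y, ?_⟩
    push_cast
    -- `(a' - a, b' - b) = k (s, t)` with `k = (a' - a) x + (b' - b) y`, by coprimality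
    have ha : (a' : ℝ) - a = ((a' - a) * x + (b' - b) * y) * s := by
      linear_combination -(a' - a : ℝ) * hxyR + y * hrelR
    have hb : (b' : ℝ) - b = ((a' - a) * x + (b' - b) * y) * t := by
      linear_combination -(b' - b : ℝ) * hxyR - x * hrelR
    linear_combination ((a' - a) * x + (b' - b) * y : ℝ) * hs22 + v2 * ha + w2 * hb
  · rw [show detOf (v1, v2) (w1, w2) = |D| from rfl]
    field_simp

theorem swap_translate (p v w : ℝ × ℝ) :
    Prod.swap ⁻¹' translateSet p (latticeOf v w)
      = translateSet p.swap (latticeOf v.swap w.swap) := by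
  ext q
  constructor
  · rintro ⟨_, ⟨a, b, rfl⟩, h⟩
    refine ⟨_, ⟨a, b, rfl⟩, ?_⟩
    rw [← Prod.swap_swap q, ← h]
    ext <;> simp
  · rintro ⟨_, ⟨a, b, rfl⟩, rfl⟩
    refine ⟨_, ⟨a, b, rfl⟩, ?_⟩
    ext <;> simp

/-- The horizontal counterpart of `exists_vlat`. -/
theorem exists_vlat_swap (p v w : ℝ × ℝ) (hvw : v.1 * w.2 - v.2 * w.1 ≠ 0)
    (hsup : intLattice ⊆ latticeOf v w) :
    ∃ α β : ℝ, VLat (Prod.swap ⁻¹' translateSet p (latticeOf v w)) α β p.2 ∧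
      α * β = detOf v w := by
  rw [swap_translate]
  have hdet : detOf v w = detOf v.swap w.swap := by
    simp only [detOf, Prod.fst_swap, Prod.snd_swap]
    rw [← abs_neg]
    congr 1
    ring
  rw [hdet]
  refine exists_vlat p.swap v.swap w.swap ?_ ?_
  · simp only [Prod.fst_swap, Prod.snd_swap]
    intro h
    apply hvw
    linarith
  · rintro _ ⟨a, b, rfl⟩
    obtain ⟨c, d, h⟩ := hsup (show ((b : ℝ), (a : ℝ)) ∈ intLattice from ⟨b, a, rfl⟩)
    refine ⟨c, d, ?_⟩
    have h1 := congrArg Prod.fst h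
    have h2 := congrArg Prod.snd h
    ext
    · simpa using h2
    · simpa using h1

theorem VLat.eq_or_gap {L : Set (ℝ × ℝ)} {α β x0 : ℝ} (h : VLat L α β x0) {q r : ℝ × ℝ}
    (hq : q ∈ L) (hr : r ∈ L) : r.1 = q.1 ∨ r.1 + α ≤ q.1 ∨ q.1 + α ≤ r.1 := by
  obtain ⟨k, hk⟩ := h.proj q hq
  obtain ⟨l, hl⟩ := h.proj r hr
  have hα := h.hα
  rcases lt_trichotomy k l with hkl | hkl | hkl
  · right; right
    have : (k : ℝ) + 1 ≤ l := by exact_mod_cast hkl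
    rw [hk, hl]; nlinarith
  · left; rw [hk, hl, hkl]
  · right; left
    have : (l : ℝ) + 1 ≤ k := by exact_mod_cast hkl
    rw [hk, hl]; nlinarith

/-! ### Unique minimisers of linear forms -/

/-- On every vertical line with `c³ β ≤ n α²` some point of `H_n ∩ L` is the unique minimiser over
`H_n ∩ L` of a linear form. -/
theorem VLat.exists_minimizer {L : Set (ℝ × ℝ)} {α β x0 n c : ℝ} (h : VLat L α β x0)
    (hn : 0 < n) (hc : 0 < c) (hcL : ∃ q ∈ L, q.1 = c) (hcn : c ^ 3 * β ≤ n * α ^ 2) :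
    ∃ q ∈ Hset n ∩ L, q.1 = c ∧ ∃ a b : ℝ, ∀ s ∈ Hset n ∩ L, s ≠ q →
      a * q.1 + b * q.2 < a * s.1 + b * s.2 := by
  have hα := h.hα
  have hβ := h.hβ
  obtain ⟨q0, hq0, hq0c⟩ := hcL
  -- the lowest lattice point of height at least `n / c` on the line
  set m : ℤ := ⌈(n / c - q0.2) / β⌉ with hm
  have hm1 : n / c - q0.2 ≤ m * β := by
    rw [← div_le_iff₀ hβ]; exact Int.le_ceil _
  have hm2 : m * β < n / c - q0.2 + β := by
    have := Int.ceil_lt_add_one ((n / c - q0.2) / β)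
    rw [← hm] at this
    have h2 := mul_lt_mul_of_pos_right this hβ
    rwa [add_mul, div_mul_cancel₀ _ hβ.ne', one_mul] at h2
  have hqL := h.shift q0 hq0 m
  rw [hq0c] at hqL
  obtain ⟨y, hy⟩ : ∃ y, y = q0.2 + m * β := ⟨_, rfl⟩
  rw [← hy] at hqL
  have hy1 : n / c ≤ y := by linarith
  have hy2 : y < n / c + β := by linarith
  have hy0 : 0 < y := lt_of_lt_of_le (by positivity) hy1
  have hyn : n ≤ y * c := by rwa [div_le_iff₀ hc] at hy1
  have hyb : y * c < n + β * c := by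
    have := mul_lt_mul_of_pos_right hy2 hc
    rwa [add_mul, div_mul_cancel₀ _ hc.ne'] at this
  have hline : ∀ s ∈ Hset n ∩ L, s ≠ (c, y) → s.1 = c → y < s.2 := by
    rintro ⟨s1, s2⟩ ⟨⟨hs1, hs2, hs3⟩, hsL⟩ hne hsc
    simp only at hsc hs1 hs2 hs3 ⊢
    subst hsc
    obtain ⟨k, hk⟩ := h.fiber _ hqL _ hsL rfl
    simp only at hk
    have hk0 : k ≠ 0 := by
      rintro rfl
      apply hne
      simp [hk]
    rcases lt_or_gt_of_ne hk0 with hk1 | hk1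
    · exfalso
      have : (k : ℝ) + 1 ≤ 0 := by exact_mod_cast hk1
      have h3 : s2 ≤ y - β := by nlinarith
      nlinarith
    · have : (0 : ℝ) < k := by exact_mod_cast hk1
      have := mul_pos this hβ
      linarith
  have hspos : ∀ s ∈ Hset n ∩ L, 0 < s.1 ∧ 0 < s.2 ∧ n ≤ s.1 * s.2 := by
    rintro s ⟨⟨hs1, hs2, hs3⟩, hsL⟩
    refine ⟨lt_of_le_of_ne hs1 ?_, lt_of_le_of_ne hs2 ?_, hs3⟩
    · intro h0; rw [← h0] at hs3; linarith
    · intro h0; rw [← h0] at hs3; linarith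
  refine ⟨(c, y), ⟨⟨hc.le, hy0.le, by simpa [mul_comm] using hyn⟩, hqL⟩, rfl, ?_⟩
  rcases le_or_gt c α with hcα | hcα
  · refine ⟨y / α, 1, fun s hs hne => ?_⟩
    obtain ⟨hs1, hs2, hs3⟩ := hspos s hs
    simp only [one_mul]
    rcases h.eq_or_gap hqL hs.2 with h1 | h1 | h1
    · have := hline s hs hne h1
      simp only at h1
      rw [h1]; linarith
    · simp only at h1; linarith
    · simp only at h1
      have h2 : y / α * (c + α) ≤ y / α * s.1 := mul_le_mul_of_nonneg_left h1 (by positivity)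
      rw [mul_add, div_mul_cancel₀ _ hα.ne'] at h2
      linarith
  · have hpos : 0 < c ^ 2 - α ^ 2 := by nlinarith
    refine ⟨n, c ^ 2 - α ^ 2, fun s hs hne => ?_⟩
    obtain ⟨hs1, hs2, hs3⟩ := hspos s hs
    simp only
    rcases eq_or_ne s.1 c with h1 | h1
    · have := hline s hs hne h1
      rw [h1]
      have := mul_lt_mul_of_pos_left this hpos
      linarith
    · have hgap : α ^ 2 ≤ (s.1 - c) ^ 2 := by
        rcases h.eq_or_gap hqL hs.2 with h2 | h2 | h2
        · exact absurd h2 h1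
        · simp only at h2; nlinarith
        · simp only at h2; nlinarith
      have hge : 2 * n * c ≤ n * s.1 + (c ^ 2 - α ^ 2) * s.2 := by
        have e1 : (c ^ 2 - α ^ 2) * n ≤ (c ^ 2 - α ^ 2) * (s.1 * s.2) :=
          mul_le_mul_of_nonneg_left hs3 hpos.le
        have e2 : 0 ≤ n * ((s.1 - c) ^ 2 - α ^ 2) := mul_nonneg hn.le (by linarith)
        have e3 : 2 * n * c * s.1 ≤ (n * s.1 + (c ^ 2 - α ^ 2) * s.2) * s.1 := by nlinarith
        exact le_of_mul_le_mul_right e3 hs1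
      have hlt : n * c + (c ^ 2 - α ^ 2) * y < 2 * n * c := by
        have e1 : (c ^ 2 - α ^ 2) * (y * c) < (c ^ 2 - α ^ 2) * (n + β * c) :=
          mul_lt_mul_of_pos_left hyb hpos
        have e2 : 0 < β * c * α ^ 2 := by positivity
        have e3 : (n * c + (c ^ 2 - α ^ 2) * y) * c < 2 * n * c * c := by nlinarith
        exact lt_of_mul_lt_mul_right e3 hc.le
      linarith

theorem mem_extremePoints_of_minimizer {S : Set (ℝ × ℝ)} {q : ℝ × ℝ} {a b : ℝ} (hq : q ∈ S)
    (hmin : ∀ s ∈ S, s ≠ q → a * q.1 + b * q.2 < a * s.1 + b * s.2) :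
    q ∈ Set.extremePoints ℝ (convexHull ℝ S) := by
  have hsub : convexHull ℝ S ⊆ {z | z = q ∨ a * q.1 + b * q.2 < a * z.1 + b * z.2} := by
    apply convexHull_min
    · intro s hs
      by_cases h : s = q
      · exact Or.inl h
      · exact Or.inr (hmin s hs h)
    · rw [convex_iff_forall_pos]
      rintro x hx y hy s t hs ht hst
      have hx' : x = q ∧ y = q ∨ a * q.1 + b * q.2 <
          s * (a * x.1 + b * x.2) + t * (a * y.1 + b * y.2) := by
        have ht' : t = 1 - s := by linarith
        rcases hx with rfl | hx <;> rcases hy with rfl | hy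
        · exact Or.inl ⟨rfl, rfl⟩
        · right
          have := mul_lt_mul_of_pos_left hy ht
          subst ht'; linarith
        · right
          have := mul_lt_mul_of_pos_left hx hs
          subst ht'; linarith
        · right
          have h1 := mul_lt_mul_of_pos_left hx hs
          have h2 := mul_lt_mul_of_pos_left hy ht
          subst ht'; linarith
      rcases hx' with ⟨rfl, rfl⟩ | h
      · left; rw [← add_smul, hst, one_smul]
      · right
        simp only [Prod.fst_add, Prod.snd_add, Prod.smul_fst, Prod.smul_snd, smul_eq_mul]
        linarith
  rw [mem_extremePoints]
  refine ⟨subset_convexHull ℝ S hq, ?_⟩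
  rintro x hx y hy ⟨s, t, hs, ht, hst, hxy⟩
  have e1 := congrArg Prod.fst hxy
  have e2 := congrArg Prod.snd hxy
  simp only [Prod.fst_add, Prod.snd_add, Prod.smul_fst, Prod.smul_snd, smul_eq_mul] at e1 e2
  have key : a * q.1 + b * q.2 = s * (a * x.1 + b * x.2) + t * (a * y.1 + b * y.2) := by
    rw [← e1, ← e2]; ring
  have ht' : t = 1 - s := by linarith
  rcases hsub hx with hx | hx <;> rcases hsub hy with hy | hy
  · exact ⟨hx, hy⟩
  · have := mul_lt_mul_of_pos_left hy ht
    exfalso; subst hx ht'; linarith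
  · have := mul_lt_mul_of_pos_left hx hs
    exfalso; subst hy ht'; linarith
  · have h1 := mul_lt_mul_of_pos_left hx hs
    have h2 := mul_lt_mul_of_pos_left hy ht
    exfalso; subst ht'; linarith

/-! ### Counting lattice lines -/

theorem finite_progression (α x0 B : ℝ) (hα : 0 < α) :
    {c : ℝ | 0 ≤ c ∧ c ≤ B ∧ ∃ k : ℤ, c = x0 + k * α}.Finite := by
  refine ((Set.finite_Icc ⌈-x0 / α⌉ ⌊(B - x0) / α⌋).image (fun k : ℤ => x0 + k * α)).subset ?_
  rintro c ⟨h0, hB, k, rfl⟩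
  refine ⟨k, ⟨?_, ?_⟩, rfl⟩
  · rw [Int.ceil_le, div_le_iff₀ hα]; linarith
  · rw [Int.le_floor, le_div_iff₀ hα]; linarith

/-- If fewer than `⌊N⌋` vertical lines of `L` lie strictly between `0` and `c`, then `c ≤ N α`. -/
theorem VLat.le_of_ncard_lt {L : Set (ℝ × ℝ)} {α β x0 c N : ℝ} (h : VLat L α β x0)
    (hc : 0 < c) (hcL : ∃ q ∈ L, q.1 = c)
    (hcard : (({c' : ℝ | 0 < c' ∧ c' < c ∧ ∃ q ∈ L, q.1 = c'}).ncard : ℤ) < ⌊N⌋) :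
    c ≤ N * α := by
  have hα := h.hα
  obtain ⟨q, hq, rfl⟩ := hcL
  obtain ⟨k, hk⟩ := h.proj q hq
  set T := {c' : ℝ | 0 < c' ∧ c' < q.1 ∧ ∃ r ∈ L, r.1 = c'} with hT
  have hfin : T.Finite := by
    refine (finite_progression α x0 q.1 hα).subset ?_
    rintro c' ⟨h0, h1, r, hr, rfl⟩
    exact ⟨h0.le, h1.le, h.proj r hr⟩
  by_contra hcon
  push Not at hcon
  -- otherwise `c - α, c - 2 α, …, c - ⌊N⌋ α` are all positive
  have hle : ⌊N⌋.toNat ≤ T.ncard := by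
    have himg : (fun j : ℕ => q.1 - (j + 1) * α) '' (Finset.range ⌊N⌋.toNat : Set ℕ) ⊆ T := by
      rintro _ ⟨j, hj, rfl⟩
      have hj' : j < ⌊N⌋.toNat := by simpa using hj
      have hj2 : (j : ℤ) + 1 ≤ ⌊N⌋ := by omega
      have hj3 : (j : ℝ) + 1 ≤ N := by
        have : ((((j : ℤ) + 1 : ℤ)) : ℝ) ≤ N := Int.le_floor.mp hj2
        push_cast at this
        exact this
      refine ⟨?_, ?_, ?_⟩
      · simp only; nlinarith
      · have : 0 < ((j : ℝ) + 1) * α := by positivity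
        simp only; linarith
      · obtain ⟨r, hr, hr1⟩ := h.surj (k - (j + 1))
        refine ⟨r, hr, ?_⟩
        rw [hr1, hk]; push_cast; ring
    have hinj : Function.Injective (fun j : ℕ => q.1 - ((j : ℝ) + 1) * α) := by
      intro i j hij
      simp only [sub_right_inj] at hij
      have := mul_right_cancel₀ hα.ne' hij
      exact_mod_cast add_right_cancel this
    have := Set.ncard_le_ncard himg hfin
    rwa [Set.ncard_image_of_injective _ hinj, Set.ncard_coe_finset, Finset.card_range] at this
  omega

/-- If every term of the progression `x0 + ℤ α` in `(0, N α]` is a value of `f` on the finite set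
`E`, then at least `⌊N⌋` points `q` of `E` satisfy `f q ≤ N α`. -/
theorem floor_le_ncard {E : Set (ℝ × ℝ)} (hE : E.Finite) (f : ℝ × ℝ → ℝ) {α x0 N : ℝ}
    (hα : 0 < α) (hN : 0 ≤ N)
    (hf : ∀ k : ℤ, 0 < x0 + k * α → x0 + k * α ≤ N * α → ∃ q ∈ E, f q = x0 + k * α) :
    ⌊N⌋₊ ≤ {q ∈ E | f q ≤ N * α}.ncard := by
  -- `x0 + k α` is the smallest positive term
  set k : ℤ := ⌊-x0 / α⌋ + 1 with hk
  have h1 : 0 < x0 + k * α := by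
    have := Int.lt_floor_add_one (-x0 / α)
    rw [div_lt_iff₀ hα] at this
    rw [hk]; push_cast; linarith
  have h2 : x0 + k * α ≤ α := by
    have := Int.floor_le (-x0 / α)
    rw [le_div_iff₀ hα] at this
    rw [hk]; push_cast; linarith
  have hfin : {q ∈ E | f q ≤ N * α}.Finite := hE.subset (fun q hq => hq.1)
  have himg : (fun j : ℕ => x0 + ((k + j : ℤ) : ℝ) * α) '' (Finset.range ⌊N⌋₊ : Set ℕ) ⊆
      f '' {q ∈ E | f q ≤ N * α} := by
    rintro _ ⟨j, hj, rfl⟩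
    have hj' : j + 1 ≤ ⌊N⌋₊ := by simpa using hj
    have hj2 : (j : ℝ) + 1 ≤ N := by
      have := (Nat.le_floor_iff hN).mp hj'
      push_cast at this
      exact this
    have hj3 : x0 + ((k + j : ℤ) : ℝ) * α ≤ N * α := by
      push_cast
      nlinarith
    have hj4 : 0 < x0 + ((k + j : ℤ) : ℝ) * α := by
      have : 0 ≤ (j : ℝ) * α := by positivity
      push_cast
      linarith
    obtain ⟨q, hq, hqf⟩ := hf _ hj4 hj3
    exact ⟨q, ⟨hq, by rw [hqf]; exact hj3⟩, hqf⟩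
  have hinj : Function.Injective (fun j : ℕ => x0 + ((k + j : ℤ) : ℝ) * α) := by
    intro i j hij
    simp only [add_right_inj] at hij
    have := mul_right_cancel₀ hα.ne' hij
    push_cast at this
    exact_mod_cast add_left_cancel this
  have h3 := Set.ncard_le_ncard himg (hfin.image f)
  rw [Set.ncard_image_of_injective _ hinj, Set.ncard_coe_finset, Finset.card_range] at h3
  exact h3.trans (Set.ncard_image_le hfin)

/-! ### Finiteness of the vertex set -/

theorem not_mem_extremePoints_of_add_sub {S : Set (ℝ × ℝ)} {q d : ℝ × ℝ} (hd : d ≠ 0)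
    (h1 : q + d ∈ S) (h2 : q - d ∈ S) : q ∉ Set.extremePoints ℝ (convexHull ℝ S) := by
  intro hq
  rw [mem_extremePoints] at hq
  have := hq.2 _ (subset_convexHull ℝ S h1) _ (subset_convexHull ℝ S h2)
    ⟨1 / 2, 1 / 2, by norm_num, by norm_num, by norm_num, by
      ext <;> simp <;> ring⟩
  exact hd (by simpa using this.1)

theorem progression_pos_lower (α x0 : ℝ) (hα : 0 < α) :
    ∃ d > 0, ∀ k : ℤ, 0 < x0 + k * α → d ≤ x0 + k * α := by
  refine ⟨x0 + ((⌊-x0 / α⌋ + 1 : ℤ) : ℝ) * α, ?_, ?_⟩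
  · have := Int.lt_floor_add_one (-x0 / α)
    rw [div_lt_iff₀ hα] at this
    push_cast; linarith
  · intro k hk
    have h1 : -x0 / α < k := by rw [div_lt_iff₀ hα]; linarith
    have h2 : ⌊-x0 / α⌋ + 1 ≤ k := Int.floor_lt.mpr h1
    have h3 : ((⌊-x0 / α⌋ + 1 : ℤ) : ℝ) ≤ k := by exact_mod_cast h2
    have := mul_le_mul_of_nonneg_right h3 hα.le
    linarith

/-- A vertex `(x, y)` satisfies `x ≤ n / y + 1` and `y ≤ n / x + 1`, and `x`, `y` are bounded below
by the smallest positive coordinates of the lattice lines, so the vertices form a bounded subset of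
a discrete set. -/
theorem finite_vertices {L : Set (ℝ × ℝ)} {α β α' β' x0 y0 n : ℝ} (hn : 0 < n)
    (h : VLat L α β x0) (h' : VLat (Prod.swap ⁻¹' L) α' β' y0)
    (hL : ∀ q ∈ L, ∀ a b : ℤ, q + ((a : ℝ), (b : ℝ)) ∈ L) :
    (Set.extremePoints ℝ (convexHull ℝ (Hset n ∩ L))).Finite := by
  obtain ⟨d, hd, hdmin⟩ := progression_pos_lower α x0 h.hα
  obtain ⟨d', hd', hdmin'⟩ := progression_pos_lower α' y0 h'.hα
  refine ((finite_progression α x0 (n / d' + 1) h.hα).prod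
    (finite_progression α' y0 (n / d + 1) h'.hα)).subset ?_
  intro q hq
  have hqS := extremePoints_convexHull_subset hq
  obtain ⟨⟨hq1, hq2, hq3⟩, hqL⟩ := hqS
  have hx : 0 < q.1 := by
    refine lt_of_le_of_ne hq1 fun h0 => ?_
    rw [← h0] at hq3; linarith
  have hy : 0 < q.2 := by
    refine lt_of_le_of_ne hq2 fun h0 => ?_
    rw [← h0] at hq3; linarith
  obtain ⟨k, hk⟩ := h.proj q hqL
  obtain ⟨l, hl⟩ := h'.proj q.swap (by simpa using hqL)
  rw [Prod.fst_swap] at hl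
  have hdx : d ≤ q.1 := by rw [hk]; exact hdmin k (by rwa [← hk])
  have hdy : d' ≤ q.2 := by rw [hl]; exact hdmin' l (by rwa [← hl])
  refine ⟨⟨hq1, ?_, k, hk⟩, ⟨hq2, ?_, l, hl⟩⟩
  · by_contra hcon
    push Not at hcon
    have h0 : 0 ≤ n / d' := by positivity
    have h1 : n / d' * d' = n := div_mul_cancel₀ _ hd'.ne'
    refine not_mem_extremePoints_of_add_sub (d := ((1 : ℝ), (0 : ℝ))) (by simp) ?_ ?_ hq
    · refine ⟨⟨?_, ?_, ?_⟩, by simpa using hL q hqL 1 0⟩ <;> simp <;> nlinarith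
    · refine ⟨⟨?_, ?_, ?_⟩, by simpa [sub_eq_add_neg] using hL q hqL (-1) 0⟩ <;>
        simp <;> nlinarith
  · by_contra hcon
    push Not at hcon
    have h0 : 0 ≤ n / d := by positivity
    have h1 : n / d * d = n := div_mul_cancel₀ _ hd.ne'
    refine not_mem_extremePoints_of_add_sub (d := ((0 : ℝ), (1 : ℝ))) (by simp) ?_ ?_ hq
    · refine ⟨⟨?_, ?_, ?_⟩, by simpa using hL q hqL 0 1⟩ <;> simp <;> nlinarith
    · refine ⟨⟨?_, ?_, ?_⟩, by simpa [sub_eq_add_neg] using hL q hqL 0 (-1)⟩ <;>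
        simp <;> nlinarith

/-! ### Vertices on the extremal lines -/

theorem cube_bound {n N α β c : ℝ} (hβ : 0 < β) (hc : 0 < c)
    (hN3 : N ^ 3 * (α * β) = n) (hcN : c ≤ N * α) : c ^ 3 * β ≤ n * α ^ 2 := by
  have h1 : c ^ 3 ≤ (N * α) ^ 3 := pow_le_pow_left₀ hc.le hcN 3
  have h2 := mul_le_mul_of_nonneg_right h1 hβ.le
  rw [← hN3]
  linarith

theorem VLat.exists_vertex {L : Set (ℝ × ℝ)} {α β x0 n N c : ℝ} (h : VLat L α β x0)
    (hn : 0 < n) (hN3 : N ^ 3 * (α * β) = n) (hc : 0 < c) (hcL : ∃ q ∈ L, q.1 = c)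
    (hcN : c ≤ N * α) :
    ∃ q ∈ Set.extremePoints ℝ (convexHull ℝ (Hset n ∩ L)), q.1 = c := by
  obtain ⟨q, hq, hqc, a, b, hmin⟩ :=
    h.exists_minimizer hn hc hcL (cube_bound h.hβ hc hN3 hcN)
  exact ⟨q, mem_extremePoints_of_minimizer hq hmin, hqc⟩

theorem VLat.exists_vertex_swap {L : Set (ℝ × ℝ)} {α β y0 n N c : ℝ}
    (h : VLat (Prod.swap ⁻¹' L) α β y0)
    (hn : 0 < n) (hN3 : N ^ 3 * (α * β) = n) (hc : 0 < c) (hcL : ∃ q ∈ L, q.2 = c)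
    (hcN : c ≤ N * α) :
    ∃ q ∈ Set.extremePoints ℝ (convexHull ℝ (Hset n ∩ L)), q.2 = c := by
  obtain ⟨r, hr, hrc⟩ := hcL
  obtain ⟨q, hq, hqc, a, b, hmin⟩ :=
    h.exists_minimizer hn hc ⟨r.swap, by simpa using hr, by simpa using hrc⟩
      (cube_bound h.hβ hc hN3 hcN)
  have hsw : ∀ s, s ∈ Hset n ∩ L → s.swap ∈ Hset n ∩ Prod.swap ⁻¹' L := by
    rintro s ⟨⟨h1, h2, h3⟩, hs⟩
    exact ⟨⟨h2, h1, by rw [mul_comm] at h3; exact h3⟩, by simpa using hs⟩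
  have hqS : q.swap ∈ Hset n ∩ L := by
    obtain ⟨⟨h1, h2, h3⟩, hs⟩ := hq
    exact ⟨⟨h2, h1, by rw [mul_comm] at h3; exact h3⟩, hs⟩
  refine ⟨q.swap, mem_extremePoints_of_minimizer (a := b) (b := a) hqS ?_, hqc⟩
  intro s hs hne
  have := hmin s.swap (hsw s hs) (fun h0 => hne (by rw [← h0, Prod.swap_swap]))
  simp only [Prod.fst_swap, Prod.snd_swap] at this ⊢
  linarith

/-- Each of the `⌊(n/det Λ)^(1/3)⌋` leftmost vertical lines of `p+Λ` meeting the
hyperbola `xy = n` in the open positive quadrant (i.e. with `x`-coordinate `> 0`)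
contains a vertex of `conv(H_n ∩ (p+Λ))`; likewise for the bottommost horizontal
lines; consequently there are at least `2 (n/det Λ)^(1/3) - 2` vertices. -/
theorem statement9 (n : ℝ) (hn : 0 < n) (p v w : ℝ × ℝ)
    (hvw : v.1 * w.2 - v.2 * w.1 ≠ 0)
    (hsup : intLattice ⊆ latticeOf v w) :
    (∀ cx : ℝ, 0 < cx → (∃ q ∈ translateSet p (latticeOf v w), q.1 = cx) →
      (({c' : ℝ | 0 < c' ∧ c' < cx ∧
          ∃ q ∈ translateSet p (latticeOf v w), q.1 = c'}).ncard : ℤ) <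
        ⌊(n / detOf v w) ^ ((1 : ℝ) / 3)⌋ →
      ∃ q ∈ Set.extremePoints ℝ
          (convexHull ℝ (Hset n ∩ translateSet p (latticeOf v w))), q.1 = cx) ∧
    (∀ cy : ℝ, 0 < cy → (∃ q ∈ translateSet p (latticeOf v w), q.2 = cy) →
      (({c' : ℝ | 0 < c' ∧ c' < cy ∧
          ∃ q ∈ translateSet p (latticeOf v w), q.2 = c'}).ncard : ℤ) <
        ⌊(n / detOf v w) ^ ((1 : ℝ) / 3)⌋ →
      ∃ q ∈ Set.extremePoints ℝ
          (convexHull ℝ (Hset n ∩ translateSet p (latticeOf v w))), q.2 = cy) ∧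
    2 * (n / detOf v w) ^ ((1 : ℝ) / 3) - 2 ≤
      ((Set.extremePoints ℝ
          (convexHull ℝ (Hset n ∩ translateSet p (latticeOf v w)))).ncard : ℝ) := by
  obtain ⟨α, β, hV, hαβ⟩ := exists_vlat p v w hvw hsup
  obtain ⟨α', β', hV', hαβ'⟩ := exists_vlat_swap p v w hvw hsup
  have hδ : 0 < detOf v w := abs_pos.mpr hvw
  obtain ⟨N, hN⟩ : ∃ N, N = (n / detOf v w) ^ ((1 : ℝ) / 3) := ⟨_, rfl⟩
  have hN0 : 0 ≤ N := by rw [hN]; positivity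
  have hN3 : N ^ 3 * detOf v w = n := by
    have : N ^ 3 = n / detOf v w := by
      rw [hN, ← Real.rpow_natCast, ← Real.rpow_mul (by positivity)]
      norm_num
    rw [this, div_mul_cancel₀ _ hδ.ne']
  have hLZ : ∀ q ∈ translateSet p (latticeOf v w), ∀ a b : ℤ,
      q + ((a : ℝ), (b : ℝ)) ∈ translateSet p (latticeOf v w) := by
    rintro _ ⟨_, ⟨c, d, rfl⟩, rfl⟩ a b
    obtain ⟨e, f, hef⟩ := hsup (show ((a : ℝ), (b : ℝ)) ∈ intLattice from ⟨a, b, rfl⟩)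
    refine ⟨_, ⟨c + e, d + f, rfl⟩, ?_⟩
    rw [hef]
    push_cast
    simp only [add_smul]
    abel
  rw [← hN]
  generalize translateSet p (latticeOf v w) = L at *
  have hfin := finite_vertices hn hV hV' hLZ
  have hvert := fun c => hV.exists_vertex (N := N) (c := c) hn (by rw [hαβ]; exact hN3)
  have hvert' := fun c => hV'.exists_vertex_swap (N := N) (c := c) hn (by rw [hαβ']; exact hN3)
  refine ⟨fun c hc hcL hcard => ?_, fun c hc hcL hcard => ?_, ?_⟩
  · exact hvert c hc hcL (hV.le_of_ncard_lt hc hcL hcard)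
  · refine hvert' c hc hcL (hV'.le_of_ncard_lt hc ?_ ?_)
    · obtain ⟨r, hr, hrc⟩ := hcL
      exact ⟨r.swap, by simpa using hr, hrc⟩
    · have hset : {c' : ℝ | 0 < c' ∧ c' < c ∧ ∃ q ∈ Prod.swap ⁻¹' L, q.1 = c'} =
          {c' : ℝ | 0 < c' ∧ c' < c ∧ ∃ q ∈ L, q.2 = c'} := by
        ext c'
        constructor
        · rintro ⟨h1, h2, r, hr, hrc⟩
          exact ⟨h1, h2, r.swap, hr, hrc⟩
        · rintro ⟨h1, h2, r, hr, hrc⟩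
          exact ⟨h1, h2, r.swap, by simpa using hr, hrc⟩
      rw [hset]
      exact hcard
  · rcases le_or_gt N 1 with hN1 | hN1
    · have : (0 : ℝ) ≤ ((Set.extremePoints ℝ (convexHull ℝ (Hset n ∩ L))).ncard : ℝ) :=
        Nat.cast_nonneg _
      linarith
    have hα' := hV'.hα
    have hα := hV.hα
    have hβ := hV.hβ
    -- `β` is a positive difference of heights of lattice points, hence at least `α'`
    have hle : α' ≤ β := by
      obtain ⟨q, hq, -⟩ := hV.surj 0
      have hq2 := hV.shift q hq 1
      have h1 := hV'.eq_or_gap (q := q.swap) (r := (q.2 + ((1 : ℤ) : ℝ) * β, q.1))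
        (by simpa using hq) hq2
      simp only [Prod.fst_swap, Int.cast_one, one_mul] at h1
      rcases h1 with h1 | h1 | h1 <;> linarith
    have c1 := floor_le_ncard hfin Prod.fst hα hN0 (fun k hk hkN =>
      hvert _ hk (hV.surj k) hkN)
    have c2 := floor_le_ncard hfin Prod.snd hα' hN0 (fun k hk hkN =>
      hvert' _ hk (by
        obtain ⟨r, hr, hrc⟩ := hV'.surj k
        exact ⟨r.swap, hr, hrc⟩) hkN)
    set E := Set.extremePoints ℝ (convexHull ℝ (Hset n ∩ L)) with hE
    have hdisj : Disjoint {q ∈ E | q.1 ≤ N * α} {q ∈ E | q.2 ≤ N * α'} := by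
      rw [Set.disjoint_left]
      rintro q ⟨hqE, hqx⟩ ⟨-, hqy⟩
      obtain ⟨⟨h1, h2, h3⟩, -⟩ := extremePoints_convexHull_subset hqE
      have hqy' : q.2 ≤ N * β := hqy.trans (mul_le_mul_of_nonneg_left hle hN0)
      have h4 : q.1 * q.2 ≤ (N * α) * (N * β) :=
        mul_le_mul hqx hqy' h2 (by positivity)
      have h5 : N ^ 2 * (α * β) < N ^ 3 * (α * β) := by
        apply mul_lt_mul_of_pos_right _ (by positivity)
        nlinarith [mul_pos (show 0 < N by linarith) (show 0 < N by linarith)]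
      rw [hαβ, hN3] at h5
      rw [← hαβ] at h5
      linarith
    have hun := Set.ncard_union_eq hdisj (hfin.subset fun q hq => hq.1)
      (hfin.subset fun q hq => hq.1)
    have hsub : ({q ∈ E | q.1 ≤ N * α} ∪ {q ∈ E | q.2 ≤ N * α'}).ncard ≤ E.ncard :=
      Set.ncard_le_ncard (Set.union_subset (fun q hq => hq.1) (fun q hq => hq.1)) hfin
    have htot : ⌊N⌋₊ + ⌊N⌋₊ ≤ E.ncard := by omega
    have htotR : (⌊N⌋₊ : ℝ) + ⌊N⌋₊ ≤ E.ncard := by exact_mod_cast htot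
    have := Nat.lt_floor_add_one N
    linarith

end
end

section
/- Let n ∈ ℝ_{>0}, p ∈ ℝ², and let Γ be a vertical shear lattice. Suppose q = (q_x, q_y) ∈ H_n ∩ (p+Γ) satisfies q_x > 1 and q_y < min{ n·q_x/(q_x² − 1), n/q_x + 1 }. Then q is a vertex of conv(H_n ∩ (p+Γ)). -/
/-!
Put `c = n / (q_x² - 1)`. The chord of the hyperbola `xy = n` over `[q_x - 1, q_x + 1]` is the line
`y = c (2 q_x - x)`, of slope `-c`. By convexity the hyperbola lies on or above this line outside
the open interval `(q_x - 1, q_x + 1)`, while `q_y < n q_x / (q_x² - 1)` says that `q` lies strictly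
below it. Abscissae of points of `p + Γ` differ from `q_x` by integers, so every point of
`H_n ∩ (p + Γ)` with abscissa other than `q_x` has a larger value of `y + c x` than `q`. On the
vertical line through `q`, points of `p + Γ` differ by integers, and `q_y - 1 < n / q_x` rules out
those below `q`. Hence `q` is the unique minimiser of the linear functional `y + c x`, so it is an
extreme point of the convex hull (`mem_extremePoints_convexHull_of_strict_min`).
-/

noncomputable section

/-- The unique minimiser over `S` of a linear functional `y + c x` is an extreme point of
`convexHull ℝ S`. -/
theorem mem_extremePoints_convexHull_of_strict_min (S : Set (ℝ × ℝ)) (q : ℝ × ℝ) (hq : q ∈ S)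
    (c : ℝ) (h : ∀ r ∈ S, r ≠ q → q.2 + c * q.1 < r.2 + c * r.1) :
    q ∈ Set.extremePoints ℝ (convexHull ℝ S) := by
  have hT : convexHull ℝ S ⊆ {r | r = q ∨ q.2 + c * q.1 < r.2 + c * r.1} := by
    apply convexHull_min
    · intro r hr
      by_cases hrq : r = q
      · exact Or.inl hrq
      · exact Or.inr (h r hr hrq)
    · rw [convex_iff_forall_pos]
      rintro u hu v hv a b ha hb hab
      have ha' : a = 1 - b := by linarith
      simp only [Set.mem_ofPred_eq, Prod.fst_add, Prod.snd_add, Prod.smul_fst, Prod.smul_snd,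
        smul_eq_mul] at hu hv ⊢
      rcases hu with rfl | hu
      · rcases hv with rfl | hv
        · left
          rw [← add_smul, hab, one_smul]
        · right
          subst ha'
          nlinarith [mul_pos hb (sub_pos.2 hv)]
      · right
        have h1 := mul_pos ha (sub_pos.2 hu)
        have h2 : 0 ≤ b * ((v.2 + c * v.1) - (q.2 + c * q.1)) := by
          rcases hv with rfl | hv
          · simp
          · exact (mul_pos hb (sub_pos.2 hv)).le
        subst ha'
        nlinarith
  rw [mem_extremePoints]
  refine ⟨subset_convexHull ℝ S hq, ?_⟩
  rintro u hu v hv ⟨a, b, ha, hb, hab, hz⟩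
  have h1 : a * u.1 + b * v.1 = q.1 := by simpa using congrArg Prod.fst hz
  have h2 : a * u.2 + b * v.2 = q.2 := by simpa using congrArg Prod.snd hz
  have h3 : a * ((u.2 + c * u.1) - (q.2 + c * q.1)) +
      b * ((v.2 + c * v.1) - (q.2 + c * q.1)) = 0 := by
    linear_combination h2 + c * h1 - (q.2 + c * q.1) * hab
  rcases hT hu with hu | hu <;> rcases hT hv with hv | hv
  · exact ⟨hu, hv⟩
  · rw [hu] at h3
    nlinarith [mul_pos hb (sub_pos.2 hv)]
  · rw [hv] at h3
    nlinarith [mul_pos ha (sub_pos.2 hu)]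
  · nlinarith [mul_pos ha (sub_pos.2 hu), mul_pos hb (sub_pos.2 hv)]

/-- If `Γ` is a vertical shear lattice (generated by `(1,s)` and `(0,1)`) and
`q ∈ H_n ∩ (p+Γ)` satisfies `q_x > 1` and
`q_y < min {n q_x/(q_x² - 1), n/q_x + 1}`, then `q` is a vertex of
`conv(H_n ∩ (p+Γ))`. -/
theorem statement10 (n : ℝ) (hn : 0 < n) (p : ℝ × ℝ) (s : ℝ)
    (q : ℝ × ℝ)
    (hq : q ∈ Hset n ∩ translateSet p (latticeOf (1, s) (0, 1)))
    (hqx : 1 < q.1)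
    (hqy : q.2 < min (n * q.1 / (q.1 ^ 2 - 1)) (n / q.1 + 1)) :
    q ∈ Set.extremePoints ℝ
      (convexHull ℝ (Hset n ∩ translateSet p (latticeOf (1, s) (0, 1)))) := by
  obtain ⟨hqy1, hqy2⟩ := lt_min_iff.1 hqy
  have hd : 0 < q.1 ^ 2 - 1 := by nlinarith
  have hx : 0 < q.1 := by linarith
  refine mem_extremePoints_convexHull_of_strict_min _ q hq (n / (q.1 ^ 2 - 1)) ?_
  rintro r ⟨⟨hr1, hr2, hr3⟩, _, ⟨a, b, rfl⟩, hr⟩ hne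
  obtain ⟨_, _, ⟨a', b', rfl⟩, hq'⟩ := hq
  have er1 : p.1 + a = r.1 := by simpa using congrArg Prod.fst hr
  have er2 : p.2 + (a * s + b) = r.2 := by simpa using congrArg Prod.snd hr
  have eq1 : p.1 + a' = q.1 := by simpa using congrArg Prod.fst hq'
  have eq2 : p.2 + (a' * s + b') = q.2 := by simpa using congrArg Prod.snd hq'
  set c := n / (q.1 ^ 2 - 1) with hc
  have hcpos : 0 < c := div_pos hn hd
  have hcn : c * (q.1 ^ 2 - 1) = n := div_mul_cancel₀ n hd.ne'
  have hqc : q.2 < c * q.1 := by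
    rwa [mul_div_right_comm] at hqy1
  have hrpos : 0 < r.1 := by
    rcases hr1.lt_or_eq with h | h
    · exact h
    · rw [← h, zero_mul] at hr3
      linarith
  by_cases haa : a = a'
  · subst haa
    have hx1 : r.1 = q.1 := by linarith
    have hbb : b' < b := by
      by_contra! hle
      rcases hle.lt_or_eq with hlt | heq
      · have hle' : (b : ℝ) + 1 ≤ b' := by exact_mod_cast hlt
        have hdiv : n / q.1 ≤ r.2 := by
          rw [div_le_iff₀ hx, ← hx1]
          linarith
        linarith
      · subst heq
        exact hne (Prod.ext hx1 (by linarith))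
    have hbb' : (b' : ℝ) < b := by exact_mod_cast hbb
    rw [hx1]
    linarith
  · have hsq : 1 ≤ (r.1 - q.1) ^ 2 := by
      have hi : 1 ≤ (a - a') ^ 2 := by
        have : 0 < (a - a') ^ 2 := by
          have := sub_ne_zero.2 haa
          positivity
        omega
      have hi' : (1 : ℝ) ≤ (a - a') ^ 2 := by exact_mod_cast hi
      rw [← er1, ← eq1]
      convert hi' using 2
      ring
    -- `r` lies on or above the chord, since `r.1 * (2 * q.1 - r.1) = q.1 ^ 2 - (r.1 - q.1) ^ 2`.
    have hchord : c * (2 * q.1 - r.1) ≤ r.2 := by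
      refine le_of_mul_le_mul_left ?_ hrpos
      nlinarith [mul_nonneg hcpos.le (sub_nonneg.2 hsq)]
    linarith

end
end

section
/- Let n ∈ ℝ_{>0}, p ∈ ℝ², and let Γ be a vertical shear lattice. Then each of the ⌊n^{1/3}⌋ leftmost vertical lines of p+Γ that intersect the hyperbola xy = n in the open positive quadrant contains a vertex of conv(H_n ∩ (p+Γ)). -/
/-!
The lowest lattice point `P = (c, y₀)` of `H_n` on the line `x = c` is exposed by an explicit
linear functional. At most `⌊n^(1/3)⌋ - 1` lines lie strictly between `0` and `c`, and consecutive
lines are at distance `1`, so `c ≤ n^(1/3)`, i.e. `c³ ≤ n` (`cube_le_of_ncard_lt`).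

Take `F (x, y) = y + (n/c² + 1/c) x`. If `(x, y) ∈ H_n` lies on another lattice line, then
`|x - c| ≥ 1`, and `c³ ≤ n` gives `F (x, y) ≥ F (c, n/c) + 1` (`functional_gap`). Since `P` is the
lowest point on its line, `y₀ < n/c + 1`, so `F P` is strictly smaller. Hence `P` is the unique
minimiser of `F` on `H_n ∩ (p + Γ)`, and therefore an extreme point of the convex hull
(`mem_extremePoints_convexHull_of_unique_min`).
-/

noncomputable section

lemma mem_translate_shear {p q : ℝ × ℝ} {s : ℝ} :
    q ∈ translateSet p (latticeOf (1, s) (0, 1)) ↔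
      ∃ a b : ℤ, q.1 = p.1 + a ∧ q.2 = p.2 + a * s + b := by
  constructor
  · rintro ⟨_, ⟨a, b, rfl⟩, rfl⟩
    exact ⟨a, b, by simp, by simp [add_assoc]⟩
  · rintro ⟨a, b, h1, h2⟩
    refine ⟨_, ⟨a, b, rfl⟩, ?_⟩
    ext
    · simp [h1]
    · simp [h2, add_assoc]

lemma mem_extremePoints_convexHull_of_unique_min {S : Set (ℝ × ℝ)} {P : ℝ × ℝ} (hP : P ∈ S)
    (F : ℝ × ℝ →ₗ[ℝ] ℝ) (hF : ∀ q ∈ S, q = P ∨ F P < F q) :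
    P ∈ Set.extremePoints ℝ (convexHull ℝ S) := by
  have hK : ∀ q ∈ convexHull ℝ S, q = P ∨ F P < F q := by
    have hconv : Convex ℝ {q | q = P ∨ F P < F q} := by
      rw [convex_iff_forall_pos]
      intro x hx y hy a b ha hb hab
      simp only [Set.mem_ofPred_eq, map_add, map_smul, smul_eq_mul] at *
      have hb' : b = 1 - a := by linarith
      rcases hx with rfl | hx <;> rcases hy with rfl | hy
      · left
        rw [← add_smul, hab, one_smul]
      · right
        subst hb'
        nlinarith
      · right
        subst hb'
        nlinarith
      · right
        subst hb'
        nlinarith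
    exact fun q hq => convexHull_min hF hconv hq
  rw [mem_extremePoints]
  refine ⟨subset_convexHull ℝ S hP, ?_⟩
  rintro x hx y hy ⟨a, b, ha, hb, hab, hxy⟩
  have hE : a * F x + b * F y = F P := by rw [← hxy]; simp
  have hb' : b = 1 - a := by linarith
  subst hb'
  rcases hK x hx with hx' | hx' <;> rcases hK y hy with hy' | hy'
  · exact ⟨hx', hy'⟩
  · subst hx'
    nlinarith
  · subst hy'
    nlinarith
  · nlinarith

/-- On a line at distance at least `1` from `x = c`, the functional `y + (n/c² + 1/c) x` exceeds its
value at the hyperbola point `(c, n/c)` by at least `1`. With `t = x - c`, after clearing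
denominators this is `n t² + c t x ≥ c² x`, and `c³ ≤ n` bounds the difference of the two sides
below by `c³ (t² - 1) + c t²`. -/
lemma functional_gap {n c x y : ℝ} (hc : 0 < c) (hcn : c ^ 3 ≤ n) (hx : 0 < x)
    (hxy : n ≤ x * y) (ht : 1 ≤ (x - c) ^ 2) :
    n / c + (n / c ^ 2 + 1 / c) * c + 1 ≤ y + (n / c ^ 2 + 1 / c) * x := by
  have hy : n / x ≤ y := by
    rw [div_le_iff₀ hx]
    linarith
  have key : 0 ≤ n * (x - c) ^ 2 + c * (x - c) * x - c ^ 2 * x := by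
    have h1 := mul_le_mul_of_nonneg_right hcn (sq_nonneg (x - c))
    have h2 := mul_le_mul_of_nonneg_left ht (pow_pos hc 3).le
    have h3 := mul_nonneg hc.le (sq_nonneg (x - c))
    nlinarith
  have hid : n / x + (n / c ^ 2 + 1 / c) * x - (n / c + (n / c ^ 2 + 1 / c) * c + 1)
      = (n * (x - c) ^ 2 + c * (x - c) * x - c ^ 2 * x) / (c ^ 2 * x) := by
    field_simp
    ring
  have : 0 ≤ (n * (x - c) ^ 2 + c * (x - c) * x - c ^ 2 * x) / (c ^ 2 * x) := by positivity
  linarith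

/-- The lattice lines strictly between `0` and `c` are `x = c - 1, …, c - (⌈c⌉ - 1)`, so fewer than
`⌊n^(1/3)⌋` of them means `⌈c⌉ ≤ n^(1/3)`. -/
lemma cube_le_of_ncard_lt {n c : ℝ} (hn : 0 < n) (hc : 0 < c) {p : ℝ × ℝ} {s : ℝ} {a : ℤ}
    (ha : c = p.1 + a)
    (hleft : (({c' : ℝ | 0 < c' ∧ c' < c ∧
        ∃ q ∈ translateSet p (latticeOf (1, s) (0, 1)), q.1 = c'}).ncard : ℤ) <
      ⌊n ^ ((1 : ℝ) / 3)⌋) : c ^ 3 ≤ n := by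
  have hset : {c' : ℝ | 0 < c' ∧ c' < c ∧
      ∃ q ∈ translateSet p (latticeOf (1, s) (0, 1)), q.1 = c'} =
      (fun i : ℕ => c - (i + 1)) '' (Finset.range (⌈c⌉₊ - 1) : Set ℕ) := by
    ext x
    simp only [Set.mem_ofPred_eq, Set.mem_image, Finset.coe_range, Set.mem_Iio]
    constructor
    · rintro ⟨h0, h1, q, hq, rfl⟩
      obtain ⟨a', b', e1, -⟩ := mem_translate_shear.1 hq
      have hlt : a' < a := by
        have : (a' : ℝ) < a := by linarith
        exact_mod_cast this
      obtain ⟨i, hi⟩ := Int.eq_ofNat_of_zero_le (show 0 ≤ a - a' - 1 by omega)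
      have hi' : (a : ℝ) - a' - 1 = i := by exact_mod_cast hi
      refine ⟨i, ?_, by linarith⟩
      have : i + 1 < ⌈c⌉₊ := Nat.lt_ceil.2 (by push_cast; linarith)
      omega
    · rintro ⟨i, hi, rfl⟩
      have : ((i + 1 : ℕ) : ℝ) < c := Nat.lt_ceil.1 (by omega)
      push_cast at this
      refine ⟨by linarith, by linarith, (c - (i + 1), p.2 + ((a - i - 1 : ℤ) : ℝ) * s), ?_, rfl⟩
      exact mem_translate_shear.2 ⟨a - i - 1, 0, by push_cast; linarith, by simp⟩
  have hinj : Function.Injective (fun i : ℕ => c - ((i : ℝ) + 1)) := by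
    intro i j h
    have : (i : ℝ) = j := by
      simp only at h
      linarith
    exact_mod_cast this
  rw [hset, Set.ncard_image_of_injective _ hinj, Set.ncard_coe_finset, Finset.card_range] at hleft
  have hpos : 0 < ⌈c⌉₊ := Nat.ceil_pos.2 hc
  have h1 : (⌈c⌉₊ : ℤ) ≤ ⌊n ^ ((1 : ℝ) / 3)⌋ := by omega
  have h2 : (⌈c⌉₊ : ℝ) ≤ n ^ ((1 : ℝ) / 3) := by
    have := Int.le_floor.1 h1
    exact_mod_cast this
  have h3 : c ≤ n ^ ((1 : ℝ) / 3) := (Nat.le_ceil c).trans h2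
  calc c ^ 3 ≤ (n ^ ((1 : ℝ) / 3)) ^ 3 := by gcongr
    _ = n := by
      rw [← Real.rpow_natCast, ← Real.rpow_mul hn.le]
      norm_num

/-- For a vertical shear lattice `Γ` (generated by `(1,s)` and `(0,1)`), each of the
`⌊n^(1/3)⌋` leftmost vertical lines of `p+Γ` meeting the hyperbola `xy = n` in the open
positive quadrant (i.e. with `x`-coordinate `> 0`) contains a vertex of
`conv(H_n ∩ (p+Γ))`. -/
theorem statement11 (n : ℝ) (hn : 0 < n) (p : ℝ × ℝ) (s : ℝ)
    (cx : ℝ) (hcx : 0 < cx)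
    (hline : ∃ q ∈ translateSet p (latticeOf (1, s) (0, 1)), q.1 = cx)
    (hleft : (({c' : ℝ | 0 < c' ∧ c' < cx ∧
        ∃ q ∈ translateSet p (latticeOf (1, s) (0, 1)), q.1 = c'}).ncard : ℤ) <
      ⌊n ^ ((1 : ℝ) / 3)⌋) :
    ∃ q ∈ Set.extremePoints ℝ
        (convexHull ℝ (Hset n ∩ translateSet p (latticeOf (1, s) (0, 1)))),
      q.1 = cx := by
  obtain ⟨q₀, hq₀, hq₀c⟩ := hline
  obtain ⟨a, b₀, ha, -⟩ := mem_translate_shear.1 hq₀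
  rw [hq₀c] at ha
  have hcn := cube_le_of_ncard_lt hn hcx ha hleft
  -- The lowest lattice point of `H_n` on the line `x = cx`.
  set z : ℝ := p.2 + a * s with hz
  set b : ℤ := ⌈n / cx - z⌉ with hb
  have hb1 : n / cx ≤ z + b := by
    have := Int.le_ceil (n / cx - z)
    linarith
  have hb2 : z + b < n / cx + 1 := by
    have := Int.ceil_lt_add_one (n / cx - z)
    linarith
  refine ⟨(cx, z + b), ?_, rfl⟩
  have hnc : 0 < n / cx := by positivity
  refine mem_extremePoints_convexHull_of_unique_min (P := (cx, z + b))
    ⟨⟨hcx.le, by simp only; linarith, ?_⟩, mem_translate_shear.2 ⟨a, b, ha, rfl⟩⟩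
    (LinearMap.snd ℝ ℝ ℝ + (n / cx ^ 2 + 1 / cx) • LinearMap.fst ℝ ℝ ℝ) ?_
  · rw [div_le_iff₀ hcx] at hb1
    simp only
    linarith
  · rintro ⟨x, y⟩ ⟨⟨hx, hy, hxy⟩, hq⟩
    obtain ⟨a', b', e1, e2⟩ := mem_translate_shear.1 hq
    simp only at hx hy hxy e1 e2
    have hx0 : 0 < x := by
      rcases hx.eq_or_lt with h | h
      · rw [← h] at hxy
        linarith
      · exact h
    simp only [LinearMap.add_apply, LinearMap.smul_apply, LinearMap.fst_apply,
      LinearMap.snd_apply, smul_eq_mul, Prod.mk.injEq]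
    by_cases haa : a' = a
    · subst haa
      have hxc : x = cx := by linarith
      subst hxc
      have hle : b ≤ b' := by
        rw [hb, Int.ceil_le, sub_le_iff_le_add, div_le_iff₀ hx0]
        rw [e2] at hxy
        linarith
      rcases hle.eq_or_lt with h | h
      · left
        exact ⟨rfl, by rw [e2, h]⟩
      · right
        have : (b : ℝ) < b' := by exact_mod_cast h
        linarith
    · right
      have ht : 1 ≤ (x - cx) ^ 2 := by
        have h1 : (1 : ℤ) ≤ (a' - a) ^ 2 := by
          have : 0 < (a' - a) ^ 2 := by
            have := sub_ne_zero.2 haa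
            positivity
          omega
        have h2 : x - cx = ((a' - a : ℤ) : ℝ) := by
          push_cast
          linarith
        rw [h2]
        exact_mod_cast h1
      have := functional_gap hcx hcn hx0 hxy ht
      linarith

end
end

section
/- Let a, b, c ∈ ℤ with Δ := √(b² − 4ac) a positive integer, let x₀, y₀ ∈ ℝ and n ∈ ℝ, n ≠ 0, and let h be the hyperbola {(x,y) : a(x−x₀)² + b(x−x₀)(y−y₀) + c(y−y₀)² = n}. Then there exists an invertible affine transformation of ℝ² sending h to the hyperbola {(x,y) : xy = |n|} and sending ℤ² to p + Λ, where p ∈ ℝ² and Λ ⊆ ℤ² is a sublattice with det Λ = Δ. Moreover, if gcd(a,b,c) = 1 then Λ is reduced. -/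
/-!
A binary quadratic form over `ℤ` whose discriminant is a nonzero square `Δ²` splits over `ℤ` as
`(p x + q y)(r x + s y)` with `p s - q r = Δ` (`exists_factorization`): with `u = (b + Δ)/2` and
`t = (b - Δ)/2` one has `u + t = b` and `u t = a c`, and dividing the last equation by `gcd(a, u)`
gives the four coefficients. Flipping the sign of the first factor when `n < 0`, the affine map
`(x, y) ↦ (p (x - x₀) + q (y - y₀), r (x - x₀) + s (y - y₀))` sends the hyperbola to `xy = |n|`
and `ℤ²` to a translate of the lattice spanned by `(p, r)` and `(q, s)`, whose determinant is `±Δ`.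
The coordinate projections of this lattice are `pℤ + qℤ` and `rℤ + sℤ`. Since `gcd(p, q)` and
`gcd(r, s)` divide each of `a, b, c`, both projections are `ℤ` when `gcd(a, b, c) = 1`.
-/

noncomputable section

/-- A sublattice `Λ ⊆ ℤ²` is reduced if both coordinate projections of `Λ` equal `ℤ`. -/
def IsReducedLattice (Λ : Set (ℝ × ℝ)) : Prop :=
  Prod.fst '' Λ = Set.range (fun a : ℤ => (a : ℝ)) ∧
  Prod.snd '' Λ = Set.range (fun a : ℤ => (a : ℝ))

/-- A solution of `u t = a c` in integers comes from a `2 × 2` array of integers whose row and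
column products are `a, c` and `u, t`. -/
lemma exists_four_numbers (a c u t : ℤ) (h : u * t = a * c) :
    ∃ p q r s : ℤ, a = p * r ∧ c = q * s ∧ u = p * s ∧ t = q * r := by
  by_cases ha : a = 0 ∧ u = 0
  · exact ⟨0, 1, t, c, by simp [ha.1], by simp, by simp [ha.2], by simp⟩
  · have hg : 0 < Int.gcd a u := Int.gcd_pos_iff.2 (by tauto)
    obtain ⟨r, s, hrs, hr, hs⟩ := Int.exists_gcd_one hg
    have hg' : (Int.gcd a u : ℤ) ≠ 0 := by exact_mod_cast hg.ne'
    generalize (Int.gcd a u : ℤ) = g at *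
    have h1 : s * t = r * c := by
      apply mul_left_cancel₀ hg'
      rw [hr, hs] at h
      linear_combination h
    have hdvd : r ∣ t :=
      (Int.isCoprime_iff_gcd_eq_one.2 hrs).dvd_of_dvd_mul_left ⟨c, h1⟩
    obtain ⟨q, rfl⟩ := hdvd
    by_cases hr0 : r = 0
    · -- Here `s = ±1`, so `q` must be read off from `c` instead of from `t = 0`.
      subst hr0
      have hs1 : s * s = 1 := by
        have : s.natAbs = 1 := by simpa using hrs
        rcases Int.natAbs_eq s with h | h <;> rw [h, this] <;> norm_num
      exact ⟨g, c * s, 0, s, by linarith, by linear_combination (-c) * hs1, by linarith, by ring⟩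
    · refine ⟨g, q, r, s, by linarith, ?_, by linarith, by ring⟩
      apply mul_left_cancel₀ hr0
      linear_combination -h1

lemma exists_factorization (a b c Δ : ℤ) (h : Δ ^ 2 = b ^ 2 - 4 * a * c) :
    ∃ p q r s : ℤ, a = p * r ∧ b = p * s + q * r ∧ c = q * s ∧ p * s - q * r = Δ := by
  have hpar : Even (b + Δ) := by
    have h2 : Even ((b + Δ) * (b - Δ)) := ⟨2 * a * c, by linear_combination -h⟩
    rcases Int.even_mul.1 h2 with h3 | h3
    · exact h3
    · have : b + Δ = (b - Δ) + 2 * Δ := by ring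
      rw [this]
      exact h3.add (even_two_mul Δ)
  obtain ⟨u, hu⟩ := hpar
  obtain ⟨p, q, r, s, h1, h2, h3, h4⟩ := exists_four_numbers a c u (b - u) (by
    have hb : Δ = 2 * u - b := by linarith
    subst hb
    linarith)
  exact ⟨p, q, r, s, h1, by linarith, h2, by linarith⟩

lemma exists_affineEquiv (p q r s x₀ y₀ : ℝ) (hD : p * s - q * r ≠ 0) :
    ∃ f : (ℝ × ℝ) ≃ᵃ[ℝ] ℝ × ℝ, ∀ z : ℝ × ℝ,
      f z = (p * (z.1 - x₀) + q * (z.2 - y₀), r * (z.1 - x₀) + s * (z.2 - y₀)) := by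
  let L : (ℝ × ℝ) ≃ₗ[ℝ] ℝ × ℝ :=
    { toFun := fun z => (p * z.1 + q * z.2, r * z.1 + s * z.2)
      map_add' := fun z z' => by ext <;> simp <;> ring
      map_smul' := fun k z => by ext <;> simp <;> ring
      invFun := fun z =>
        ((s * z.1 - q * z.2) / (p * s - q * r), (p * z.2 - r * z.1) / (p * s - q * r))
      left_inv := fun z => by
        ext
        · simp only
          rw [div_eq_iff hD]
          ring
        · simp only
          rw [div_eq_iff hD]
          ring
      right_inv := fun z => by
        ext
        · simp only
          rw [← mul_div_assoc, ← mul_div_assoc, ← add_div, div_eq_iff hD]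
          ring
        · simp only
          rw [← mul_div_assoc, ← mul_div_assoc, ← add_div, div_eq_iff hD]
          ring }
  refine ⟨(AffineEquiv.constVAdd ℝ (ℝ × ℝ) (-x₀, -y₀)).trans L.toAffineEquiv, fun z => ?_⟩
  simp [L]
  constructor <;> ring

/-- Bézout's identity, stated in `ℝ`: coprime `p, q` satisfy `ℤ ⊆ pℤ + qℤ`. -/
lemma range_combination {p q : ℤ} (h : IsCoprime p q) (x : ℤ) :
    ∃ i j : ℤ, (i : ℝ) * p + (j : ℝ) * q = x := by
  obtain ⟨i, j, hij⟩ := h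
  have hij' : (i : ℝ) * p + (j : ℝ) * q = 1 := by exact_mod_cast hij
  exact ⟨x * i, x * j, by push_cast; linear_combination (x : ℝ) * hij'⟩

lemma isReducedLattice_latticeOf {p q r s : ℤ} (h₁ : IsCoprime p q) (h₂ : IsCoprime r s) :
    IsReducedLattice (latticeOf ((p : ℝ), (r : ℝ)) ((q : ℝ), (s : ℝ))) := by
  constructor
  · ext x
    constructor
    · rintro ⟨_, ⟨i, j, rfl⟩, rfl⟩
      exact ⟨i * p + j * q, by simp⟩
    · rintro ⟨m, rfl⟩
      obtain ⟨i, j, hij⟩ := range_combination h₁ m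
      exact ⟨_, ⟨i, j, rfl⟩, by simpa using hij⟩
  · ext x
    constructor
    · rintro ⟨_, ⟨i, j, rfl⟩, rfl⟩
      exact ⟨i * r + j * s, by simp⟩
    · rintro ⟨m, rfl⟩
      obtain ⟨i, j, hij⟩ := range_combination h₂ m
      exact ⟨_, ⟨i, j, rfl⟩, by simpa using hij⟩

/-- Applied with `p, q` the coefficients of a linear factor of the form `(a, b, c)`: a linear factor
of a primitive form is primitive. -/
lemma isCoprime_of_dvd_coeffs {a b c p q : ℤ} (hg : Int.gcd a (Int.gcd b c) = 1)
    (h : ∀ d : ℤ, d ∣ p → d ∣ q → d ∣ a ∧ d ∣ b ∧ d ∣ c) : IsCoprime p q := by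
  rw [Int.isCoprime_iff_gcd_eq_one]
  obtain ⟨h1, h2, h3⟩ := h (Int.gcd p q) (Int.gcd_dvd_left ..) (Int.gcd_dvd_right ..)
  have h4 := Int.dvd_coe_gcd h1 (Int.dvd_coe_gcd h2 h3)
  rw [hg] at h4
  exact Nat.dvd_one.1 (by exact_mod_cast h4)

/-- The form may be factored up to the sign of `n`, so that the product of the two factors
takes the value `|n|` on the hyperbola. -/
lemma exists_signed_factorization (a b c Δ : ℤ) (h : Δ ^ 2 = b ^ 2 - 4 * a * c) (n : ℝ) :
    ∃ e p q r s : ℤ, e * e = 1 ∧ e * n = |n| ∧ e * a = p * r ∧ e * b = p * s + q * r ∧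
      e * c = q * s ∧ p * s - q * r = e * Δ := by
  obtain ⟨p, q, r, s, h1, h2, h3, h4⟩ := exists_factorization a b c Δ h
  rcases le_total 0 n with hn | hn
  · exact ⟨1, p, q, r, s, by simp, by simp [abs_of_nonneg hn], by simpa, by simpa, by simpa,
      by simpa⟩
  · exact ⟨-1, -p, -q, r, s, by simp, by simp [abs_of_nonpos hn], by linarith, by linarith,
      by linarith, by linarith⟩

/-- There is an invertible affine transformation of `ℝ²` sending the hyperbola `h` to
`{xy = |n|}` and sending `ℤ²` to `p + Λ`, where `Λ ⊆ ℤ²` is a sublattice with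
`det Λ = Δ`; moreover if `gcd(a,b,c) = 1` then `Λ` is reduced. -/
theorem statement12 (a b c Δ : ℤ) (hΔ : 0 < Δ)
    (hdisc : (Δ : ℝ) = Real.sqrt ((b : ℝ) ^ 2 - 4 * (a : ℝ) * (c : ℝ)))
    (x₀ y₀ n : ℝ) (hn : n ≠ 0) :
    ∃ (f : (ℝ × ℝ) ≃ᵃ[ℝ] ℝ × ℝ) (p v w : ℝ × ℝ),
      v.1 * w.2 - v.2 * w.1 ≠ 0 ∧
      latticeOf v w ⊆ intLattice ∧
      detOf v w = (Δ : ℝ) ∧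
      (f '' hypSet a b c x₀ y₀ n) = {q : ℝ × ℝ | q.1 * q.2 = |n|} ∧
      (f '' intLattice) = translateSet p (latticeOf v w) ∧
      (Int.gcd a (Int.gcd b c) = 1 → IsReducedLattice (latticeOf v w)) := by
  have hdiscZ : Δ ^ 2 = b ^ 2 - 4 * a * c := by
    have hpos : (0 : ℝ) < Δ := by exact_mod_cast hΔ
    have hnn : (0 : ℝ) ≤ (b : ℝ) ^ 2 - 4 * a * c := by
      rw [hdisc] at hpos
      exact (Real.sqrt_pos.1 hpos).le
    have : (Δ : ℝ) ^ 2 = (b : ℝ) ^ 2 - 4 * a * c := by rw [hdisc, Real.sq_sqrt hnn]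
    exact_mod_cast this
  obtain ⟨e, p, q, r, s, he, hen, h1, h2, h3, h4⟩ :=
    exists_signed_factorization a b c Δ hdiscZ n
  have heR : (e : ℝ) * e = 1 := by exact_mod_cast he
  have h1R : (e : ℝ) * a = p * r := by exact_mod_cast h1
  have h2R : (e : ℝ) * b = p * s + q * r := by exact_mod_cast h2
  have h3R : (e : ℝ) * c = q * s := by exact_mod_cast h3
  have h4R : (p : ℝ) * s - q * r = e * Δ := by exact_mod_cast h4
  have he0 : (e : ℝ) ≠ 0 := left_ne_zero_of_mul_eq_one heR
  have hΔR : (0 : ℝ) < Δ := by exact_mod_cast hΔ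
  have hD : (p : ℝ) * s - q * r ≠ 0 := by
    rw [h4R]
    exact mul_ne_zero he0 hΔR.ne'
  obtain ⟨f, hf⟩ := exists_affineEquiv p q r s x₀ y₀ hD
  refine ⟨f, f 0, ((p : ℝ), (r : ℝ)), ((q : ℝ), (s : ℝ)), ?_, ?_, ?_, ?_, ?_, ?_⟩
  · rwa [mul_comm (r : ℝ)]
  · rintro _ ⟨i, j, rfl⟩
    exact ⟨i * p + j * q, i * r + j * s, by simp⟩
  · have habs : |(e : ℝ)| = 1 := by
      have := abs_mul_abs_self (e : ℝ)
      nlinarith [abs_nonneg (e : ℝ)]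
    simp only [detOf]
    rw [mul_comm (r : ℝ), h4R, abs_mul, habs, one_mul, abs_of_pos hΔR]
  · have key : ∀ z : ℝ × ℝ, z ∈ hypSet a b c x₀ y₀ n ↔ (f z).1 * (f z).2 = |n| := by
      intro z
      have hmul : (f z).1 * (f z).2 = e * ((a : ℝ) * (z.1 - x₀) ^ 2
          + (b : ℝ) * (z.1 - x₀) * (z.2 - y₀) + (c : ℝ) * (z.2 - y₀) ^ 2) := by
        rw [hf]
        linear_combination -(z.1 - x₀) ^ 2 * h1R - (z.1 - x₀) * (z.2 - y₀) * h2R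
          - (z.2 - y₀) ^ 2 * h3R
      rw [hmul, ← hen, mul_right_inj' he0]
      rfl
    ext z
    constructor
    · rintro ⟨z, hz, rfl⟩
      exact (key z).1 hz
    · intro hz
      exact ⟨f.symm z, (key _).2 (by simpa using hz), by simp⟩
  · have hlat : ∀ i j : ℤ, f ((i : ℝ), (j : ℝ)) =
        f 0 + ((i : ℝ) • ((p : ℝ), (r : ℝ)) + (j : ℝ) • ((q : ℝ), (s : ℝ))) := by
      intro i j
      rw [hf, hf]
      ext <;> simp <;> ring
    ext z
    constructor
    · rintro ⟨_, ⟨i, j, rfl⟩, rfl⟩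
      exact ⟨_, ⟨i, j, rfl⟩, (hlat i j).symm⟩
    · rintro ⟨_, ⟨i, j, rfl⟩, rfl⟩
      exact ⟨_, ⟨i, j, rfl⟩, hlat i j⟩
  · intro hg
    -- As `e` is its own inverse, divisors of `e * m` divide `m`.
    have hdiv : ∀ d m : ℤ, d ∣ e * m → d ∣ m := fun d m hd => by
      have : m = e * (e * m) := by rw [← mul_assoc, he, one_mul]
      rw [this]
      exact hd.mul_left e
    apply isReducedLattice_latticeOf
    · refine isCoprime_of_dvd_coeffs hg fun d hp hq => ⟨hdiv d a ?_, hdiv d b ?_, hdiv d c ?_⟩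
      · rw [h1]
        exact hp.mul_right r
      · rw [h2]
        exact (hp.mul_right s).add (hq.mul_right r)
      · rw [h3]
        exact hq.mul_right s
    · refine isCoprime_of_dvd_coeffs hg fun d hr hs => ⟨hdiv d a ?_, hdiv d b ?_, hdiv d c ?_⟩
      · rw [h1]
        exact hr.mul_left p
      · rw [h2]
        exact (hs.mul_left p).add (hr.mul_left q)
      · rw [h3]
        exact hs.mul_left q

end
end

section
/- Let n ∈ ℝ_{>0}, let Λ ⊂ ℚ² be a rational lattice, and let p be a vertex of conv(H_n ∩ (p+Λ)). If Nextpt(p) ≠ ∞, then Nextpt(p) is the next vertex of conv(H_n ∩ (p+Λ)), i.e., the vertex whose x-coordinate is the minimum of the x-coordinates of all vertices with x-coordinate strictly greater than p_x. -/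
/-!
Write `S = H_n ∩ (p + Λ)` and `C = conv S`. Rationality of `Λ` provides vectors `(0, Y)` and `(X, 0)` in
`Λ` with `X, Y > 0`. Adding `(0, Y)` preserves `S`, hence `C`, so an extreme point of `C` is the
lowest point of `C` on its vertical line (`extreme_le_of_same_fst`). This yields:

* `m = Minsl(p)` has positive first coordinate: `m` cannot point straight up, since `(X, 0)` has smaller
  slope, nor straight down, since `p + m` would lie below the vertex `p`.
* All of `S` lies weakly above the line `ℓ` through `p` in direction `m`. To the right of `p` this is the
  minimality of the slope; a point of `S` to the left of `p` and strictly below `ℓ` would, joined to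
  `p + m`, give a point of `C` strictly below `p`.
* As `m` is primitive, the points of `S` on `ℓ` are integer translates `p + j m`, so `Nextpt(p)` is the
  rightmost of them. Thus `S` lies in the convex set of points that are strictly above `ℓ`, or on `ℓ`
  and not to the right of `Nextpt(p)`; `Nextpt(p)` is an extreme point of that set
  (`convex_lexHalfPlane`, `extreme_of_lexHalfPlane`), hence of `C`.
* An extreme point strictly between `p` and `Nextpt(p)` in first coordinate would lie weakly above `ℓ`
  and, by the lowest-point property, on the open segment from `p` to `Nextpt(p)`, which is impossible.
-/

noncomputable section

/-- A point of `ℝ²` with rational coordinates. -/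
def ratPoint (q : ℝ × ℝ) : Prop := ∃ a b : ℚ, q = ((a : ℝ), (b : ℝ))

/-- Slope comparison for vectors with nonnegative `x`-coordinate (where vertical
vectors pointing down have slope `-∞` and vertical vectors pointing up `+∞`):
`slope u ≤ slope v` iff `u_y v_x ≤ v_y u_x`. -/
def slopeLE (u v : ℝ × ℝ) : Prop := u.2 * v.1 ≤ v.2 * u.1

/-- `ms = Minsl(p)`: the primitive nonzero vector of smallest slope in
`(H_n ∩ (p+Λ) - p) ∩ {x ≥ 0} ⊆ Λ`. -/
def IsMinsl (n : ℝ) (Λ : Set (ℝ × ℝ)) (p ms : ℝ × ℝ) : Prop :=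
  ms ∈ Λ ∧ ms ≠ 0 ∧ 0 ≤ ms.1 ∧ p + ms ∈ Hset n ∧
  (∀ u ∈ Λ, ∀ k : ℤ, 2 ≤ k → ms ≠ (k : ℝ) • u) ∧
  ∀ u ∈ Λ, u ≠ 0 → 0 ≤ u.1 → p + u ∈ Hset n → slopeLE ms u

/-! ### Axis-parallel lattice vectors -/

lemma exists_int_relation (r s : ℚ) (h : r ≠ 0 ∨ s ≠ 0) :
    ∃ a b : ℤ, (a ≠ 0 ∨ b ≠ 0) ∧ (a : ℝ) * (r : ℝ) + (b : ℝ) * (s : ℝ) = 0 := by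
  refine ⟨s.num * r.den, -(r.num * s.den), ?_, ?_⟩
  · have hr := r.den_nz
    have hs := s.den_nz
    rcases h with h | h
    · right
      simp [h]
    · left
      simp [h]
  · have key : ((s.num * r.den : ℤ) : ℚ) * r + ((-(r.num * s.den) : ℤ) : ℚ) * s = 0 := by
      push_cast
      linear_combination (s.num : ℚ) * Rat.mul_den_eq_num r - (r.num : ℚ) * Rat.mul_den_eq_num s
    exact_mod_cast key

lemma exists_pos_vertical (v w : ℝ × ℝ) (hv : ratPoint v) (hw : ratPoint w)
    (hvw : v.1 * w.2 - v.2 * w.1 ≠ 0) :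
    ∃ Y : ℝ, 0 < Y ∧ ((0 : ℝ), Y) ∈ latticeOf v w := by
  obtain ⟨r, r', rfl⟩ := hv
  obtain ⟨s, s', rfl⟩ := hw
  simp only at hvw
  obtain ⟨a, b, hab, h0⟩ := exists_int_relation r s (by
    by_contra! h
    simp [h.1, h.2] at hvw)
  have hY : (a : ℝ) * r' + b * s' ≠ 0 := by
    intro hY
    have ha : (a : ℝ) * (r * s' - r' * s) = 0 := by linear_combination s' * h0 - s * hY
    have hb : (b : ℝ) * (r * s' - r' * s) = 0 := by linear_combination r * hY - r' * h0
    have ha' : (a : ℝ) = 0 := (mul_eq_zero.1 ha).resolve_right hvw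
    have hb' : (b : ℝ) = 0 := (mul_eq_zero.1 hb).resolve_right hvw
    have ha'' : a = 0 := by exact_mod_cast ha'
    have hb'' : b = 0 := by exact_mod_cast hb'
    simp [ha'', hb''] at hab
  rcases lt_or_gt_of_ne hY with h | h
  · refine ⟨-((a : ℝ) * r' + b * s'), by linarith, -a, -b, ?_⟩
    ext
    · simp
      linarith
    · simp
      ring
  · refine ⟨(a : ℝ) * r' + b * s', h, a, b, ?_⟩
    ext
    · simp
      linarith
    · simp

lemma exists_pos_horizontal (v w : ℝ × ℝ) (hv : ratPoint v) (hw : ratPoint w)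
    (hvw : v.1 * w.2 - v.2 * w.1 ≠ 0) :
    ∃ X : ℝ, 0 < X ∧ (X, (0 : ℝ)) ∈ latticeOf v w := by
  have hv' : ratPoint v.swap := by
    obtain ⟨a, b, rfl⟩ := hv
    exact ⟨b, a, rfl⟩
  have hw' : ratPoint w.swap := by
    obtain ⟨a, b, rfl⟩ := hw
    exact ⟨b, a, rfl⟩
  obtain ⟨X, hX, a, b, h⟩ := exists_pos_vertical v.swap w.swap hv' hw' (by
    simp only [Prod.fst_swap, Prod.snd_swap]
    intro h
    exact hvw (by linarith))
  refine ⟨X, hX, a, b, ?_⟩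
  have h1 := congrArg Prod.fst h
  have h2 := congrArg Prod.snd h
  ext
  · simpa using h2
  · simpa using h1

/-! ### Lattice operations and primitive vectors -/

lemma latticeOf_add_s15 {v w x y : ℝ × ℝ} (hx : x ∈ latticeOf v w) (hy : y ∈ latticeOf v w) :
    x + y ∈ latticeOf v w := by
  obtain ⟨a, b, rfl⟩ := hx
  obtain ⟨c, d, rfl⟩ := hy
  refine ⟨a + c, b + d, ?_⟩
  push_cast
  module

lemma latticeOf_zsmul {v w x : ℝ × ℝ} (k : ℤ) (hx : x ∈ latticeOf v w) :
    (k : ℝ) • x ∈ latticeOf v w := by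
  obtain ⟨a, b, rfl⟩ := hx
  refine ⟨k * a, k * b, ?_⟩
  push_cast
  module

lemma latticeOf_coords_unique {v w : ℝ × ℝ} (hvw : v.1 * w.2 - v.2 * w.1 ≠ 0) {a b c d : ℝ}
    (h : a • v + b • w = c • v + d • w) : a = c ∧ b = d := by
  have h1 := congrArg Prod.fst h
  have h2 := congrArg Prod.snd h
  simp only [Prod.fst_add, Prod.snd_add, Prod.smul_fst, Prod.smul_snd, smul_eq_mul] at h1 h2
  constructor
  · apply mul_right_cancel₀ hvw
    linear_combination w.2 * h1 - w.1 * h2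
  · apply mul_right_cancel₀ hvw
    linear_combination v.1 * h2 - v.2 * h1

/-- The coordinates `a, b` of a primitive vector `m` are coprime, so a Bézout relation turns a real
factor `c` with `c • m ∈ Λ` into an integer. -/
lemma int_of_smul_primitive {v w m : ℝ × ℝ} (hvw : v.1 * w.2 - v.2 * w.1 ≠ 0)
    (hm : m ∈ latticeOf v w) (hm0 : m ≠ 0)
    (hprim : ∀ u ∈ latticeOf v w, ∀ k : ℤ, 2 ≤ k → m ≠ (k : ℝ) • u)
    {c : ℝ} (hc : c • m ∈ latticeOf v w) : ∃ j : ℤ, c = j := by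
  obtain ⟨a, b, rfl⟩ := hm
  obtain ⟨a', b', h⟩ := hc
  have hco : c * a = a' ∧ c * b = b' := by
    apply latticeOf_coords_unique hvw
    rw [← h]
    module
  have hg : Int.gcd a b = 1 := by
    by_contra hne
    have hg0 : Int.gcd a b ≠ 0 := by
      intro h0
      obtain ⟨h1, h2⟩ := Int.gcd_eq_zero_iff.1 h0
      apply hm0
      simp [h1, h2]
    obtain ⟨x, hx⟩ := Int.gcd_dvd_left a b
    obtain ⟨y, hy⟩ := Int.gcd_dvd_right a b
    apply hprim ((x : ℝ) • v + (y : ℝ) • w) ⟨x, y, rfl⟩ (Int.gcd a b) (by omega)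
    have hxr : (a : ℝ) = ((Int.gcd a b : ℤ) : ℝ) * x := by exact_mod_cast hx
    have hyr : (b : ℝ) = ((Int.gcd a b : ℤ) : ℝ) * y := by exact_mod_cast hy
    rw [smul_add, smul_smul, smul_smul, ← hxr, ← hyr]
  have hbez := Int.gcd_eq_gcd_ab a b
  rw [hg] at hbez
  have hbez' : (1 : ℝ) = a * (Int.gcdA a b) + b * (Int.gcdB a b) := by exact_mod_cast hbez
  refine ⟨a' * Int.gcdA a b + b' * Int.gcdB a b, ?_⟩
  push_cast
  linear_combination c * hbez' + (Int.gcdA a b : ℝ) * hco.1 + (Int.gcdB a b : ℝ) * hco.2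

/-! ### Convexity -/

lemma Hset_add {n : ℝ} {q d : ℝ × ℝ} (hq : q ∈ Hset n) (h1 : 0 ≤ d.1) (h2 : 0 ≤ d.2) :
    q + d ∈ Hset n := by
  obtain ⟨hq1, hq2, hq3⟩ := hq
  refine ⟨add_nonneg hq1 h1, add_nonneg hq2 h2, ?_⟩
  simp only [Prod.fst_add, Prod.snd_add]
  nlinarith [mul_nonneg hq1 h2, mul_nonneg h1 hq2, mul_nonneg h1 h2]

/-- If `S` is stable under an upward translation, an extreme point of `conv S` is the lowest point of
`conv S` on its vertical line: otherwise it would lie strictly between a lower point and its own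
upward translate. -/
lemma extreme_le_of_same_fst {S : Set (ℝ × ℝ)} {Y : ℝ} (hY : 0 < Y)
    (hS : ∀ q ∈ S, q + (0, Y) ∈ S) {q t : ℝ × ℝ}
    (hq : q ∈ Set.extremePoints ℝ (convexHull ℝ S)) (ht : t ∈ convexHull ℝ S)
    (h1 : t.1 = q.1) : q.2 ≤ t.2 := by
  have hup : convexHull ℝ S ⊆ (fun z => z + ((0 : ℝ), Y)) ⁻¹' convexHull ℝ S :=
    convexHull_min (fun z hz => subset_convexHull ℝ S (hS z hz))
      ((convex_convexHull ℝ S).translate_preimage_left _)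
  by_contra! hlt
  have hd : 0 < q.2 - t.2 + Y := by linarith
  have hmem : q ∈ openSegment ℝ t (q + (0, Y)) := by
    refine ⟨Y / (q.2 - t.2 + Y), (q.2 - t.2) / (q.2 - t.2 + Y), by positivity,
      div_pos (by linarith) hd, by field_simp; ring, ?_⟩
    ext
    · simp [h1]
      field_simp
      ring
    · simp
      field_simp
      ring
  have := hq.2 ht (hup hq.1) hmem
  rw [this] at hlt
  exact lt_irrefl _ hlt

/-- The points strictly above the line through `p` in direction `m`, together with those on the line
whose first coordinate is at most `x`. -/
def lexHalfPlane (p m : ℝ × ℝ) (x : ℝ) : Set (ℝ × ℝ) :=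
  {q | m.2 * (q.1 - p.1) < (q.2 - p.2) * m.1 ∨
    (m.2 * (q.1 - p.1) = (q.2 - p.2) * m.1 ∧ q.1 ≤ x)}

lemma convex_lexHalfPlane (p m : ℝ × ℝ) (x : ℝ) : Convex ℝ (lexHalfPlane p m x) := by
  rw [convex_iff_openSegment_subset]
  rintro y hy z hz _ ⟨a, b, ha, hb, hab, rfl⟩
  obtain rfl : b = 1 - a := by linarith
  simp only [lexHalfPlane, Set.mem_ofPred_eq, Prod.fst_add, Prod.snd_add, Prod.smul_fst,
    Prod.smul_snd, smul_eq_mul] at hy hz ⊢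
  rcases hy with hy | ⟨hy, hy'⟩ <;> rcases hz with hz | ⟨hz, hz'⟩
  · left
    nlinarith [mul_lt_mul_of_pos_left hy ha, mul_lt_mul_of_pos_left hz hb]
  · left
    nlinarith [mul_lt_mul_of_pos_left hy ha]
  · left
    nlinarith [mul_lt_mul_of_pos_left hz hb]
  · right
    constructor
    · linear_combination a * hy + (1 - a) * hz
    · nlinarith [mul_le_mul_of_nonneg_left hy' ha.le, mul_le_mul_of_nonneg_left hz' hb.le]

lemma extreme_of_lexHalfPlane {p m e : ℝ × ℝ} (hm : 0 < m.1)
    (he : m.2 * (e.1 - p.1) = (e.2 - p.2) * m.1) :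
    e ∈ Set.extremePoints ℝ (lexHalfPlane p m e.1) := by
  refine ⟨Or.inr ⟨he, le_rfl⟩, ?_⟩
  rintro y hy z hz ⟨a, b, ha, hb, hab, hyz⟩
  obtain rfl : b = 1 - a := by linarith
  have h1 := congrArg Prod.fst hyz
  have h2 := congrArg Prod.snd hyz
  simp only [Prod.fst_add, Prod.snd_add, Prod.smul_fst, Prod.smul_snd, smul_eq_mul] at h1 h2
  simp only [lexHalfPlane, Set.mem_ofPred_eq] at hy hz
  have hsum : a * ((y.2 - p.2) * m.1 - m.2 * (y.1 - p.1)) +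
      (1 - a) * ((z.2 - p.2) * m.1 - m.2 * (z.1 - p.1)) = 0 := by
    linear_combination m.1 * h2 - m.2 * h1 - he
  have hy0 : 0 ≤ (y.2 - p.2) * m.1 - m.2 * (y.1 - p.1) := by
    rcases hy with h | h <;> linarith
  have hz0 : 0 ≤ (z.2 - p.2) * m.1 - m.2 * (z.1 - p.1) := by
    rcases hz with h | h <;> linarith
  have hpy := mul_nonneg ha.le hy0
  have hpz := mul_nonneg hb.le hz0
  have hy1 : (y.2 - p.2) * m.1 - m.2 * (y.1 - p.1) = 0 :=
    (mul_eq_zero.1 (by linarith)).resolve_left ha.ne'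
  have hz1 : (z.2 - p.2) * m.1 - m.2 * (z.1 - p.1) = 0 :=
    (mul_eq_zero.1 (by linarith)).resolve_left hb.ne'
  have hyx : y.1 ≤ e.1 := by
    rcases hy with h | h
    · linarith
    · exact h.2
  have hzx : z.1 ≤ e.1 := by
    rcases hz with h | h
    · linarith
    · exact h.2
  have hfst : y.1 = e.1 := by
    have : a * (e.1 - y.1) ≤ 0 := by nlinarith
    have := nonpos_of_mul_nonpos_right this ha
    linarith
  ext
  · exact hfst
  · apply mul_right_cancel₀ hm.ne'
    rw [hfst] at hy1
    linear_combination hy1 + he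

/-! ### The next vertex -/

/-- If `p` is a vertex of `conv(H_n ∩ (p+Λ))` and `Nextpt(p) ≠ ∞` (i.e. the maximum
`kmax` of `{j ∈ ℤ : p + j·Minsl(p) ∈ H_n}` exists), then `Nextpt(p) = p + kmax·Minsl(p)`
is the next vertex: the vertex with smallest `x`-coordinate among the vertices whose
`x`-coordinate is strictly greater than `pₓ`. -/
theorem statement15 (n : ℝ) (hn : 0 < n) (v w : ℝ × ℝ)
    (hvrat : ratPoint v) (hwrat : ratPoint w)
    (hvw : v.1 * w.2 - v.2 * w.1 ≠ 0)
    (p : ℝ × ℝ)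
    (hp : p ∈ Set.extremePoints ℝ
        (convexHull ℝ (Hset n ∩ translateSet p (latticeOf v w))))
    (ms : ℝ × ℝ) (hms : IsMinsl n (latticeOf v w) p ms)
    (kmax : ℤ)
    (hkmax : IsGreatest {j : ℤ | p + (j : ℝ) • ms ∈ Hset n} kmax)
    (np : ℝ × ℝ) (hnp : np = p + (kmax : ℝ) • ms) :
    np ∈ Set.extremePoints ℝ
        (convexHull ℝ (Hset n ∩ translateSet p (latticeOf v w))) ∧
    p.1 < np.1 ∧
    ∀ r ∈ Set.extremePoints ℝ
        (convexHull ℝ (Hset n ∩ translateSet p (latticeOf v w))),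
      p.1 < r.1 → np.1 ≤ r.1 := by
  obtain ⟨Y, hY, hYΛ⟩ := exists_pos_vertical v w hvrat hwrat hvw
  obtain ⟨X, hX, hXΛ⟩ := exists_pos_horizontal v w hvrat hwrat hvw
  obtain ⟨hmΛ, hm0, hm1, hmH, hprim, hmin⟩ := hms
  set S := Hset n ∩ translateSet p (latticeOf v w) with hSdef
  have hpS : p ∈ S := extremePoints_convexHull_subset hp
  have hpH : p ∈ Hset n := hpS.1
  have hS : ∀ q ∈ S, q + (0, Y) ∈ S := by
    rintro q ⟨hq, u, hu, rfl⟩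
    exact ⟨Hset_add hq le_rfl hY.le, u + (0, Y), latticeOf_add_s15 hu hYΛ, (add_assoc _ _ _).symm⟩
  have hmS : p + ms ∈ S := ⟨hmH, ms, hmΛ, rfl⟩
  have hmpos : 0 < ms.1 := by
    refine hm1.lt_of_ne fun h0 => ?_
    have hup : 0 ≤ ms.2 := by
      have := extreme_le_of_same_fst hY hS hp (subset_convexHull ℝ S hmS) (by simp [← h0])
      simpa using this
    have hsl := hmin (X, 0) hXΛ (by simp [hX.ne']) hX.le (Hset_add hpH hX.le le_rfl)
    simp only [slopeLE, zero_mul] at hsl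
    have hms2 : ms.2 = 0 := le_antisymm (nonpos_of_mul_nonpos_left hsl hX) hup
    exact hm0 (Prod.ext h0.symm hms2)
  have habove : ∀ q ∈ S, ms.2 * (q.1 - p.1) ≤ (q.2 - p.2) * ms.1 := by
    intro q hqS
    obtain ⟨hq, u, hu, rfl⟩ := hqS
    have hqS : p + u ∈ S := ⟨hq, u, hu, rfl⟩
    simp only [Prod.fst_add, Prod.snd_add, add_sub_cancel_left]
    rcases le_or_gt 0 u.1 with h | h
    · by_cases hu0 : u = 0
      · simp [hu0]
      · exact hmin u hu hu0 h hq
    · -- The segment from `p + u` to `p + ms` meets the vertical line through `p`.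
      have hd : 0 < ms.1 - u.1 := by linarith
      have ht : (ms.1 / (ms.1 - u.1)) • (p + u) + (-u.1 / (ms.1 - u.1)) • (p + ms) ∈
          convexHull ℝ S :=
        convex_convexHull ℝ S (subset_convexHull ℝ S hqS) (subset_convexHull ℝ S hmS)
          (by positivity) (div_nonneg (by linarith) hd.le) (by field_simp; ring)
      have := extreme_le_of_same_fst hY hS hp ht (by
        simp
        field_simp
        ring)
      have e : ((ms.1 / (ms.1 - u.1)) • (p + u) + (-u.1 / (ms.1 - u.1)) • (p + ms)).2 =
          p.2 + (ms.1 * u.2 - u.1 * ms.2) / (ms.1 - u.1) := by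
        simp
        field_simp
        ring
      rw [e] at this
      have h3 : 0 ≤ (ms.1 * u.2 - u.1 * ms.2) / (ms.1 - u.1) := by linarith
      have h4 := mul_nonneg h3 hd.le
      rw [div_mul_cancel₀ _ hd.ne'] at h4
      linarith
  have hk1 : 1 ≤ kmax := hkmax.2 (by simpa using hmH)
  have hk1r : (1 : ℝ) ≤ kmax := by exact_mod_cast hk1
  have hnp1 : np.1 = p.1 + kmax * ms.1 := by simp [hnp]
  have hnp2 : np.2 = p.2 + kmax * ms.2 := by simp [hnp]
  have hnpS : np ∈ S := by
    rw [hnp]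
    exact ⟨hkmax.1, _, latticeOf_zsmul kmax hmΛ, rfl⟩
  have hline : ms.2 * (np.1 - p.1) = (np.2 - p.2) * ms.1 := by
    rw [hnp1, hnp2]
    ring
  have hlt : p.1 < np.1 := by
    rw [hnp1]
    nlinarith
  have hlex : S ⊆ lexHalfPlane p ms np.1 := by
    intro q hq
    rcases (habove q hq).lt_or_eq with h | h
    · exact Or.inl h
    · refine Or.inr ⟨h, ?_⟩
      obtain ⟨hqH, u, hu, rfl⟩ := hq
      simp only [Prod.fst_add, Prod.snd_add, add_sub_cancel_left] at h
      have hum : u = (u.1 / ms.1) • ms := by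
        ext
        · simp
          field_simp
        · simp
          field_simp
          linarith
      obtain ⟨j, hj⟩ := int_of_smul_primitive hvw hmΛ hm0 hprim (hum ▸ hu)
      rw [hj] at hum
      have hjk : j ≤ kmax := hkmax.2 (by
        show p + (j : ℝ) • ms ∈ Hset n
        rw [← hum]
        exact hqH)
      have hjk' : (j : ℝ) ≤ kmax := by exact_mod_cast hjk
      rw [hnp1, hum]
      simp only [Prod.fst_add, Prod.smul_fst, smul_eq_mul]
      nlinarith
  have hhull : convexHull ℝ S ⊆ lexHalfPlane p ms np.1 :=
    convexHull_min hlex (convex_lexHalfPlane _ _ _)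
  refine ⟨inter_extremePoints_subset_extremePoints_of_subset hhull
    ⟨subset_convexHull ℝ S hnpS, extreme_of_lexHalfPlane hmpos hline⟩, hlt, ?_⟩
  intro r hr hpr
  by_contra! hrn
  have hD : 0 < np.1 - p.1 := by linarith
  -- `t` is the point of the segment from `p` to `np` with the same first coordinate as `r`.
  set t : ℝ × ℝ := ((np.1 - r.1) / (np.1 - p.1)) • p + ((r.1 - p.1) / (np.1 - p.1)) • np with htdef
  have hca : 0 < (np.1 - r.1) / (np.1 - p.1) := div_pos (by linarith) hD
  have hcb : 0 < (r.1 - p.1) / (np.1 - p.1) := div_pos (by linarith) hD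
  have hcab : (np.1 - r.1) / (np.1 - p.1) + (r.1 - p.1) / (np.1 - p.1) = 1 := by
    field_simp
    ring
  have ht : t ∈ convexHull ℝ S :=
    convex_convexHull ℝ S hp.1 (subset_convexHull ℝ S hnpS) hca.le hcb.le hcab
  have ht1 : t.1 = r.1 := by
    simp [htdef]
    field_simp
    ring
  have hrt : r.2 ≤ t.2 := extreme_le_of_same_fst hY hS hr ht ht1
  have htline : ms.2 * (t.1 - p.1) = (t.2 - p.2) * ms.1 := by
    simp only [htdef, Prod.fst_add, Prod.snd_add, Prod.smul_fst, Prod.smul_snd, smul_eq_mul]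
    linear_combination (r.1 - p.1) / (np.1 - p.1) * hline + (ms.2 * p.1 - ms.1 * p.2) * hcab
  have htr : t.2 ≤ r.2 := by
    have := habove r (extremePoints_convexHull_subset hr)
    rw [← ht1, htline] at this
    have := le_of_mul_le_mul_right this hmpos
    linarith
  have hrt' : t = r := Prod.ext ht1 (le_antisymm htr hrt)
  have hpr' := hr.2 hp.1 (subset_convexHull ℝ S hnpS) ⟨_, _, hca, hcb, hcab, hrt'⟩
  rw [hpr'] at hpr
  exact lt_irrefl _ hpr

end
end

section
/- Let n ∈ ℝ_{>0}, let Λ ⊂ ℤ² be a reduced sublattice, and let p ∈ H_n with p_y ∉ (1,2) and Nextpt(p) ≠ ∞. Then the x-coordinate of Minsl(p) is at most 2n + 2·det Λ. -/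
/-!
Write `D = det Λ`, `ms = (a, -b)`. Since `(D, 0) ∈ Λ` points into `H_n` from `p`, the minimal slope
is at most `0`, and it is not `0` because the ray from `p` in direction `ms` leaves `H_n`. So `b` is
a positive integer, and `b < p_y` because `H_n` does not meet the `x`-axis; then `p_y ∉ (1, 2)`
forces `p_y ≥ 2`.

Put `c = max 1 (b - 1)`, so that `p_y - c ≥ 1` and `b ≤ 2 c`. By reducedness `Λ` has points at
height `-c`, and translating by `(D, 0)` gives one, `(x, -c)`, with `n ≤ x ≤ n + D`
(`exists_lattice_point_at_height`). Then `p + (x, -c) ∈ H_n`, and minimality of the slope of `ms`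
yields `a c ≤ b x ≤ 2 c x`, hence `a ≤ 2 x ≤ 2 n + 2 D`.
-/

noncomputable section

lemma latticeOf_coords_int {v w q : ℝ × ℝ} (hsub : latticeOf v w ⊆ intLattice)
    (hq : q ∈ latticeOf v w) : ∃ a b : ℤ, q.1 = a ∧ q.2 = b := by
  obtain ⟨a, b, rfl⟩ := hsub hq
  exact ⟨a, b, rfl, rfl⟩

lemma latticeOf_add_zsmul {v w q r : ℝ × ℝ} (hq : q ∈ latticeOf v w) (hr : r ∈ latticeOf v w)
    (t : ℤ) : q + (t : ℝ) • r ∈ latticeOf v w := by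
  obtain ⟨a, b, rfl⟩ := hq
  obtain ⟨c, d, rfl⟩ := hr
  refine ⟨a + t * c, b + t * d, ?_⟩
  push_cast
  module

/-- Eliminating the second coordinate between the integral vectors `v` and `w` gives
`±(det, 0)` as `w.2 • v - v.2 • w`. -/
lemma det_zero_mem {v w : ℝ × ℝ} (hsub : latticeOf v w ⊆ intLattice) :
    ((detOf v w, 0) : ℝ × ℝ) ∈ latticeOf v w := by
  obtain ⟨-, v2, -, hv⟩ := latticeOf_coords_int hsub (q := v) ⟨1, 0, by simp⟩
  obtain ⟨-, w2, -, hw⟩ := latticeOf_coords_int hsub (q := w) ⟨0, 1, by simp⟩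
  unfold detOf
  rcases abs_choice (v.1 * w.2 - v.2 * w.1) with h | h
  · refine ⟨w2, -v2, Prod.ext ?_ ?_⟩ <;>
      simp only [h, Prod.fst_add, Prod.snd_add, Prod.smul_fst, Prod.smul_snd, smul_eq_mul,
        Int.cast_neg, ← hv, ← hw] <;> ring
  · refine ⟨-w2, v2, Prod.ext ?_ ?_⟩ <;>
      simp only [h, Prod.fst_add, Prod.snd_add, Prod.smul_fst, Prod.smul_snd, smul_eq_mul,
        Int.cast_neg, ← hv, ← hw] <;> ring

/-- Every closed horizontal segment of length `det Λ` at integer height contains a point of a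
reduced lattice. -/
lemma exists_lattice_point_at_height {v w : ℝ × ℝ} (hD : 0 < detOf v w)
    (hsub : latticeOf v w ⊆ intLattice) (hred : IsReducedLattice (latticeOf v w))
    (s : ℝ) (c : ℤ) :
    ∃ x : ℝ, s ≤ x ∧ x ≤ s + detOf v w ∧ ((x, (c : ℝ)) : ℝ × ℝ) ∈ latticeOf v w := by
  obtain ⟨q, hq, hqc⟩ : (c : ℝ) ∈ Prod.snd '' latticeOf v w := by
    rw [hred.2]
    exact ⟨c, rfl⟩
  set D := detOf v w
  have h1 := Int.le_ceil ((s - q.1) / D)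
  have h2 := Int.ceil_lt_add_one ((s - q.1) / D)
  set t := ⌈(s - q.1) / D⌉
  rw [div_le_iff₀ hD] at h1
  rw [← sub_lt_iff_lt_add, lt_div_iff₀ hD] at h2
  refine ⟨q.1 + t * D, by linarith, by linarith, ?_⟩
  convert latticeOf_add_zsmul hq (det_zero_mem hsub) t using 1
  ext <;> simp [D, hqc]

/-- If `Λ ⊆ ℤ²` is a reduced sublattice, `p ∈ H_n` with `p_y ∉ (1,2)`, and
`Nextpt(p) ≠ ∞` (the maximum of `{j ∈ ℤ : p + j·Minsl(p) ∈ H_n}` exists), then the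
`x`-coordinate of `Minsl(p)` is at most `2n + 2 det Λ`. -/
theorem statement16 (n : ℝ) (hn : 0 < n) (v w : ℝ × ℝ)
    (hvw : v.1 * w.2 - v.2 * w.1 ≠ 0)
    (hsub : latticeOf v w ⊆ intLattice)
    (hred : IsReducedLattice (latticeOf v w))
    (p : ℝ × ℝ) (hp : p ∈ Hset n) (hpy : p.2 ∉ Set.Ioo (1 : ℝ) 2)
    (ms : ℝ × ℝ) (hms : IsMinsl n (latticeOf v w) p ms)
    (kmax : ℤ)
    (hkmax : IsGreatest {j : ℤ | p + (j : ℝ) • ms ∈ Hset n} kmax) :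
    ms.1 ≤ 2 * n + 2 * detOf v w := by
  have hD : 0 < detOf v w := abs_pos.mpr hvw
  obtain ⟨hmsΛ, -, hms1, ⟨hH1, hH2, hH3⟩, -, hmin⟩ := hms
  obtain ⟨-, b', -, hb'⟩ := latticeOf_coords_int hsub hmsΛ
  obtain ⟨hp1, hp2, hp3⟩ := hp
  simp only [Prod.fst_add, Prod.snd_add] at hH1 hH2 hH3
  have hnonpos : ms.2 ≤ 0 := by
    have h := hmin _ (det_zero_mem hsub) (fun h => hD.ne' (congrArg Prod.fst h)) hD.le
      ⟨by simp only [Prod.fst_add]; positivity, by simpa using hp2, by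
        simp only [Prod.fst_add, Prod.snd_add, add_zero]
        nlinarith [mul_nonneg hD.le hp2]⟩
    simp only [slopeLE, zero_mul] at h
    exact nonpos_of_mul_nonpos_left h hD
  have hne : ms.2 ≠ 0 := by
    intro h0
    -- A horizontal direction stays in the region, so `kmax + 1` would also be admissible.
    have hmem : kmax + 1 ∈ {j : ℤ | p + (j : ℝ) • ms ∈ Hset n} := by
      obtain ⟨h1, h2, h3⟩ := hkmax.1
      simp only [Prod.fst_add, Prod.snd_add, Prod.smul_fst, Prod.smul_snd, smul_eq_mul, h0,
        mul_zero, add_zero] at h1 h2 h3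
      refine ⟨?_, ?_, ?_⟩ <;>
        simp only [Prod.fst_add, Prod.snd_add, Prod.smul_fst, Prod.smul_snd, smul_eq_mul, h0,
          mul_zero, add_zero, Int.cast_add, Int.cast_one]
      · linarith
      · exact h2
      · nlinarith [mul_nonneg hms1 h2]
    have := hkmax.2 hmem
    omega
  obtain ⟨b, rfl⟩ : ∃ b : ℤ, b' = -b := ⟨-b', by ring⟩
  push_cast at hb'
  have hb : 1 ≤ b := by
    have : (0 : ℝ) < b := by
      have := lt_of_le_of_ne hnonpos hne
      linarith
    exact_mod_cast this
  have hbR : (1 : ℝ) ≤ b := by exact_mod_cast hb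
  have hYb : 0 < p.2 - b := by
    rcases hH2.lt_or_eq with h | h
    · linarith
    · rw [← h] at hH3
      linarith
  have hY : 2 ≤ p.2 := by
    by_contra! h
    exact hpy ⟨by linarith, h⟩
  obtain ⟨c, hc1, hbc, hYc⟩ : ∃ c : ℤ, 1 ≤ c ∧ b ≤ 2 * c ∧ 1 ≤ p.2 - c := by
    rcases hb.eq_or_lt with h | h
    · exact ⟨1, le_rfl, by omega, by push_cast; linarith⟩
    · exact ⟨b - 1, by omega, by omega, by push_cast; linarith⟩
  have hc1R : (1 : ℝ) ≤ c := by exact_mod_cast hc1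
  have hbcR : (b : ℝ) ≤ 2 * c := by exact_mod_cast hbc
  obtain ⟨x, hx1, hx2, hxΛ⟩ := exists_lattice_point_at_height hD hsub hred n (-c)
  have hx0 : 0 < x := hn.trans_le hx1
  have hslope := hmin _ hxΛ (fun h => hx0.ne' (congrArg Prod.fst h)) hx0.le
    ⟨by simp only [Prod.fst_add]; positivity, by simp only [Prod.snd_add]; push_cast; linarith, by
      simp only [Prod.fst_add, Prod.snd_add]
      push_cast
      nlinarith⟩
  simp only [slopeLE, hb'] at hslope
  push_cast at hslope
  have hcx : c * ms.1 ≤ c * (2 * x) := by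
    nlinarith [mul_le_mul_of_nonneg_right hbcR hx0.le]
  have := le_of_mul_le_mul_left hcx (by linarith)
  linarith

end
end

section
/- Let X ⊂ ℝ² be a convex set, Λ ⊂ ℝ² a lattice, and P a closed half-plane whose boundary is a lattice line ℓ of Λ. Let ℓ' be the lattice line of Λ parallel to ℓ, adjacent to ℓ, and on the side of ℓ opposite to P. If X ∩ ℓ' = ∅ and X ∩ ℓ contains at least two points, then X ∩ Λ ⊆ P. -/
/-!
A lattice point `q` of `X` with `f q > c` satisfies `f q ≥ c'` by adjacency. The segment from a
point of `X ∩ ℓ` to `q` stays in `X` by convexity, and `f` runs affinely from `c` to `f q ≥ c'`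
along it, so it crosses `ℓ'`, contradicting `X ∩ ℓ' = ∅`.
-/

noncomputable section

/-- Let `X ⊆ ℝ²` be convex and `Λ` a lattice.  Let `ℓ = {f = c}` and `ℓ' = {f = c'}`,
`c < c'`, be parallel lattice lines of `Λ` (each containing at least two lattice
points) that are adjacent (no point of `Λ` has `f`-value strictly between `c` and
`c'`), and let `P = {f ≤ c}` be the closed half-plane bounded by `ℓ` on the side
opposite to `ℓ'`.  If `X ∩ ℓ' = ∅` and `X ∩ ℓ` contains at least two points, then
`X ∩ Λ ⊆ P`. -/
theorem statement17 (v w : ℝ × ℝ) (hvw : v.1 * w.2 - v.2 * w.1 ≠ 0)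
    (X : Set (ℝ × ℝ)) (hX : Convex ℝ X)
    (f : (ℝ × ℝ) →ₗ[ℝ] ℝ) (hf : f ≠ 0)
    (c c' : ℝ) (hcc : c < c')
    (hl : ∃ q₁ ∈ latticeOf v w, ∃ q₂ ∈ latticeOf v w, q₁ ≠ q₂ ∧ f q₁ = c ∧ f q₂ = c)
    (hl' : ∃ q₁ ∈ latticeOf v w, ∃ q₂ ∈ latticeOf v w, q₁ ≠ q₂ ∧ f q₁ = c' ∧ f q₂ = c')
    (hadj : ∀ q ∈ latticeOf v w, f q ≤ c ∨ c' ≤ f q)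
    (hXl' : X ∩ {q | f q = c'} = ∅)
    (hXl : ∃ x₁ ∈ X, ∃ x₂ ∈ X, x₁ ≠ x₂ ∧ f x₁ = c ∧ f x₂ = c) :
    ∀ q ∈ X ∩ latticeOf v w, f q ≤ c := by
  rintro q ⟨hqX, hqL⟩
  rcases hadj q hqL with h | h
  · exact h
  exfalso
  obtain ⟨x, hx, -, -, -, hfx, -⟩ := hXl
  have hpos : 0 < f q - c := by linarith
  -- the parameter at which the segment from `x` to `q` meets `{f = c'}`
  set t := (c' - c) / (f q - c) with ht
  have ht0 : 0 ≤ t := div_nonneg (by linarith) hpos.le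
  have ht1 : t ≤ 1 := (div_le_one hpos).2 (by linarith)
  have htm : t * (f q - c) = c' - c := div_mul_cancel₀ _ hpos.ne'
  have hmem : (1 - t) • x + t • q ∈ X := hX hx hqX (by linarith) ht0 (by ring)
  have hval : f ((1 - t) • x + t • q) = c' := by
    simp only [map_add, map_smul, smul_eq_mul, hfx]
    linarith
  exact (Set.eq_empty_iff_forall_notMem.1 hXl') _ ⟨hmem, hval⟩

end
end

section
/- Let n ∈ ℝ_{>0}, let Λ ⊂ ℚ² be a rational lattice with standard basis (b₁, b₂), and let p ∈ H_n with p − b₂ ∉ H_n. Then the pair (b₁, −b₂) is a right search basis for p in H_n ∩ (p+Λ): that is, (b₁)ₓ > 0, (−b₂)ₓ ≥ 0, det(b₁, −b₂) < 0, p + b₁ ∈ H_n, p + (−b₂) ∉ H_n, and Minsl(p) lies in the closed cone generated by {b₁, −b₂}. -/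
/-!
The conditions on coordinates are immediate from the standard basis, and `p + b₁ ∈ H_n` because
`H_n` is closed under adding vectors with nonnegative coordinates. For the cone condition, write
`Minsl(p) = a b₁ + b b₂` with integers `a, b`. Since `b₂ₓ = 0` and `Minsl(p)ₓ ≥ 0`, we have
`a ≥ 0`. As `b₁` is itself a candidate in the minimum defining `Minsl(p)`, the slope of `Minsl(p)`
is at most that of `b₁`, which says `b · b₁ₓ · b₂ᵧ ≤ 0`, that is `b ≤ 0`. Hence
`Minsl(p) = a b₁ + (-b) (-b₂)` with nonnegative coefficients.
-/

noncomputable section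

/-- `(b₁, b₂)` is the standard basis of the lattice `Λ`: a basis with
`b₂ₓ = 0`, `b₁ₓ > 0`, `b₂ᵧ > 0` and `0 ≤ b₁ᵧ < b₂ᵧ`. -/
def IsStdBasis (Λ : Set (ℝ × ℝ)) (b₁ b₂ : ℝ × ℝ) : Prop :=
  Λ = latticeOf b₁ b₂ ∧ b₂.1 = 0 ∧ 0 < b₁.1 ∧ 0 < b₂.2 ∧ 0 ≤ b₁.2 ∧ b₁.2 < b₂.2

/-- If `(b₁, b₂)` is the standard basis of a rational lattice `Λ` and `p ∈ H_n` with
`p - b₂ ∉ H_n`, then `(b₁, -b₂)` is a right search basis for `p`: `(b₁)ₓ > 0`,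
`(-b₂)ₓ ≥ 0`, `det(b₁, -b₂) < 0`, `p + b₁ ∈ H_n`, `p + (-b₂) ∉ H_n`, and `Minsl(p)`
lies in the closed cone generated by `{b₁, -b₂}`. -/
theorem statement18 (n : ℝ) (hn : 0 < n) (b₁ b₂ : ℝ × ℝ)
    (hrat1 : ratPoint b₁) (hrat2 : ratPoint b₂)
    (hstd : IsStdBasis (latticeOf b₁ b₂) b₁ b₂)
    (p : ℝ × ℝ) (hp : p ∈ Hset n) (hpb : p - b₂ ∉ Hset n)
    (ms : ℝ × ℝ) (hms : IsMinsl n (latticeOf b₁ b₂) p ms) :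
    0 < b₁.1 ∧ 0 ≤ (-b₂).1 ∧
    b₁.1 * (-b₂).2 - b₁.2 * (-b₂).1 < 0 ∧
    p + b₁ ∈ Hset n ∧ p + (-b₂) ∉ Hset n ∧
    ∃ s t : ℝ, 0 ≤ s ∧ 0 ≤ t ∧ ms = s • b₁ + t • (-b₂) := by
  obtain ⟨-, h2x, h1x, h2y, h1y, -⟩ := hstd
  obtain ⟨⟨a, b, rfl⟩, -, hx, -, -, hmin⟩ := hms
  obtain ⟨hpx, hpy, hpn⟩ := hp
  have hpb₁ : p + b₁ ∈ Hset n := by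
    refine ⟨add_nonneg hpx h1x.le, add_nonneg hpy h1y, hpn.trans ?_⟩
    exact mul_le_mul (le_add_of_nonneg_right h1x.le) (le_add_of_nonneg_right h1y) hpy
      (add_nonneg hpx h1x.le)
  have hslope := hmin b₁ ⟨1, 0, by simp⟩ (fun h => by simp [h] at h1x) h1x.le hpb₁
  simp only [slopeLE, Prod.fst_add, Prod.snd_add, Prod.smul_fst, Prod.smul_snd, smul_eq_mul,
    h2x, mul_zero, add_zero] at hslope hx
  have ha : (0 : ℝ) ≤ a := nonneg_of_mul_nonneg_left hx h1x
  have hb : (b : ℝ) ≤ 0 := by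
    by_contra! hb
    nlinarith [mul_pos (mul_pos hb h2y) h1x]
  refine ⟨h1x, by simp [h2x], ?_, hpb₁, by rwa [← sub_eq_add_neg], a, -b, ha, by linarith, ?_⟩
  · simp only [Prod.fst_neg, Prod.snd_neg, h2x]
    nlinarith [mul_pos h1x h2y]
  · rw [neg_smul_neg]

end
end

section
/- Let n ∈ ℝ_{>0}, let Λ ⊂ ℚ² be a rational lattice, and let p ∈ H_n ∩ conv(H_n ∩ (p+Λ)) be a point lying in the interior of conv(H_n ∩ (p+Λ)). Let e_p be the edge of conv(H_n ∩ (p+Λ)) lying vertically below p, and let v be the right endpoint of e_p (possibly v = ∞ if e_p is an unbounded edge). If q := Nextpt(p) ≠ ∞, then the Euclidean distance from q to the line containing e_p is strictly less than half the Euclidean distance from p to that line, and q_x ≤ v_x. -/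
/-!
Write `C` for the convex hull of the lattice points in `H_n`, `b ∈ e` for the point of the edge
vertically below `p`, and `k = kmax`. The whole theorem follows from one claim: the ray from `p` in
direction `ms = Minsl(p)` meets `e` in a point `c = p + τ • ms` with `τ > 0`
(`exists_ray_inter_edge`).

Granting this, `c ∈ C ⊆ H_n`, so convexity of `H_n` and maximality of `k` give `τ < k + 1`. Also
`k ≤ τ`, since otherwise `c` would lie strictly between the interior point `p` and `q ∈ C`, hence in
the interior of `C`, where a one-dimensional extreme set has no points (`notMem_interior`). As
`1 ≤ k`, it follows that `τ < 2 * k`. The homothety with centre `c` shows that distances to a line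
through `c` scale along the segment from `p` to `c`, so that `q` is at `1 - k / τ < 1 / 2` times the
distance of `p` (`infDist_homothety_le`). Finally `q.1 ≤ c.1`, and `c.1` is at most the abscissa of
the right endpoint because `c ∈ e`.

For the claim: if `ms` is vertical it points downwards (otherwise `k` would not exist), and `c = b`.
If `ms.1 > 0`, then `b` is not a lattice point, because `b - p` would have slope `-∞`. Since `b` is a
convex combination of lattice points in `e` (`mem_convexHull_inter_of_isExtreme`), there are lattice
points `s₁, s₂ ∈ e` to the left and to the right of `b`. The slope of `ms` is at most that of
`s₂ - p`, so the ray meets the segment from `b` to `s₂`; the intersection point is in `e` because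
`b` lies strictly between it and `s₁`.

Rationality of the lattice enters only through the existence of a vertical lattice vector, which
excludes that `e` is vertical. The set `e` is not assumed to be convex; only the extremality of `e`
is ever used.
-/

noncomputable section

/-! ### Convexity and extreme sets -/

theorem Hset_convex (n : ℝ) (hn : 0 < n) : Convex ℝ (Hset n) := by
  rintro ⟨x₁, y₁⟩ ⟨hx₁, hy₁, h₁⟩ ⟨x₂, y₂⟩ ⟨hx₂, hy₂, h₂⟩ a b ha hb hab
  simp only at hx₁ hy₁ h₁ hx₂ hy₂ h₂
  -- AM-GM for the mixed term
  have key : 2 * n ≤ x₁ * y₂ + x₂ * y₁ := by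
    have h0 : 0 ≤ x₁ * y₂ + x₂ * y₁ := by positivity
    have h3 : n * n ≤ (x₁ * y₁) * (x₂ * y₂) := mul_le_mul h₁ h₂ hn.le (by positivity)
    by_contra! hlt
    nlinarith [sq_nonneg (x₁ * y₂ - x₂ * y₁)]
  refine ⟨?_, ?_, ?_⟩
  · simp; positivity
  · simp; positivity
  · simp only [Prod.smul_mk, Prod.mk_add_mk, smul_eq_mul]
    have e1 : (a * x₁ + b * x₂) * (a * y₁ + b * y₂)
        = a * a * (x₁ * y₁) + a * b * (x₁ * y₂ + x₂ * y₁) + b * b * (x₂ * y₂) := by ring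
    have e2 : n = a * a * n + a * b * (2 * n) + b * b * n := by
      have : (a + b) ^ 2 * n = n := by rw [hab]; ring
      linarith
    rw [e1]
    calc n = a * a * n + a * b * (2 * n) + b * b * n := e2
      _ ≤ _ := by gcongr

/-- A point of an extreme set `e` of `conv S` is a convex combination of points of `S` lying
in `e`. -/
theorem mem_convexHull_inter_of_isExtreme {S e : Set (ℝ × ℝ)}
    (hface : IsExtreme ℝ (convexHull ℝ S) e) {b : ℝ × ℝ} (hb : b ∈ e) :
    b ∈ convexHull ℝ (S ∩ e) := by
  have hbC := hface.subset hb
  have hsub : convexHull ℝ (S \ e) ⊆ convexHull ℝ S \ e :=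
    convexHull_min (fun x hx => ⟨subset_convexHull ℝ S hx.1, hx.2⟩)
      (hface.convex_sdiff (convex_convexHull ℝ S))
  rw [← Set.inter_union_sdiff S e] at hbC
  rcases (S ∩ e).eq_empty_or_nonempty with h1 | h1
  · rw [h1, Set.empty_union] at hbC
    exact absurd hb (hsub hbC).2
  rcases (S \ e).eq_empty_or_nonempty with h2 | h2
  · rwa [h2, Set.union_empty] at hbC
  rw [convexHull_union h1 h2, mem_convexJoin] at hbC
  obtain ⟨x, hx, y, hy, hxy⟩ := hbC
  have hxC : x ∈ convexHull ℝ S := convexHull_mono Set.inter_subset_left hx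
  rw [← insert_endpoints_openSegment] at hxy
  rcases hxy with rfl | rfl | hxy
  · exact hx
  · exact absurd hb (hsub hy).2
  · exact absurd (hface.right_mem_of_mem_openSegment hxC (hsub hy).1 hb hxy) (hsub hy).2

/-- An extreme set contained in a line contains no interior point: otherwise it would contain a
neighbourhood of that point. -/
theorem notMem_interior {C e : Set (ℝ × ℝ)} (hface : IsExtreme ℝ C e)
    (hdim : ∃ z u : ℝ × ℝ, u ≠ 0 ∧ e ⊆ {q | ∃ t : ℝ, q = z + t • u})
    {x : ℝ × ℝ} (hx : x ∈ e) : x ∉ interior C := by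
  intro hint
  obtain ⟨z, u, -, he⟩ := hdim
  obtain ⟨ε, hε, hball⟩ := Metric.isOpen_iff.1 isOpen_interior x hint
  have step : ∀ d : ℝ × ℝ, ‖d‖ < ε → x + d ∈ e := by
    intro d hd
    have h1 : x + d ∈ C := interior_subset (hball (by simpa [Metric.mem_ball, dist_eq_norm]))
    have h2 : x - d ∈ C := interior_subset (hball (by simpa [Metric.mem_ball, dist_eq_norm]))
    refine hface.left_mem_of_mem_openSegment h1 h2 hx
      ⟨1 / 2, 1 / 2, by norm_num, by norm_num, by norm_num, ?_⟩
    ext <;> simp <;> ring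
  obtain ⟨t₀, h₀⟩ := he hx
  obtain ⟨t₁, h₁⟩ := he (step (ε / 2, 0) (by simp [Prod.norm_def, abs_of_pos hε]; linarith))
  obtain ⟨t₂, h₂⟩ := he (step (0, ε / 2) (by simp [Prod.norm_def, abs_of_pos hε]; linarith))
  simp only [Prod.ext_iff, Prod.fst_add, Prod.snd_add, Prod.smul_fst, Prod.smul_snd,
    smul_eq_mul] at h₀ h₁ h₂
  have a1 : (t₁ - t₀) * u.1 = ε / 2 := by linarith [h₀.1, h₁.1]
  have a2 : (t₁ - t₀) * u.2 = 0 := by linarith [h₀.2, h₁.2]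
  have a3 : (t₂ - t₀) * u.1 = 0 := by linarith [h₀.1, h₂.1]
  have a4 : (t₂ - t₀) * u.2 = ε / 2 := by linarith [h₀.2, h₂.2]
  have : (ε / 2) * (ε / 2) = 0 := by
    calc (ε / 2) * (ε / 2) = ((t₁ - t₀) * u.1) * ((t₂ - t₀) * u.2) := by rw [a1, a4]
      _ = ((t₁ - t₀) * u.2) * ((t₂ - t₀) * u.1) := by ring
      _ = 0 := by rw [a2]; ring
  nlinarith

/-- The homothety with ratio `r` and centre `c` in an affine subspace preserves the subspace, so it
scales distances to it by `r`; only the upper bound is needed. -/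
theorem infDist_homothety_le (A : AffineSubspace ℝ (ℝ × ℝ)) {c p : ℝ × ℝ} (hc : c ∈ A)
    {r : ℝ} (hr : 0 ≤ r) :
    Metric.infDist (c + r • (p - c)) (A : Set (ℝ × ℝ))
      ≤ r * Metric.infDist p (A : Set (ℝ × ℝ)) := by
  have hne : (A : Set (ℝ × ℝ)).Nonempty := ⟨c, hc⟩
  rcases hr.eq_or_lt with rfl | hr
  · simp [Metric.infDist_zero_of_mem (show c ∈ (A : Set (ℝ × ℝ)) from hc)]
  rw [← div_le_iff₀' hr, Metric.le_infDist hne]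
  intro y hy
  rw [div_le_iff₀' hr]
  have hmem : c + r • (y - c) ∈ (A : Set (ℝ × ℝ)) := by
    have := A.smul_vsub_vadd_mem r hy hc hc
    simpa [add_comm] using this
  refine (Metric.infDist_le_dist_of_mem hmem).trans_eq ?_
  rw [dist_eq_norm, dist_eq_norm]
  have : c + r • (p - c) - (c + r • (y - c)) = r • (p - y) := by
    rw [smul_sub, smul_sub, smul_sub]; abel
  rw [this, norm_smul, Real.norm_of_nonneg hr.le]

/-! ### The edge below `p` is not vertical -/

/-- A lattice generated by two independent rational vectors contains a vertical vector. -/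
theorem exists_vertical {v w : ℝ × ℝ} (hv : ratPoint v) (hw : ratPoint w)
    (hvw : v.1 * w.2 - v.2 * w.1 ≠ 0) :
    ∃ N : ℝ, 0 < N ∧ ∀ j : ℕ, ((0 : ℝ), (j : ℝ) * N) ∈ latticeOf v w := by
  obtain ⟨a, b, rfl⟩ := hv
  obtain ⟨c, d, rfl⟩ := hw
  simp only at hvw
  have key : ∃ i k : ℤ, (i : ℝ) * a + k * c = 0 ∧ (i : ℝ) * b + k * d ≠ 0 := by
    -- clear denominators in the relation `c * a - a * c = 0`
    refine ⟨c.num * a.den, -(a.num * c.den), ?_, ?_⟩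
    · have ha : (a : ℝ) = a.num / a.den := Rat.cast_def a
      have hc : (c : ℝ) = c.num / c.den := Rat.cast_def c
      have h1 : (a.den : ℝ) ≠ 0 := by exact_mod_cast a.den_ne_zero
      have h2 : (c.den : ℝ) ≠ 0 := by exact_mod_cast c.den_ne_zero
      rw [ha, hc]; push_cast; field_simp; ring
    · have h1 : (a.den : ℝ) ≠ 0 := by exact_mod_cast a.den_ne_zero
      have h2 : (c.den : ℝ) ≠ 0 := by exact_mod_cast c.den_ne_zero
      have ha : (a.num : ℝ) = a * a.den := by
        have : (a : ℝ) = a.num / a.den := Rat.cast_def a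
        rw [this]; field_simp
      have hc : (c.num : ℝ) = c * c.den := by
        have : (c : ℝ) = c.num / c.den := Rat.cast_def c
        rw [this]; field_simp
      push_cast
      rw [ha, hc]
      have : (c : ℝ) * c.den * a.den * b + -(a * a.den * c.den) * d
          = -(a.den * c.den * (a * d - b * c)) := by ring
      rw [this]
      exact neg_ne_zero.2 (mul_ne_zero (mul_ne_zero h1 h2) hvw)
  obtain ⟨i, k, h1, h2⟩ := key
  rcases lt_or_gt_of_ne h2 with h | h
  · refine ⟨-(i * b + k * d), by linarith, fun j => ⟨-(j * i), -(j * k), ?_⟩⟩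
    ext
    · simp; linear_combination (j : ℝ) * h1
    · simp; ring
  · refine ⟨i * b + k * d, h, fun j => ⟨j * i, j * k, ?_⟩⟩
    ext
    · simp; linear_combination -(j : ℝ) * h1
    · simp; ring

theorem mem_openSegment_vertical {x a b c : ℝ} (hab : a < b) (hbc : b < c) :
    (x, b) ∈ openSegment ℝ (x, a) (x, c) := by
  have h : 0 < c - a := by linarith
  refine ⟨(c - b) / (c - a), (b - a) / (c - a), div_pos (by linarith) h,
    div_pos (by linarith) h, by field_simp; ring, ?_⟩
  ext <;> simp <;> field_simp <;> ring

/-- If arbitrarily high points of `C` lie above the interior point `p`, an extreme set `e` inside a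
line has at most one point on the vertical line through `p`, provided one such point is below `p`:
a second point would force `p ∈ e`. -/
theorem eq_of_fst_eq {C e : Set (ℝ × ℝ)} (hface : IsExtreme ℝ C e)
    (hdim : ∃ z u : ℝ × ℝ, u ≠ 0 ∧ e ⊆ {q | ∃ t : ℝ, q = z + t • u})
    {p : ℝ × ℝ} (hp : p ∈ interior C)
    (hup : ∀ M : ℝ, ∃ y, M < y ∧ (p.1, y) ∈ C)
    {t : ℝ} (ht : 0 < t) (hb : (p.1, p.2 - t) ∈ e) {x : ℝ × ℝ} (hx : x ∈ e) (hx1 : x.1 = p.1) :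
    x.2 = p.2 - t := by
  obtain ⟨x₁, y⟩ := x
  simp only at hx1 ⊢
  subst hx1
  have hpe : (p.1, p.2) ∉ e := fun h => notMem_interior hface hdim h hp
  have hpC : (p.1, p.2) ∈ C := interior_subset hp
  by_contra hne
  rcases lt_trichotomy y p.2 with h | h | h
  · rcases lt_or_gt_of_ne hne with h' | h'
    · exact hpe (hface.right_mem_of_mem_openSegment (hface.subset hx) hpC hb
        (mem_openSegment_vertical h' (by linarith)))
    · exact hpe (hface.right_mem_of_mem_openSegment (hface.subset hb) hpC hx
        (mem_openSegment_vertical h' h))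
  · exact hpe (h ▸ hx)
  · obtain ⟨Y, hY, hYC⟩ := hup y
    exact hpe (hface.left_mem_of_mem_openSegment hpC hYC hx (mem_openSegment_vertical h hY))

/-! ### The ray in direction `Minsl(p)` -/

/-- On the line of slope `m` through `b`, the point `b` lies strictly between points of smaller and
of larger abscissa. -/
theorem mem_openSegment_of_line {b s c : ℝ × ℝ} {m : ℝ} (hs : s.2 = b.2 + m * (s.1 - b.1))
    (hc : c.2 = b.2 + m * (c.1 - b.1)) (hsb : s.1 < b.1) (hbc : b.1 < c.1) :
    b ∈ openSegment ℝ s c := by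
  have h : c.1 - s.1 ≠ 0 := by linarith
  have h' : 0 < c.1 - s.1 := by linarith
  refine ⟨(c.1 - b.1) / (c.1 - s.1), (b.1 - s.1) / (c.1 - s.1), div_pos (by linarith) h',
    div_pos (by linarith) h', by field_simp; ring, ?_⟩
  ext
  · simp; field_simp; ring
  · simp [hs, hc]; field_simp; ring

/-- The ray from `p` in the direction `ms` of minimal slope meets `e`. Here `S` is the set of
lattice points in `H_n`, `e` lies on the nonvertical line of slope `m` through the point below `p`, and
`hdown` says that `ms` does not point vertically upwards. -/
theorem exists_ray_inter_edge {S e : Set (ℝ × ℝ)}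
    (hface : IsExtreme ℝ (convexHull ℝ S) e) {p ms : ℝ × ℝ} {t m : ℝ} (ht : 0 < t)
    (hb : (p.1, p.2 - t) ∈ e)
    (hline : ∀ x ∈ e, x.2 = p.2 - t + m * (x.1 - p.1))
    (hms1 : 0 ≤ ms.1) (hdown : ms.1 = 0 → ms.2 < 0)
    (hmin : ∀ s ∈ S, s ≠ p → p.1 ≤ s.1 → slopeLE ms (s - p)) :
    ∃ τ : ℝ, 0 < τ ∧ p + τ • ms ∈ e := by
  rcases hms1.eq_or_lt with h0 | h0
  · have h2 := hdown h0.symm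
    refine ⟨t / (-ms.2), div_pos ht (by linarith), ?_⟩
    convert hb using 1
    ext
    · simp [← h0]
    · have : ms.2 ≠ 0 := h2.ne
      simp; field_simp; ring
  have hbS : (p.1, p.2 - t) ∉ S := by
    intro h
    have := hmin _ h (by intro h'; have := congrArg Prod.snd h'; simp at this; linarith) le_rfl
    simp only [slopeLE, Prod.fst_sub, Prod.snd_sub, sub_self] at this
    nlinarith
  have hhull := mem_convexHull_inter_of_isExtreme hface hb
  have hne : ∀ s ∈ S ∩ e, s.1 ≠ p.1 := by
    intro s hs h
    apply hbS
    have h2 := hline s hs.2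
    rw [h, sub_self, mul_zero, add_zero] at h2
    rw [← h, ← h2]
    exact hs.1
  have hright : ∃ s ∈ S ∩ e, p.1 < s.1 := by
    by_contra! hcon
    have hsub : S ∩ e ⊆ {x : ℝ × ℝ | x.1 < p.1} := fun s hs => lt_of_le_of_ne (hcon s hs) (hne s hs)
    have := convexHull_min hsub (convex_halfSpace_lt (LinearMap.fst ℝ ℝ ℝ).isLinear p.1) hhull
    exact lt_irrefl p.1 this
  have hleft : ∃ s ∈ S ∩ e, s.1 < p.1 := by
    by_contra! hcon
    have hsub : S ∩ e ⊆ {x : ℝ × ℝ | p.1 < x.1} :=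
      fun s hs => lt_of_le_of_ne (hcon s hs) (hne s hs).symm
    have := convexHull_min hsub (convex_halfSpace_gt (LinearMap.fst ℝ ℝ ℝ).isLinear p.1) hhull
    exact lt_irrefl p.1 this
  obtain ⟨s, ⟨hsS, hse⟩, hs⟩ := hright
  obtain ⟨s', ⟨hsS', hse'⟩, hs'⟩ := hleft
  have hslope := hmin s hsS (by rintro rfl; exact lt_irrefl _ hs) hs.le
  simp only [slopeLE, Prod.fst_sub, Prod.snd_sub] at hslope
  have hls := hline s hse
  have hd : 0 < s.1 - p.1 := by linarith
  -- `E > 0` says that `ms` is less steep than the line of `e`; the ray meets this line at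
  -- parameter `t / E`.
  set E := m * ms.1 - ms.2 with hE
  have hEt : ms.1 * t ≤ E * (s.1 - p.1) := by
    rw [hls] at hslope
    nlinarith
  have hEpos : 0 < E := by
    by_contra! hcon
    nlinarith [mul_pos h0 ht]
  refine ⟨t / E, div_pos ht hEpos, ?_⟩
  have hc1 : (p + (t / E) • ms).1 = p.1 + t / E * ms.1 := by simp
  have hc2 : (p + (t / E) • ms).2 = p.2 - t + m * ((p + (t / E) • ms).1 - p.1) := by
    have : ms.2 = m * ms.1 - E := by rw [hE]; ring
    simp [this]; field_simp; ring
  have hpos : 0 < t / E * ms.1 := mul_pos (div_pos ht hEpos) h0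
  have hcC : p + (t / E) • ms ∈ convexHull ℝ S := by
    -- the ray meets the line between the point below `p` and `s`
    have hα1 : t / E * ms.1 / (s.1 - p.1) ≤ 1 := by
      rw [div_le_one hd, div_mul_eq_mul_div, div_le_iff₀ hEpos]; linarith
    have := convex_convexHull ℝ S (hface.subset hb) (hface.subset hse)
      (sub_nonneg.2 hα1) (div_nonneg hpos.le hd.le) (by ring)
    convert this using 1
    have hd' : s.1 - p.1 ≠ 0 := hd.ne'
    ext
    · rw [hc1]; simp; field_simp; ring
    · rw [hc2, hc1]; simp [hls]; field_simp; ring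
  exact hface.right_mem_of_mem_openSegment (subset_convexHull ℝ S hsS') hcC hb
    (mem_openSegment_of_line (m := m) (hline s' hse') hc2 hs' (by rw [hc1]; simpa using hpos))

/-- Let `p ∈ H_n` lie in the interior of `C = conv(H_n ∩ (p+Λ))`, let `e` be the edge
of `C` (a one-dimensional face) vertically below `p`, and let `v` be the right
endpoint of `e` (possibly `∞`, in which case the second conclusion is vacuous).  If
`q = Nextpt(p) ≠ ∞`, then the distance from `q` to the line spanned by `e` is less
than half the distance from `p` to that line, and `qₓ ≤ vₓ`. -/
theorem statement19 (n : ℝ) (hn : 0 < n) (v w : ℝ × ℝ)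
    (hvrat : ratPoint v) (hwrat : ratPoint w)
    (hvw : v.1 * w.2 - v.2 * w.1 ≠ 0)
    (p : ℝ × ℝ) (hp : p ∈ Hset n)
    (hpint : p ∈ interior (convexHull ℝ (Hset n ∩ translateSet p (latticeOf v w))))
    (e : Set (ℝ × ℝ))
    (hface : IsExtreme ℝ (convexHull ℝ (Hset n ∩ translateSet p (latticeOf v w))) e)
    (hdim : ∃ z u : ℝ × ℝ, u ≠ 0 ∧ e ⊆ {q | ∃ t : ℝ, q = z + t • u})
    (htwo : ∃ x₁ ∈ e, ∃ x₂ ∈ e, x₁ ≠ x₂)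
    (hbelow : ∃ t : ℝ, 0 < t ∧ (p.1, p.2 - t) ∈ e)
    (ms : ℝ × ℝ) (hms : IsMinsl n (latticeOf v w) p ms)
    (kmax : ℤ)
    (hkmax : IsGreatest {j : ℤ | p + (j : ℝ) • ms ∈ Hset n} kmax)
    (q : ℝ × ℝ) (hq : q = p + (kmax : ℝ) • ms) :
    Metric.infDist q (affineSpan ℝ e : Set (ℝ × ℝ)) <
      (1 / 2) * Metric.infDist p (affineSpan ℝ e : Set (ℝ × ℝ)) ∧
    ∀ vx : ℝ, IsGreatest {x : ℝ | ∃ y : ℝ, (x, y) ∈ e} vx → q.1 ≤ vx := by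
  obtain ⟨hmsΛ, hms0, hms1, hmsH, -, hmin⟩ := hms
  obtain ⟨t, ht, hb⟩ := hbelow
  obtain ⟨hkH, hkub⟩ := hkmax
  simp only [Set.mem_ofPred_eq] at hkH
  have hHconv := Hset_convex n hn
  set S := Hset n ∩ translateSet p (latticeOf v w) with hS
  have hCH : convexHull ℝ S ⊆ Hset n := convexHull_min Set.inter_subset_left hHconv
  obtain ⟨hp1, hp2, hp3⟩ := hp
  have hup : ∀ M : ℝ, ∃ y, M < y ∧ (p.1, y) ∈ convexHull ℝ S := by
    intro M
    obtain ⟨N, hN, hlat⟩ := exists_vertical hvrat hwrat hvw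
    obtain ⟨j, hj⟩ := exists_nat_gt ((M - p.2) / N)
    rw [div_lt_iff₀ hN] at hj
    have hjN : 0 ≤ (j : ℝ) * N := by positivity
    refine ⟨p.2 + j * N, by linarith, subset_convexHull ℝ S ⟨⟨hp1, ?_, ?_⟩, _, hlat j, ?_⟩⟩
    · simp only; linarith
    · simp only; nlinarith
    · ext <;> simp
  have huniq : ∀ x ∈ e, x.1 = p.1 → x.2 = p.2 - t :=
    fun x hx hx1 => eq_of_fst_eq hface hdim hpint hup ht hb hx hx1
  obtain ⟨m, hline⟩ : ∃ m : ℝ, ∀ x ∈ e, x.2 = p.2 - t + m * (x.1 - p.1) := by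
    obtain ⟨z, u, -, he⟩ := hdim
    obtain ⟨t₀, h₀⟩ := he hb
    simp only [Prod.ext_iff, Prod.fst_add, Prod.snd_add, Prod.smul_fst, Prod.smul_snd,
      smul_eq_mul] at h₀
    have hu1 : u.1 ≠ 0 := by
      intro hu
      have hvert : ∀ x ∈ e, x = (p.1, p.2 - t) := by
        intro x hx
        have hx1 : x.1 = p.1 := by
          obtain ⟨t₁, rfl⟩ := he hx
          simp [hu, h₀.1]
        exact Prod.ext hx1 (huniq x hx hx1)
      obtain ⟨x₁, hx₁, x₂, hx₂, hne⟩ := htwo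
      exact hne ((hvert x₁ hx₁).trans (hvert x₂ hx₂).symm)
    refine ⟨u.2 / u.1, fun x hx => ?_⟩
    obtain ⟨t₁, rfl⟩ := he hx
    simp only [Prod.fst_add, Prod.snd_add, Prod.smul_fst, Prod.smul_snd, smul_eq_mul]
    rw [h₀.1, h₀.2]
    field_simp
    ring
  have hpA : p ∉ (affineSpan ℝ e : Set (ℝ × ℝ)) := by
    intro h
    have hspan : p.2 = p.2 - t + m * (p.1 - p.1) := by
      refine affineSpan_induction (p := fun x : ℝ × ℝ => x.2 = p.2 - t + m * (x.1 - p.1))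
        h hline ?_
      intro c x y z hx hy hz
      simp only [vsub_eq_sub, vadd_eq_add, Prod.fst_add, Prod.snd_add, Prod.smul_fst,
        Prod.smul_snd, Prod.fst_sub, Prod.snd_sub, smul_eq_mul]
      rw [hx, hy, hz]; ring
    rw [sub_self, mul_zero] at hspan
    linarith
  have hdown : ms.1 = 0 → ms.2 < 0 := by
    intro h0
    by_contra! h2
    -- moving upwards never leaves `H_n`, so `kmax` could not be maximal
    have hnext : max kmax 0 + 1 ≤ kmax := by
      apply hkub
      have hj : (0 : ℝ) ≤ ((max kmax 0 + 1 : ℤ) : ℝ) := by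
        exact_mod_cast (by positivity : (0 : ℤ) ≤ max kmax 0 + 1)
      have hy := mul_nonneg hj h2
      refine ⟨?_, ?_, ?_⟩
      · simpa only [Prod.fst_add, Prod.smul_fst, h0, smul_zero, add_zero]
      · simp only [Prod.snd_add, Prod.smul_snd, smul_eq_mul]; linarith
      · simp only [Prod.fst_add, Prod.smul_fst, h0, Prod.snd_add,
          Prod.smul_snd, smul_eq_mul]
        nlinarith
    have := le_max_left kmax 0
    omega
  have hminS : ∀ s ∈ S, s ≠ p → p.1 ≤ s.1 → slopeLE ms (s - p) := by
    rintro s ⟨hsH, d, hd, rfl⟩ hne hle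
    simp only [add_sub_cancel_left]
    refine hmin d hd (by rintro rfl; simp at hne) (by simpa using hle) hsH
  obtain ⟨τ, hτ, hce⟩ := exists_ray_inter_edge hface ht hb hline hms1 hdown hminS
  have hk1 : 1 ≤ kmax := hkub (by simpa using hmsH)
  have hk1' : (1 : ℝ) ≤ kmax := by exact_mod_cast hk1
  have hτk : τ < kmax + 1 := by
    by_contra! hcon
    have hmem : p + ((kmax + 1 : ℤ) : ℝ) • ms ∈ Hset n := by
      have hr : (kmax + 1 : ℝ) / τ ≤ 1 := by rwa [div_le_one hτ]
      have := hHconv ⟨hp1, hp2, hp3⟩ (hCH (hface.subset hce)) (sub_nonneg.2 hr)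
        (by positivity : (0 : ℝ) ≤ (kmax + 1) / τ) (by ring)
      convert this using 1
      push_cast
      ext <;> simp <;> field_simp <;> ring
    have := hkub hmem
    omega
  have hkτ : (kmax : ℝ) ≤ τ := by
    by_contra! hcon
    have hqC : q ∈ convexHull ℝ S := by
      apply subset_convexHull ℝ S
      refine ⟨hq ▸ hkH, (kmax : ℝ) • ms, ?_, hq.symm⟩
      obtain ⟨a, b, rfl⟩ := hmsΛ
      exact ⟨kmax * a, kmax * b, by push_cast; rw [smul_add, smul_smul, smul_smul]⟩
    refine notMem_interior hface hdim hce
      ((convex_convexHull ℝ S).openSegment_interior_self_subset_interior hpint hqC ?_)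
    have hkpos : (0 : ℝ) < kmax := by linarith
    refine ⟨1 - τ / kmax, τ / kmax, ?_, by positivity, by ring, ?_⟩
    · rw [sub_pos, div_lt_one hkpos]; exact hcon
    · rw [hq]
      ext <;> simp <;> field_simp <;> ring
  refine ⟨?_, ?_⟩
  · have hcA : p + τ • ms ∈ affineSpan ℝ e := subset_affineSpan ℝ e hce
    have hposd : 0 < Metric.infDist p (affineSpan ℝ e : Set (ℝ × ℝ)) :=
      ((AffineSubspace.closed_of_finiteDimensional _).notMem_iff_infDist_pos ⟨_, hcA⟩).1 hpA
    have hr0 : 0 ≤ 1 - kmax / τ := by rw [sub_nonneg, div_le_one hτ]; exact hkτ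
    have hr1 : 1 - kmax / τ < 1 / 2 := by
      have : 1 / 2 < kmax / τ := by rw [lt_div_iff₀ hτ]; linarith
      linarith
    have hqc : q = p + τ • ms + (1 - kmax / τ) • (p - (p + τ • ms)) := by
      rw [hq]
      ext <;> simp <;> field_simp <;> ring
    rw [hqc]
    exact (infDist_homothety_le _ hcA hr0).trans_lt (mul_lt_mul_of_pos_right hr1 hposd)
  · intro vx hvx
    have h1 : p.1 + τ * ms.1 ≤ vx := hvx.2 ⟨p.2 + τ * ms.2, hce⟩
    have h2 : q.1 = p.1 + kmax * ms.1 := by simp [hq]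
    rw [h2]
    nlinarith


end
end
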